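/- Let $n\geq 1$, $s\in(0,1)$, $k\in\mathbb{N}$, and let $f:\overline{B_1}\times[-1,1]\to\mathbb{R}$ be of class $C^k$, where $B_1\subset\mathbb{R}^n$ is the open unit ball. Then for every $\varepsilon>0$ there exists a function $u\in C^\infty(B_1\times(-1,1))\cap C(\mathbb{R}^{n+1})$, compactly supported in $\mathbb{R}^{n+1}$, such that $\partial_t u(x,t)+(-\Delta)^s u(\cdot,t)(x)=0$ for every $(x,t)\in B_1\times(-1,1)$ (the fractional Laplacian acting in the space variable $x$), and $\|u-f\|_{C^k(B_1\times(-1,1))}\leq\varepsilon$, where $\|g\|_{C^k(\Omega)}=\sup_{|\beta|\le k}\sup_\Omega|\partial^\beta g|$. -/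

import Mathlib

open MeasureTheory Filter Metric Set

/-- The normalizing constant `C(n,s)` of the fractional Laplacian. -/
noncomputable def fracC (n : ℕ) (s : ℝ) : ℝ :=
  4 ^ s * s * Real.Gamma ((n : ℝ) / 2 + s) / (Real.pi ^ ((n : ℝ) / 2) * Real.Gamma (1 - s))

/-- `HasFracLap n s u x L` : the principal value limit defining `(-Δ)^s u (x)`
exists and equals `L`. -/
def HasFracLap (n : ℕ) (s : ℝ) (u : EuclideanSpace ℝ (Fin n) → ℝ)
    (x : EuclideanSpace ℝ (Fin n)) (L : ℝ) : Prop :=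
  Tendsto (fun ρ : ℝ =>
      fracC n s * ∫ y in {y : EuclideanSpace ℝ (Fin n) | ρ ≤ ‖y‖},
        (u x - u (x + y)) / ‖y‖ ^ ((n : ℝ) + 2 * s))
    (nhdsWithin 0 (Set.Ioi 0)) (nhds L)

open scoped Topology ContDiff FourierTransform

/-!
After dilating and mollifying, `f` may be taken to be a test function. Solutions near a single plane
wave then suffice: by Fourier inversion a test function is a superposition of space-time plane waves
`e^{2πi(⟪κ, x⟫ + θt)}`, in which the null set `θ = 0` may be ignored, and solutions form a linear
space. Such a wave becomes an exact solution once `e^{2πi⟪κ, x⟫}` is replaced by a nearby compactly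
supported `φ` with `Lφ = -iτφ` in the unit ball, where `L` is the singular integral operator with
kernel `‖y‖ ^ (-a)`, `a = n + 2s`, and `τ ≠ 0` is the multiple of `θ` given by the equation.

To find `φ`, note that a density `V` supported far from the origin contributes minus its potential
`V ∗ ‖·‖ ^ (-a)` to `L` near the origin. These potentials approximate plane waves: applying the
Laplacian to `V` turns `‖·‖ ^ (-a)` into a multiple of `‖·‖ ^ (-a - 2)`, so limits of them include
`‖x - y‖ ^ (-a) e^{z‖x - y‖⁻²}` for every `z`, and up to a constant factor this tends to
`e^{2iσ⟪x, e⟫}` for `y = e/ε`, `z = iσ/ε³`, `‖e‖ = 1` as `ε → 0`. Hence a far density cancels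
`(L + iτ)e^{2πi⟪κ, x⟫}` up to an error which is small in every `C^k`. As `L` has a nonnegative
symbol and `τ ≠ 0`, the resolvent `(L + iτ)⁻¹` is bounded with loss of derivatives and removes the
error exactly. Cutting off at a large radius to make `φ` compactly supported is one more far
perturbation, absorbed by a contraction argument.
-/

/-! ### The `C^k` norm -/

section CkNorm

variable {X Y F G : Type*} [NormedAddCommGroup X] [NormedSpace ℝ X] [NormedAddCommGroup Y]
  [NormedSpace ℝ Y] [NormedAddCommGroup F] [NormedSpace ℝ F] [NormedAddCommGroup G]
  [NormedSpace ℝ G] {k : ℕ} {Ω : Set X} {f g : X → F} {δ δ' : ℝ}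

/-- `CkNormLE k Ω g δ` is the inequality `‖g‖_{C^k(Ω)} ≤ δ`. The derivatives are those of the
function on the whole space, so the points of `Ω` need not be interior. -/
def CkNormLE (k : ℕ) (Ω : Set X) (g : X → F) (δ : ℝ) : Prop :=
  ∀ i ≤ k, ∀ x ∈ Ω, ‖iteratedFDeriv ℝ i g x‖ ≤ δ

theorem iteratedFDeriv_comp_continuousLinearMap {f : Y → F} {i : ℕ} (L : X →L[ℝ] Y) {x : X}
    (hf : ContDiffAt ℝ i f (L x)) :
    iteratedFDeriv ℝ i (fun x => f (L x)) x =
      (iteratedFDeriv ℝ i f (L x)).compContinuousLinearMap fun _ => L := by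
  obtain ⟨u, hu, hxu, hfu⟩ := hf.contDiffOn' (m := i) le_rfl (by simp)
  rw [insert_eq_of_mem (mem_univ _), univ_inter] at hfu
  have hopen : IsOpen (L ⁻¹' u) := hu.preimage L.continuous
  rw [← iteratedFDerivWithin_of_isOpen i hu hxu, ← iteratedFDerivWithin_of_isOpen i hopen hxu]
  exact L.iteratedFDerivWithin_comp_right hfu hu.uniqueDiffOn hopen.uniqueDiffOn hxu le_rfl

theorem exists_ckNormLE_of_isCompact {K : Set X} (hK : IsCompact K) (hg : ContDiff ℝ k g) :
    ∃ C : ℝ, 0 ≤ C ∧ CkNormLE k K g C := by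
  have hcont : Continuous fun x => ∑ i ∈ Finset.range (k + 1), ‖iteratedFDeriv ℝ i g x‖ :=
    continuous_finsetSum _ fun i hi => (hg.continuous_iteratedFDeriv
      (by exact_mod_cast Finset.mem_range_succ_iff.1 hi)).norm
  obtain ⟨C, hC⟩ := hK.exists_bound_of_continuousOn hcont.continuousOn
  refine ⟨max C 0, le_max_right _ _, fun i hi x hx => ?_⟩
  calc ‖iteratedFDeriv ℝ i g x‖ ≤ ∑ j ∈ Finset.range (k + 1), ‖iteratedFDeriv ℝ j g x‖ :=
        Finset.single_le_sum (f := fun j => ‖iteratedFDeriv ℝ j g x‖) (fun _ _ => norm_nonneg _)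
          (Finset.mem_range_succ_iff.2 hi)
    _ ≤ max C 0 := (le_abs_self _).trans ((hC x hx).trans (le_max_left _ _))

theorem ckNormLE_const (c : F) : CkNormLE k Ω (fun _ => c) ‖c‖ := fun i _ x _ => by
  rcases eq_or_ne i 0 with rfl | hi
  · simp
  · simp [iteratedFDeriv_const_of_ne hi]

namespace CkNormLE

theorem mono {Ω' : Set X} (h : CkNormLE k Ω g δ) (hΩ : Ω' ⊆ Ω) (hδ : δ ≤ δ') :
    CkNormLE k Ω' g δ' :=
  fun i hi x hx => (h i hi x (hΩ hx)).trans hδ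

theorem congr (h : CkNormLE k Ω f δ) (hfg : ∀ x ∈ Ω, f =ᶠ[𝓝 x] g) : CkNormLE k Ω g δ :=
  fun i hi x hx => by
    rw [← ((hfg x hx).iteratedFDeriv ℝ i).eq_of_nhds]
    exact h i hi x hx

theorem norm_le (hg : CkNormLE k Ω g δ) {x : X} (hx : x ∈ Ω) : ‖g x‖ ≤ δ :=
  norm_iteratedFDeriv_zero (𝕜 := ℝ) (f := g) ▸ hg 0 k.zero_le x hx

theorem add (hf : CkNormLE k Ω f δ) (hg : CkNormLE k Ω g δ')
    (hfd : ∀ x ∈ Ω, ContDiffAt ℝ k f x) (hgd : ∀ x ∈ Ω, ContDiffAt ℝ k g x) :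
    CkNormLE k Ω (fun x => f x + g x) (δ + δ') := fun i hi x hx => by
  have hik : (i : WithTop ℕ∞) ≤ k := by exact_mod_cast hi
  rw [fun_iteratedFDeriv_add_apply ((hfd x hx).of_le hik) ((hgd x hx).of_le hik)]
  exact norm_add_le_of_le (hf i hi x hx) (hg i hi x hx)

theorem sub (hf : CkNormLE k Ω f δ) (hg : CkNormLE k Ω g δ')
    (hfd : ∀ x ∈ Ω, ContDiffAt ℝ k f x) (hgd : ∀ x ∈ Ω, ContDiffAt ℝ k g x) :
    CkNormLE k Ω (fun x => f x - g x) (δ + δ') := fun i hi x hx => by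
  have hik : (i : WithTop ℕ∞) ≤ k := mod_cast hi
  rw [fun_iteratedFDeriv_sub_apply ((hfd x hx).of_le hik) ((hgd x hx).of_le hik)]
  exact norm_sub_le_of_le (hf i hi x hx) (hg i hi x hx)

theorem sub_triangle {u v w : X → F} (huv : CkNormLE k Ω (fun x => u x - v x) δ)
    (hvw : CkNormLE k Ω (fun x => v x - w x) δ') (hu : ∀ x ∈ Ω, ContDiffAt ℝ k u x)
    (hv : ∀ x ∈ Ω, ContDiffAt ℝ k v x) (hw : ∀ x ∈ Ω, ContDiffAt ℝ k w x) :
    CkNormLE k Ω (fun x => u x - w x) (δ + δ') := by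
  simpa only [sub_add_sub_cancel] using huv.add hvw (fun x hx => (hu x hx).sub (hv x hx))
    fun x hx => (hv x hx).sub (hw x hx)

theorem const_smul {𝕜 : Type*} [NormedRing 𝕜] [Module 𝕜 F] [IsBoundedSMul 𝕜 F]
    [SMulCommClass ℝ 𝕜 F] (c : 𝕜) (hg : CkNormLE k Ω g δ) (hgd : ∀ x ∈ Ω, ContDiffAt ℝ k g x) :
    CkNormLE k Ω (fun x => c • g x) (‖c‖ * δ) := fun i hi x hx => by
  rw [iteratedFDeriv_const_smul_apply' ((hgd x hx).of_le (by exact_mod_cast hi))]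
  exact (norm_smul_le _ _).trans (mul_le_mul_of_nonneg_left (hg i hi x hx) (norm_nonneg c))

theorem mul {A : Type*} [NormedRing A] [NormedAlgebra ℝ A] {f g : X → A} (hδ : 0 ≤ δ)
    (hf : CkNormLE k Ω f δ) (hg : CkNormLE k Ω g δ') (hfd : ContDiff ℝ k f)
    (hgd : ContDiff ℝ k g) : CkNormLE k Ω (fun x => f x * g x) (2 ^ k * δ * δ') :=
  fun i hi x hx => by
  have hδ' : 0 ≤ δ' := (norm_nonneg _).trans (hg 0 k.zero_le x hx)
  calc ‖iteratedFDeriv ℝ i (fun x => f x * g x) x‖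
      ≤ ∑ j ∈ Finset.range (i + 1),
          (i.choose j : ℝ) * ‖iteratedFDeriv ℝ j f x‖ * ‖iteratedFDeriv ℝ (i - j) g x‖ :=
        norm_iteratedFDeriv_mul_le hfd hgd x (by exact_mod_cast hi)
    _ ≤ ∑ j ∈ Finset.range (i + 1), (i.choose j : ℝ) * δ * δ' := by
        refine Finset.sum_le_sum fun j hj => ?_
        have hji : j ≤ i := Nat.lt_succ_iff.1 (Finset.mem_range.1 hj)
        gcongr
        · exact hf j (hji.trans hi) x hx
        · exact hg (i - j) ((Nat.sub_le i j).trans hi) x hx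
    _ = 2 ^ i * δ * δ' := by
        rw [← Finset.sum_mul, ← Finset.sum_mul]
        congr 2
        exact_mod_cast Nat.sum_range_choose i
    _ ≤ 2 ^ k * δ * δ' := by gcongr; norm_num

theorem comp_continuousLinearMap {f : Y → F} (L : X →L[ℝ] Y) (hf : CkNormLE k (L '' Ω) f δ)
    (hfd : ∀ x ∈ Ω, ContDiffAt ℝ k f (L x)) :
    CkNormLE k Ω (fun x => f (L x)) (δ * (1 + ‖L‖) ^ k) := fun i hi x hx => by
  have hfx := hf i hi (L x) (mem_image_of_mem L hx)
  rw [iteratedFDeriv_comp_continuousLinearMap L ((hfd x hx).of_le (by exact_mod_cast hi))]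
  refine (ContinuousMultilinearMap.norm_compContinuousLinearMap_le _ _).trans ?_
  rw [Finset.prod_const, Finset.card_univ, Fintype.card_fin]
  have hL : ‖L‖ ^ i ≤ (1 + ‖L‖) ^ k :=
    (pow_le_pow_left₀ (norm_nonneg L) (by linarith) i).trans
      (pow_le_pow_right₀ (by linarith [norm_nonneg L]) hi)
  exact mul_le_mul hfx hL (by positivity) ((norm_nonneg _).trans hfx)

theorem continuousLinearMap_comp (L : F →L[ℝ] G) (hg : CkNormLE k Ω g δ)
    (hgd : ∀ x ∈ Ω, ContDiffAt ℝ k g x) : CkNormLE k Ω (fun x => L (g x)) (‖L‖ * δ) :=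
  fun i hi x hx => (L.norm_iteratedFDeriv_comp_left (hgd x hx) (by exact_mod_cast hi)).trans
    (mul_le_mul_of_nonneg_left (hg i hi x hx) (norm_nonneg L))

theorem univ_of_tsupport_subset (hg : CkNormLE k Ω g δ) (hΩ : tsupport g ⊆ Ω) (hδ : 0 ≤ δ) :
    CkNormLE k univ g δ := fun i hi x _ => by
  by_cases hx : x ∈ tsupport g
  · exact hg i hi x (hΩ hx)
  · rw [Function.notMem_support.1 fun h => hx (support_iteratedFDeriv_subset i h), norm_zero]
    exact hδ

theorem sub_comm (h : CkNormLE k Ω (fun x => f x - g x) δ) :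
    CkNormLE k Ω (fun x => g x - f x) δ := fun i hi x hx => by
  have hneg : (fun x => g x - f x) = -fun x => f x - g x := by ext; simp
  rw [hneg, iteratedFDeriv_neg_apply, norm_neg]
  exact h i hi x hx

theorem norm_iteratedFDeriv_sub_le (h : CkNormLE (k + 1) univ g δ) (hg : ContDiff ℝ (k + 1) g)
    {i : ℕ} (hi : i ≤ k) (x y : X) :
    ‖iteratedFDeriv ℝ i g x - iteratedFDeriv ℝ i g y‖ ≤ δ * ‖x - y‖ := by
  refine convex_univ.norm_image_sub_le_of_norm_fderiv_le (𝕜 := ℝ) (fun z _ => ?_) (fun z _ => ?_)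
    (mem_univ y) (mem_univ x)
  · exact (hg.differentiable_iteratedFDeriv
      (by exact_mod_cast Nat.lt_succ_of_le hi)).differentiableAt
  · rw [norm_fderiv_iteratedFDeriv]
    exact h (i + 1) (Nat.succ_le_succ hi) z (mem_univ z)

theorem comp_sub_const (h : CkNormLE k univ g δ) (y : X) :
    CkNormLE k univ (fun x => g (x - y)) δ := fun i hi x _ => by
  rw [iteratedFDeriv_comp_sub]
  exact h i hi (x - y) (mem_univ _)

theorem pow {A : Type*} [NormedRing A] [NormOneClass A] [NormedAlgebra ℝ A] {f : X → A}
    (hδ : 0 ≤ δ) (hf : CkNormLE k Ω f δ) (hfd : ContDiff ℝ k f) (N : ℕ) :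
    CkNormLE k Ω (fun x => f x ^ N) ((2 ^ k * δ) ^ N) := by
  induction N with
  | zero => simpa only [pow_zero, norm_one] using ckNormLE_const (X := X) (1 : A)
  | succ N ih =>
    simp_rw [pow_succ' (f _), pow_succ' (2 ^ k * δ)]
    exact mul hδ hf ih hfd (hfd.pow N)

theorem tsum_sub_sum_range [CompleteSpace F] {f : ℕ → X → F} {u : ℕ → ℝ}
    (hfd : ∀ N, ContDiff ℝ k (f N)) (hu : Summable u) (hf : ∀ N, CkNormLE k univ (f N) (u N))
    (m : ℕ) :
    CkNormLE k univ (fun x => (∑' N, f N x) - ∑ N ∈ Finset.range m, f N x) (∑' N, u (N + m)) := by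
  have hum : Summable fun N => u (N + m) := (summable_nat_add_iff m).2 hu
  have htail : (fun x => (∑' N, f N x) - ∑ N ∈ Finset.range m, f N x) =
      fun x => ∑' N, f (N + m) x := by
    ext x
    have hx : Summable fun N => f N x := Summable.of_norm_bounded hu fun N => by
      simpa using hf N 0 k.zero_le x (mem_univ x)
    rw [← hx.sum_add_tsum_nat_add m, add_sub_cancel_left]
  rw [htail]
  intro i hi x hx
  rw [iteratedFDeriv_tsum_apply (N := k) (v := fun _ N => u (N + m)) (fun N => hfd (N + m))
    (fun _ _ => hum) (fun j N x hj => hf (N + m) j (by exact_mod_cast hj) x (mem_univ x))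
    (by exact_mod_cast hi)]
  exact tsum_of_norm_bounded hum.hasSum fun N => hf (N + m) i hi x hx

end CkNormLE

theorem exists_ckNormLE_univ_of_hasCompactSupport (hg : ContDiff ℝ k g) (hc : HasCompactSupport g) :
    ∃ C : ℝ, 0 ≤ C ∧ CkNormLE k univ g C := by
  obtain ⟨C, hC₀, hC⟩ := exists_ckNormLE_of_isCompact hc.isCompact hg
  exact ⟨C, hC₀, hC.univ_of_tsupport_subset subset_rfl hC₀⟩

end CkNorm

section PartialDerivatives

variable {A E F : Type*} [NormedAddCommGroup A] [NormedSpace ℝ A] [NormedAddCommGroup E]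
  [NormedSpace ℝ E] [NormedAddCommGroup F] [NormedSpace ℝ F] {G : A × E → F} {i : ℕ} {a : A}
  {x : E}

theorem contDiffAt_partial_right (hG : ContDiffAt ℝ i G (a, x)) :
    ContDiffAt ℝ i (fun x => G (a, x)) x :=
  hG.comp x (by fun_prop)

theorem iteratedFDeriv_partial_right (hG : ContDiffAt ℝ i G (a, x)) :
    iteratedFDeriv ℝ i (fun x => G (a, x)) x =
      (iteratedFDeriv ℝ i G (a, x)).compContinuousLinearMap
        fun _ => ContinuousLinearMap.inr ℝ A E := by
  have hG' : ContDiffAt ℝ i (fun p => G ((a, (0 : E)) + p)) (ContinuousLinearMap.inr ℝ A E x) :=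
    ContDiffAt.comp (g := G) _ (by simpa using hG) (by fun_prop)
  simpa [iteratedFDeriv_comp_add_left] using iteratedFDeriv_comp_continuousLinearMap _ hG'

theorem continuousAt_iteratedFDeriv_partial_right (hG : ContDiffAt ℝ i G (a, x)) :
    ContinuousAt (fun p : A × E => iteratedFDeriv ℝ i (fun x => G (p.1, x)) p.2) (a, x) := by
  refine ContinuousAt.congr (f := fun p => ContinuousMultilinearMap.compContinuousLinearMapL
    (fun _ : Fin i => ContinuousLinearMap.inr ℝ A E) (iteratedFDeriv ℝ i G p)) ?_ ?_
  · exact (ContinuousLinearMap.continuous _).continuousAt.comp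
      (hG.continuousAt_iteratedFDeriv le_rfl)
  · filter_upwards [hG.eventually (by simp)] with p hp
    exact (iteratedFDeriv_partial_right hp).symm

theorem eventually_norm_iteratedFDeriv_partial_sub_le (hG : ContDiffAt ℝ i G (a, x)) {δ : ℝ}
    (hδ : 0 < δ) :
    ∀ᶠ p : A × E in 𝓝 (a, x),
      ‖iteratedFDeriv ℝ i (fun x => G (p.1, x) - G (a, x)) p.2‖ ≤ δ := by
  have hfreeze : Tendsto (fun p : A × E => (a, p.2)) (𝓝 (a, x)) (𝓝 (a, x)) :=
    (by fun_prop : Continuous fun p : A × E => (a, p.2)).tendsto' _ _ rfl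
  have hcont := (continuousAt_iteratedFDeriv_partial_right hG).tendsto
  have hlim := (hcont.sub (hcont.comp hfreeze)).norm
  simp only [Function.comp_def, sub_self, norm_zero] at hlim
  have hsmooth : ∀ᶠ p in 𝓝 (a, x), ContDiffAt ℝ i G p := hG.eventually (by simp)
  filter_upwards [hlim.eventually_lt_const hδ, hsmooth, hfreeze.eventually hsmooth]
    with p hp hGp hGa
  rw [fun_iteratedFDeriv_sub_apply (contDiffAt_partial_right hGp) (contDiffAt_partial_right hGa)]
  exact hp.le

theorem eventually_ckNormLE_partial_sub {M : ℕ} {K : Set E} (hK : IsCompact K)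
    (hG : ∀ x ∈ K, ContDiffAt ℝ M G (a, x)) {δ : ℝ} (hδ : 0 < δ) :
    ∀ᶠ a' in 𝓝 a, CkNormLE M K (fun x => G (a', x) - G (a, x)) δ := by
  have huniform := fun i (hi : i ≤ M) => hK.eventually_forall_of_forall_eventually (x₀ := a)
    (P := fun a' x => ‖iteratedFDeriv ℝ i (fun x => G (a', x) - G (a, x)) x‖ ≤ δ)
    fun x hx => eventually_norm_iteratedFDeriv_partial_sub_le
      ((hG x hx).of_le (by exact_mod_cast hi)) hδ
  exact (finite_Iic M).eventually_all.2 huniform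

end PartialDerivatives

/-! ### Differentiation under the integral sign -/

section ParametricIntegral

variable {E F Y : Type*} [NormedAddCommGroup E] [NormedSpace ℝ E] [NormedAddCommGroup F]
  [NormedSpace ℝ F] [CompleteSpace F] [MeasurableSpace Y] {μ : Measure Y}

theorem hasFDerivAt_integral_iteratedFDeriv {m : ℕ} {G : E → Y → F} {x₀ : E} {B : Y → ℝ}
    (hG : ∀ y, ContDiff ℝ (m + 1) fun x => G x y)
    (hmeas : ∀ i ≤ m + 1, ∀ x,
      AEStronglyMeasurable (fun y => iteratedFDeriv ℝ i (fun x => G x y) x) μ)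
    (hint : ∀ i ≤ m + 1, Integrable (fun y => iteratedFDeriv ℝ i (fun x => G x y) x₀) μ)
    (hB : Integrable B μ)
    (hGB : ∀ y, ∀ x ∈ ball x₀ 1, ‖iteratedFDeriv ℝ (m + 1) (fun x => G x y) x‖ ≤ B y) :
    HasFDerivAt (fun x => ∫ y, iteratedFDeriv ℝ m (fun x => G x y) x ∂μ)
      (∫ y, iteratedFDeriv ℝ (m + 1) (fun x => G x y) x₀ ∂μ).curryLeft x₀ := by
  let curry := continuousMultilinearCurryLeftEquiv ℝ (fun _ : Fin (m + 1) => E) F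
  have hcomm : ∫ y, curry (iteratedFDeriv ℝ (m + 1) (fun x => G x y) x₀) ∂μ =
      curry (∫ y, iteratedFDeriv ℝ (m + 1) (fun x => G x y) x₀ ∂μ) :=
    ContinuousLinearMap.integral_comp_comm (Fₗ := E →L[ℝ] E [×m]→L[ℝ] F)
      (curry.toContinuousLinearEquiv : _ →L[ℝ] _) (hint (m + 1) le_rfl)
  have hderiv : ∀ y x, HasFDerivAt (fun x => iteratedFDeriv ℝ m (fun x => G x y) x)
      (curry (iteratedFDeriv ℝ (m + 1) (fun x => G x y) x)) x := fun y x => by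
    rw [iteratedFDeriv_succ_eq_comp_left]
    simpa [curry] using ((hG y).differentiable_iteratedFDeriv
      (by exact_mod_cast Nat.lt_succ_self m) x).hasFDerivAt
  have h := hasFDerivAt_integral_of_dominated_of_fderiv_le (ball_mem_nhds x₀ one_pos)
    (.of_forall (hmeas m m.le_succ)) (hint m m.le_succ)
    (curry.continuous.comp_aestronglyMeasurable (hmeas (m + 1) le_rfl x₀))
    (.of_forall fun y x hx => (curry.norm_map _).trans_le (hGB y x hx)) hB
    (.of_forall fun y x _ => hderiv y x)
  exact h.congr_fderiv hcomm

theorem hasFTaylorSeriesUpTo_integral {N : ℕ∞} {G : E → Y → F}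
    (hG : ∀ y, ContDiff ℝ N (fun x => G x y))
    (hmeas : ∀ i : ℕ, (i : ℕ∞) ≤ N → ∀ x,
      AEStronglyMeasurable (fun y => iteratedFDeriv ℝ i (fun x => G x y) x) μ)
    (hdom : ∀ i : ℕ, (i : ℕ∞) ≤ N → ∀ x₀, ∃ B : Y → ℝ, Integrable B μ ∧
      ∀ y, ∀ x ∈ ball x₀ 1, ‖iteratedFDeriv ℝ i (fun x => G x y) x‖ ≤ B y) :
    HasFTaylorSeriesUpTo (N : WithTop ℕ∞) (fun x => ∫ y, G x y ∂μ)
      (fun x i => ∫ y, iteratedFDeriv ℝ i (fun x => G x y) x ∂μ) := by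
  have hint : ∀ i : ℕ, (i : ℕ∞) ≤ N → ∀ x,
      Integrable (fun y => iteratedFDeriv ℝ i (fun x => G x y) x) μ := fun i hi x => by
    obtain ⟨B, hB, hGB⟩ := hdom i hi x
    exact hB.mono' (hmeas i hi x) (.of_forall fun y => hGB y x (mem_ball_self one_pos))
  refine ⟨fun x => ?_, fun m hm x => ?_, fun m hm => ?_⟩
  · change (∫ y, iteratedFDeriv ℝ 0 (fun x => G x y) x ∂μ) 0 = _
    rw [ContinuousMultilinearMap.integral_apply (hint 0 (by simp) x)]
    simp only [iteratedFDeriv_zero_apply]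
  · have hmN : ((m + 1 : ℕ) : ℕ∞) ≤ N := by
      exact_mod_cast Order.add_one_le_of_lt (by exact_mod_cast hm : (m : ℕ∞) < N)
    have hle : ∀ i ≤ m + 1, (i : ℕ∞) ≤ N := fun i hi => (Nat.cast_le.2 hi).trans hmN
    obtain ⟨B, hB, hGB⟩ := hdom (m + 1) hmN x
    exact hasFDerivAt_integral_iteratedFDeriv (fun y => (hG y).of_le (by exact_mod_cast hmN))
      (fun i hi => hmeas i (hle i hi)) (fun i hi => hint i (hle i hi) x) hB hGB
  · have hmN : (m : ℕ∞) ≤ N := by exact_mod_cast hm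
    refine continuous_iff_continuousAt.2 fun x => ?_
    obtain ⟨B, hB, hGB⟩ := hdom m hmN x
    refine continuousAt_of_dominated (.of_forall fun z => hmeas m hmN z) ?_ hB
      (.of_forall fun y => ((hG y).continuous_iteratedFDeriv (by exact_mod_cast hm)).continuousAt)
    filter_upwards [ball_mem_nhds x one_pos] with z hz
    exact .of_forall fun y => hGB y z hz

end ParametricIntegral

/-! ### Plane waves -/

section PlaneWave

variable {E : Type*} [NormedAddCommGroup E] [InnerProductSpace ℝ E]

/-- The plane wave `x ↦ e^{2πi⟪k, x⟫}` with frequency `k`, normalised as the kernel of Mathlib's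
Fourier transform. -/
noncomputable def planeWave (k x : E) : ℂ :=
  Complex.exp ((2 * Real.pi * inner ℝ k x : ℝ) * Complex.I)

theorem norm_planeWave (k x : E) : ‖planeWave k x‖ = 1 :=
  Complex.norm_exp_ofReal_mul_I _

theorem re_planeWave (k x : E) : (planeWave k x).re = Real.cos (2 * Real.pi * inner ℝ k x) :=
  Complex.exp_ofReal_mul_I_re _

theorem planeWave_add (k x y : E) : planeWave k (x + y) = planeWave k x * planeWave k y := by
  rw [planeWave, planeWave, planeWave, ← Complex.exp_add, inner_add_right]
  push_cast
  ring_nf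

theorem planeWave_neg (k x : E) : planeWave k (-x) = starRingEnd ℂ (planeWave k x) := by
  simp [planeWave, ← Complex.exp_conj, map_ofNat]

theorem norm_one_sub_planeWave_le (k x : E) : ‖1 - planeWave k x‖ ≤ 2 := by
  have := norm_sub_le 1 (planeWave k x)
  rwa [norm_one, norm_planeWave, one_add_one_eq_two] at this

theorem contDiff_planeWave_joint {N : WithTop ℕ∞} :
    ContDiff ℝ N fun p : E × E => planeWave p.1 p.2 := by
  have hphase : ContDiff ℝ N fun p : E × E => ((2 * Real.pi * inner ℝ p.1 p.2 : ℝ) : ℂ) :=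
    Complex.ofRealCLM.contDiff.comp (contDiff_const.mul (contDiff_fst.inner ℝ contDiff_snd))
  exact (hphase.mul contDiff_const).cexp

theorem contDiff_planeWave (k : E) {N : WithTop ℕ∞} : ContDiff ℝ N (planeWave k) :=
  contDiff_planeWave_joint.comp (contDiff_const.prodMk contDiff_id)

theorem continuous_planeWave_joint : Continuous fun p : E × E => planeWave p.1 p.2 :=
  (contDiff_planeWave_joint (N := 0)).continuous

theorem iteratedDeriv_cexp_mul_I (i : ℕ) (t : ℝ) :
    iteratedDeriv i (fun t : ℝ => Complex.exp (t * Complex.I)) t =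
      Complex.I ^ i * Complex.exp (t * Complex.I) := by
  induction i generalizing t with
  | zero => simp
  | succ i ih =>
    have hexp : HasDerivAt (fun t : ℝ => Complex.exp (t * Complex.I))
        (Complex.exp (t * Complex.I) * Complex.I) t := by
      simpa using ((hasDerivAt_id t).ofReal_comp.mul_const Complex.I).cexp
    rw [iteratedDeriv_succ, funext ih, (hexp.const_mul _).deriv]
    ring

theorem norm_iteratedFDeriv_planeWave_le (i : ℕ) (k x : E) :
    ‖iteratedFDeriv ℝ i (planeWave k) x‖ ≤ (2 * Real.pi * ‖k‖) ^ i := by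
  let phase : E →L[ℝ] ℝ := (2 * Real.pi) • innerSL ℝ k
  have hexp : ContDiff ℝ i fun t : ℝ => Complex.exp (t * Complex.I) :=
    (Complex.ofRealCLM.contDiff.mul contDiff_const).cexp
  have hphase : ‖phase‖ = 2 * Real.pi * ‖k‖ := by
    rw [norm_smul, innerSL_apply_norm, Real.norm_of_nonneg (by positivity)]
  have hcomp : planeWave k = fun x => Complex.exp (phase x * Complex.I) := rfl
  rw [hcomp, iteratedFDeriv_comp_continuousLinearMap (f := fun t : ℝ => Complex.exp (t * Complex.I))
    phase hexp.contDiffAt]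
  refine (ContinuousMultilinearMap.norm_compContinuousLinearMap_le _ _).trans_eq ?_
  rw [norm_iteratedFDeriv_eq_norm_iteratedDeriv, iteratedDeriv_cexp_mul_I, norm_mul,
    Complex.norm_exp_ofReal_mul_I, norm_pow, Complex.norm_I, one_pow, one_mul, one_mul, hphase,
    Finset.prod_const, Finset.card_univ, Fintype.card_fin]

theorem continuous_iteratedFDeriv_planeWave (i : ℕ) :
    Continuous fun p : E × E => iteratedFDeriv ℝ i (planeWave p.1) p.2 :=
  continuous_iff_continuousAt.2 fun p => continuousAt_iteratedFDeriv_partial_right (a := p.1)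
    (x := p.2) (G := fun p : E × E => planeWave p.1 p.2) contDiff_planeWave_joint.contDiffAt

section Superposition

variable [MeasurableSpace E] [OpensMeasurableSpace E] {ν : Measure E} {b : E → ℂ}

theorem integrable_mul_planeWave (hb : Integrable b ν) (x : E) :
    Integrable (fun k => b k * planeWave k x) ν :=
  hb.mul_bdd (continuous_planeWave_joint.comp (Continuous.prodMk_left x)).aestronglyMeasurable
    (.of_forall fun k => (norm_planeWave k x).le)

variable [SecondCountableTopology E] (hbm : AEStronglyMeasurable b ν)
  (hb : ∀ i : ℕ, Integrable (fun k => ‖k‖ ^ i * ‖b k‖) ν)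
include hbm hb

theorem hasFTaylorSeriesUpTo_integral_planeWave :
    HasFTaylorSeriesUpTo ∞ (fun x => ∫ k, b k * planeWave k x ∂ν)
      (fun x i => ∫ k, b k • iteratedFDeriv ℝ i (planeWave k) x ∂ν) := by
  have hderiv : ∀ (i : ℕ) (k x : E), iteratedFDeriv ℝ i (fun x => b k * planeWave k x) x
      = b k • iteratedFDeriv ℝ i (planeWave k) x := fun i k x =>
    iteratedFDeriv_const_smul_apply' (a := b k) (contDiff_planeWave k).contDiffAt
  simp_rw [← hderiv]
  refine hasFTaylorSeriesUpTo_integral (fun k => contDiff_const.mul (contDiff_planeWave k))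
    (fun i _ x => ?_) fun i _ x₀ =>
      ⟨fun k => (2 * Real.pi) ^ i * (‖k‖ ^ i * ‖b k‖), (hb i).const_mul _, fun k x _ => ?_⟩
  · simp_rw [hderiv]
    exact hbm.smul ((continuous_iteratedFDeriv_planeWave i).comp
      (Continuous.prodMk_left x)).aestronglyMeasurable
  · rw [hderiv, norm_smul]
    calc _ ≤ ‖b k‖ * (2 * Real.pi * ‖k‖) ^ i := by
          gcongr
          exact norm_iteratedFDeriv_planeWave_le i k x
      _ = _ := by rw [mul_pow]; ring

theorem contDiff_integral_planeWave : ContDiff ℝ ∞ fun x => ∫ k, b k * planeWave k x ∂ν :=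
  (hasFTaylorSeriesUpTo_integral_planeWave hbm hb).contDiff

theorem iteratedFDeriv_integral_planeWave (i : ℕ) (x : E) :
    iteratedFDeriv ℝ i (fun x => ∫ k, b k * planeWave k x ∂ν) x
      = ∫ k, b k • iteratedFDeriv ℝ i (planeWave k) x ∂ν :=
  ((hasFTaylorSeriesUpTo_integral_planeWave hbm hb).eq_iteratedFDeriv
    (by exact_mod_cast le_top) x).symm

theorem norm_iteratedFDeriv_integral_planeWave_le (i : ℕ) (x : E) :
    ‖iteratedFDeriv ℝ i (fun x => ∫ k, b k * planeWave k x ∂ν) x‖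
      ≤ (2 * Real.pi) ^ i * ∫ k, ‖k‖ ^ i * ‖b k‖ ∂ν := by
  rw [iteratedFDeriv_integral_planeWave hbm hb, ← integral_const_mul]
  refine norm_integral_le_of_norm_le ((hb i).const_mul _) (.of_forall fun k => ?_)
  rw [norm_smul]
  calc _ ≤ ‖b k‖ * (2 * Real.pi * ‖k‖) ^ i := by
        gcongr
        exact norm_iteratedFDeriv_planeWave_le i k x
    _ = _ := by rw [mul_pow]; ring

end Superposition

end PlaneWave

/-! ### The symbol of the principal value operator -/

theorem measurableSet_le_norm {E : Type*} [NormedAddCommGroup E] [MeasurableSpace E]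
    [OpensMeasurableSpace E] (ρ : ℝ) : MeasurableSet {y : E | ρ ≤ ‖y‖} :=
  measurableSet_le measurable_const measurable_norm

section PrincipalValue

variable {E : Type*} [NormedAddCommGroup E] [InnerProductSpace ℝ E]

/-- The kernel `‖y‖ ^ (-a)` integrated against the real part of `1 - planeWave k`; its integral over
`y` is the Fourier symbol of the operator with kernel `‖y‖ ^ (-a)`. -/
noncomputable def symbolDensity (a : ℝ) (k y : E) : ℝ :=
  (‖y‖ ^ a)⁻¹ * (1 - Real.cos (2 * Real.pi * inner ℝ k y))

theorem symbolDensity_nonneg (a : ℝ) (k y : E) : 0 ≤ symbolDensity a k y :=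
  mul_nonneg (by positivity) (sub_nonneg.2 (Real.cos_le_one _))

theorem one_sub_cos_le (k y : E) :
    1 - Real.cos (2 * Real.pi * inner ℝ k y) ≤ 20 * (1 + ‖k‖ ^ 2) * min (‖y‖ ^ 2) 1 := by
  rw [mul_min_of_nonneg _ _ (by positivity), le_min_iff]
  constructor
  · have hcos := Real.one_sub_sq_div_two_le_cos (x := 2 * Real.pi * inner ℝ k y)
    have hpi : Real.pi ^ 2 ≤ 10 := by nlinarith [Real.pi_lt_d2, Real.pi_pos]
    have hinner : (inner ℝ k y) ^ 2 ≤ (‖k‖ * ‖y‖) ^ 2 :=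
      sq_le_sq' (neg_le_of_abs_le (abs_real_inner_le_norm k y)) (real_inner_le_norm k y)
    have hphase : Real.pi ^ 2 * (inner ℝ k y) ^ 2 ≤ 10 * (‖k‖ * ‖y‖) ^ 2 := by gcongr
    nlinarith [sq_nonneg ‖y‖]
  · nlinarith [Real.neg_one_le_cos (2 * Real.pi * inner ℝ k y), sq_nonneg ‖k‖]

theorem symbolDensity_le (a : ℝ) (k y : E) :
    symbolDensity a k y ≤ 20 * (1 + ‖k‖ ^ 2) * (min (‖y‖ ^ 2) 1 * (‖y‖ ^ a)⁻¹) := by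
  calc symbolDensity a k y ≤ (‖y‖ ^ a)⁻¹ * (20 * (1 + ‖k‖ ^ 2) * min (‖y‖ ^ 2) 1) := by
        unfold symbolDensity
        gcongr
        exact one_sub_cos_le k y
    _ = _ := by ring

variable [FiniteDimensional ℝ E] [MeasurableSpace E] [BorelSpace E] {a ρ : ℝ}

theorem measurable_symbolDensity : Measurable fun p : E × E => symbolDensity a p.1 p.2 := by
  unfold symbolDensity
  fun_prop

theorem stronglyMeasurable_integral_symbolDensity (ν : Measure E) [SFinite ν] :
    StronglyMeasurable fun k : E => ∫ y, symbolDensity a k y ∂ν :=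
  measurable_symbolDensity.stronglyMeasurable.integral_prod_right'

theorem integrableOn_norm_rpow_inv (ha : Module.finrank ℝ E < a) (hρ : 0 < ρ) :
    IntegrableOn (fun y : E => (‖y‖ ^ a)⁻¹) {y | ρ ≤ ‖y‖} := by
  have ha₀ : 0 ≤ a := (Nat.cast_nonneg _).trans ha.le
  refine ((integrable_one_add_norm ha).const_mul ((1 + ρ⁻¹) ^ a)).integrableOn.mono'
    (Measurable.aestronglyMeasurable (by fun_prop))
    ((ae_restrict_iff' (measurableSet_le_norm ρ)).2 (.of_forall fun y (hy : ρ ≤ ‖y‖) => ?_))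
  have hy₀ : 0 < ‖y‖ := hρ.trans_le hy
  have hscale : 1 + ‖y‖ ≤ (1 + ρ⁻¹) * ‖y‖ := by
    have : 1 ≤ ρ⁻¹ * ‖y‖ := by rwa [inv_mul_eq_div, one_le_div hρ]
    linarith
  rw [Real.norm_of_nonneg (by positivity), Real.rpow_neg (by positivity), ← div_eq_mul_inv,
    inv_eq_one_div, div_le_div_iff₀ (by positivity) (by positivity), one_mul,
    ← Real.mul_rpow (by positivity) hy₀.le]
  gcongr

section Symbol

variable [Nontrivial E] (ha : a ∈ Ioo (Module.finrank ℝ E : ℝ) (Module.finrank ℝ E + 2))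
include ha

theorem integrable_min_sq_one_mul_norm_rpow_inv :
    Integrable fun y : E => min (‖y‖ ^ 2) 1 * (‖y‖ ^ a)⁻¹ := by
  have hmeas : AEStronglyMeasurable (fun y : E => min (‖y‖ ^ 2) 1 * (‖y‖ ^ a)⁻¹) :=
    Measurable.aestronglyMeasurable (by fun_prop)
  have hball : IntegrableOn (fun y : E => min (‖y‖ ^ 2) 1 * (‖y‖ ^ a)⁻¹) (ball 0 1) := by
    refine integrableOn_ball_of_norm_le_rpow (C := 1) (α := a - 2) Module.finrank_pos
      (by linarith [ha.2]) (ae_restrict_of_ae ?_) hmeas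
    filter_upwards [Measure.ae_ne volume (0 : E)] with y hy
    have hy₀ : 0 < ‖y‖ := norm_pos_iff.2 hy
    rw [Real.norm_of_nonneg (by positivity), one_mul, neg_sub, Real.rpow_sub hy₀, Real.rpow_two,
      div_eq_mul_inv]
    gcongr
    exact min_le_left _ _
  have hcompl : IntegrableOn (fun y : E => min (‖y‖ ^ 2) 1 * (‖y‖ ^ a)⁻¹) {y | 1 ≤ ‖y‖} := by
    refine (integrableOn_norm_rpow_inv ha.1 one_pos).mono' hmeas.restrict (.of_forall fun y => ?_)
    rw [Real.norm_of_nonneg (by positivity)]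
    exact mul_le_of_le_one_left (by positivity) (min_le_right _ _)
  have hunion : ball (0 : E) 1 ∪ {y | 1 ≤ ‖y‖} = univ := by
    ext y
    simp [lt_or_ge]
  rw [← integrableOn_univ, ← hunion]
  exact hball.union hcompl

theorem integrable_symbolDensity (k : E) : Integrable (symbolDensity a k) := by
  refine ((integrable_min_sq_one_mul_norm_rpow_inv ha).const_mul (20 * (1 + ‖k‖ ^ 2))).mono'
    (measurable_symbolDensity.comp measurable_prodMk_left).aestronglyMeasurable
    (.of_forall fun y => ?_)
  rw [Real.norm_of_nonneg (symbolDensity_nonneg a k y)]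
  exact symbolDensity_le a k y

end Symbol

/-- The Fourier symbol of the principal value operator with kernel `‖y‖ ^ (-a)`: a constant multiple
of `‖k‖ ^ (a - dim E)`. -/
noncomputable def symbol (a : ℝ) (k : E) : ℝ :=
  ∫ y : E, symbolDensity a k y

/-- The Fourier symbol of the kernel `‖y‖ ^ (-a)` cut off to `ρ ≤ ‖y‖`. -/
noncomputable def truncatedSymbol (a ρ : ℝ) (k : E) : ℝ :=
  ∫ y in {y : E | ρ ≤ ‖y‖}, symbolDensity a k y

theorem truncatedSymbol_nonneg (a ρ : ℝ) (k : E) : 0 ≤ truncatedSymbol a ρ k :=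
  integral_nonneg fun y => symbolDensity_nonneg a k y

/-- The principal value operator with kernel `‖y‖ ^ (-a)`, applied to `u` at the point `x`, exists
and equals `L`. For `a = n + 2s` this is the fractional Laplacian without its normalising
constant. -/
def HasPVFracLap (a : ℝ) (u : E → ℂ) (x : E) (L : ℂ) : Prop :=
  Tendsto (fun ρ : ℝ => ∫ y in {y : E | ρ ≤ ‖y‖}, (‖y‖ ^ a)⁻¹ • (u x - u (x + y)))
    (𝓝[>] 0) (𝓝 L)

section TruncatedIntegral

variable (ha : Module.finrank ℝ E < a) (hρ : 0 < ρ)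
include ha hρ

/- The imaginary part integrates to zero because the kernel is even. -/
theorem integral_one_sub_planeWave (k : E) :
    ∫ y in {y : E | ρ ≤ ‖y‖}, (‖y‖ ^ a)⁻¹ • (1 - planeWave k y) = truncatedSymbol a ρ k := by
  have hint : IntegrableOn (fun y : E => (‖y‖ ^ a)⁻¹ • (1 - planeWave k y)) {y | ρ ≤ ‖y‖} :=
    (integrableOn_norm_rpow_inv ha hρ).smul_bdd 2
      (continuous_const.sub (contDiff_planeWave k (N := 0)).continuous).aestronglyMeasurable
      (.of_forall fun y => norm_one_sub_planeWave_le k y)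
  have hconj : starRingEnd ℂ (∫ y in {y : E | ρ ≤ ‖y‖}, (‖y‖ ^ a)⁻¹ • (1 - planeWave k y))
      = ∫ y in {y : E | ρ ≤ ‖y‖}, (‖y‖ ^ a)⁻¹ • (1 - planeWave k y) := by
    rw [← integral_conj, ← integral_indicator (measurableSet_le_norm ρ),
      ← integral_indicator (measurableSet_le_norm ρ), ← integral_neg_eq_self]
    congr 1
    ext y
    simp only [indicator, mem_ofPred_eq, norm_neg, planeWave_neg]
    split_ifs <;> simp
  rw [← Complex.conj_eq_iff_re.1 hconj, truncatedSymbol]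
  congr 1
  refine (integral_re hint).symm.trans (integral_congr_ae (.of_forall fun y => ?_))
  simp [re_planeWave, symbolDensity]

theorem integral_superposition_sub {ν : Measure E} [SFinite ν] {b : E → ℂ} (hb : Integrable b ν)
    (x : E) :
    ∫ y in {y : E | ρ ≤ ‖y‖},
        (‖y‖ ^ a)⁻¹ • ((∫ k, b k * planeWave k x ∂ν) - ∫ k, b k * planeWave k (x + y) ∂ν)
      = ∫ k, truncatedSymbol a ρ k * b k * planeWave k x ∂ν := by
  have hdiff : ∀ y, (‖y‖ ^ a)⁻¹ •
      ((∫ k, b k * planeWave k x ∂ν) - ∫ k, b k * planeWave k (x + y) ∂ν)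
      = ∫ k, (b k * planeWave k x) * ((‖y‖ ^ a)⁻¹ • (1 - planeWave k y)) ∂ν := fun y => by
    rw [← integral_sub (integrable_mul_planeWave hb x) (integrable_mul_planeWave hb _),
      ← integral_smul]
    congr 1
    ext k
    rw [planeWave_add, mul_smul_comm]
    ring_nf
  have hprod : Integrable (Function.uncurry fun y k =>
      (b k * planeWave k x) * ((‖y‖ ^ a)⁻¹ • (1 - planeWave k y)))
      ((volume.restrict {y : E | ρ ≤ ‖y‖}).prod ν) := by
    have hkernel := ((integrableOn_norm_rpow_inv ha hρ).ofReal (𝕜 := ℂ)).mul_prod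
      (integrable_mul_planeWave hb x)
    refine (hkernel.mul_bdd (g := fun p : E × E => 1 - planeWave p.2 p.1)
      (continuous_const.sub (continuous_planeWave_joint.comp continuous_swap)).aestronglyMeasurable
      (.of_forall fun p => norm_one_sub_planeWave_le _ _)).congr (.of_forall fun p => ?_)
    simp only [Function.uncurry, Complex.real_smul, RCLike.ofReal_eq_complex_ofReal]
    ring
  simp_rw [hdiff]
  rw [integral_integral_swap hprod]
  congr 1
  ext k
  rw [integral_const_mul, integral_one_sub_planeWave ha hρ]
  ring

end TruncatedIntegral

section Multiplier

variable [Nontrivial E] (ha : a ∈ Ioo (Module.finrank ℝ E : ℝ) (Module.finrank ℝ E + 2))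
include ha

theorem truncatedSymbol_le_symbol (ρ : ℝ) (k : E) : truncatedSymbol a ρ k ≤ symbol a k :=
  setIntegral_le_integral (integrable_symbolDensity ha k)
    (.of_forall fun y => symbolDensity_nonneg a k y)

theorem exists_symbol_le : ∃ C : ℝ, 0 ≤ C ∧ ∀ k : E, symbol a k ≤ C * (1 + ‖k‖ ^ 2) := by
  refine ⟨20 * ∫ y : E, min (‖y‖ ^ 2) 1 * (‖y‖ ^ a)⁻¹,
    mul_nonneg (by norm_num) (integral_nonneg fun y => by positivity), fun k => ?_⟩
  calc symbol a k ≤ ∫ y : E, 20 * (1 + ‖k‖ ^ 2) * (min (‖y‖ ^ 2) 1 * (‖y‖ ^ a)⁻¹) :=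
        integral_mono (integrable_symbolDensity ha k)
          ((integrable_min_sq_one_mul_norm_rpow_inv ha).const_mul _) fun y => symbolDensity_le a k y
    _ = _ := by rw [integral_const_mul]; ring

theorem tendsto_truncatedSymbol (k : E) :
    Tendsto (fun ρ => truncatedSymbol a ρ k) (𝓝[>] 0) (𝓝 (symbol a k)) := by
  have hcover : AECover volume (𝓝[>] (0 : ℝ)) fun ρ => {y : E | ρ ≤ ‖y‖} := by
    refine ⟨?_, measurableSet_le_norm⟩
    filter_upwards [Measure.ae_ne volume (0 : E)] with y hy
    filter_upwards [Ioo_mem_nhdsGT (norm_pos_iff.2 hy)] with ρ hρ using hρ.2.le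
  exact hcover.integral_tendsto_of_countably_generated (integrable_symbolDensity ha k)

theorem hasPVFracLap_integral_planeWave {ν : Measure E} [SFinite ν] {b : E → ℂ}
    (hb : Integrable b ν) (hb₂ : Integrable (fun k => ‖k‖ ^ 2 * ‖b k‖) ν) (x : E) :
    HasPVFracLap a (fun x => ∫ k, b k * planeWave k x ∂ν) x
      (∫ k, symbol a k * b k * planeWave k x ∂ν) := by
  obtain ⟨C, hC₀, hC⟩ := exists_symbol_le ha
  have hdom : Integrable (fun k => C * (‖b k‖ + ‖k‖ ^ 2 * ‖b k‖)) ν :=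
    (hb.norm.add hb₂).const_mul C
  refine Tendsto.congr' (f₁ := fun ρ => ∫ k, truncatedSymbol a ρ k * b k * planeWave k x ∂ν) ?_
    (tendsto_integral_filter_of_dominated_convergence _ (.of_forall fun ρ => ?_)
      (.of_forall fun ρ => .of_forall fun k => ?_) hdom (.of_forall fun k => ?_))
  · filter_upwards [self_mem_nhdsWithin] with ρ hρ
    exact (integral_superposition_sub ha.1 hρ hb x).symm
  · exact ((Complex.continuous_ofReal.comp_stronglyMeasurable
      (stronglyMeasurable_integral_symbolDensity _)).aestronglyMeasurable.mul hb.1).mul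
      (continuous_planeWave_joint.comp (Continuous.prodMk_left x)).aestronglyMeasurable
  · rw [norm_mul, norm_mul, norm_planeWave, Complex.norm_real,
      Real.norm_of_nonneg (truncatedSymbol_nonneg _ _ _), mul_one]
    calc _ ≤ (C * (1 + ‖k‖ ^ 2)) * ‖b k‖ := by
          gcongr
          exact (truncatedSymbol_le_symbol ha ρ k).trans (hC k)
      _ = _ := by ring
  · exact (((Complex.continuous_ofReal.tendsto _).comp
      (tendsto_truncatedSymbol ha k)).mul_const _).mul_const _

theorem hasPVFracLap_planeWave (k x : E) :
    HasPVFracLap a (planeWave k) x (symbol a k * planeWave k x) := by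
  simpa using hasPVFracLap_integral_planeWave ha (ν := Measure.dirac k) (b := fun _ => 1)
    (by simp) (integrable_dirac (by simp)) x

end Multiplier

end PrincipalValue

/-! ### Potentials of the regularised kernel -/

section RegKernel

/-- A smooth positive function on the line which is the identity on `[1, ∞)`. -/
noncomputable def regId (r : ℝ) : ℝ := 1 + Real.smoothTransition (2 * r - 1) * (r - 1)

theorem regId_of_one_le {r : ℝ} (hr : 1 ≤ r) : regId r = r := by
  rw [regId, Real.smoothTransition.one_of_one_le (by linarith)]
  ring

theorem regId_pos (r : ℝ) : 0 < regId r := by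
  rcases le_total r (1 / 2) with hr | hr
  · rw [regId, Real.smoothTransition.zero_of_nonpos (by linarith)]
    norm_num
  · have := Real.smoothTransition.nonneg (2 * r - 1)
    have := Real.smoothTransition.le_one (2 * r - 1)
    rw [regId]
    nlinarith

theorem contDiff_regId {N : ℕ∞} : ContDiff ℝ N regId :=
  contDiff_const.add ((Real.smoothTransition.contDiff.comp
    ((contDiff_const.mul contDiff_id).sub contDiff_const)).mul (contDiff_id.sub contDiff_const))

variable {E : Type*} [NormedAddCommGroup E] {b c r : ℝ} {V W : E → ℂ}

/-- A smooth function on `E` which equals `‖z‖ ^ (-b)` for `1 ≤ ‖z‖`. -/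
noncomputable def regKernel (b : ℝ) (z : E) : ℂ := ((regId (‖z‖ ^ 2) ^ (-b / 2) : ℝ) : ℂ)

theorem regKernel_of_one_le {z : E} (hz : 1 ≤ ‖z‖) :
    regKernel b z = ((‖z‖ ^ (-b) : ℝ) : ℂ) := by
  rw [regKernel, regId_of_one_le (one_le_pow₀ hz), ← Real.rpow_natCast_mul (norm_nonneg z)]
  congr 2
  push_cast
  ring

theorem regKernel_neg (b : ℝ) (z : E) : regKernel b (-z) = regKernel b z := by
  rw [regKernel, regKernel, norm_neg]

variable [InnerProductSpace ℝ E]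

theorem contDiff_regKernel (b : ℝ) {N : ℕ∞} : ContDiff ℝ N (regKernel b : E → ℂ) :=
  Complex.ofRealCLM.contDiff.comp <|
    (contDiff_regId.comp (contDiff_norm_sq ℝ)).rpow_const_of_ne fun _ => (regId_pos _).ne'

theorem continuous_iteratedFDeriv_regKernel (b : ℝ) (i : ℕ) :
    Continuous (iteratedFDeriv ℝ i (regKernel b : E → ℂ)) :=
  (contDiff_regKernel b (N := i)).continuous_iteratedFDeriv (by simp)

theorem regKernel_eq_rpow_smul {z : E} (hr : 1 ≤ r) (hz : r ≤ ‖z‖) :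
    regKernel b z = ((r ^ (-b) : ℝ) : ℂ) • regKernel b (r⁻¹ • z) := by
  have hr₀ : 0 < r := by linarith
  have hnorm : ‖r⁻¹ • z‖ = r⁻¹ * ‖z‖ := by
    rw [norm_smul, Real.norm_of_nonneg (by positivity)]
  have hone : 1 ≤ ‖r⁻¹ • z‖ := by
    rwa [hnorm, inv_mul_eq_div, one_le_div hr₀]
  rw [regKernel_of_one_le (hr.trans hz), regKernel_of_one_le hone, hnorm, smul_eq_mul,
    ← Complex.ofReal_mul, ← Real.mul_rpow hr₀.le (by positivity), mul_inv_cancel_left₀ hr₀.ne']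

theorem norm_iteratedFDeriv_regKernel_le_rpow_mul {z : E} (hr : 1 ≤ r) (hz : r < ‖z‖) (i : ℕ) :
    ‖iteratedFDeriv ℝ i (regKernel b) z‖ ≤
      r ^ (-b) * ‖iteratedFDeriv ℝ i (regKernel b) (r⁻¹ • z)‖ := by
  have hr₀ : 0 < r := by linarith
  have hscale : regKernel b =ᶠ[𝓝 z] fun w : E => ((r ^ (-b) : ℝ) : ℂ) • regKernel b (r⁻¹ • w) := by
    filter_upwards [continuous_norm.continuousAt.eventually_const_lt hz] with w hw
    exact regKernel_eq_rpow_smul hr hw.le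
  have hdiff : ContDiff ℝ i fun w : E => regKernel b (r⁻¹ • w) :=
    (contDiff_regKernel b (N := i)).comp (contDiff_const_smul _)
  rw [(hscale.iteratedFDeriv ℝ i).eq_of_nhds, iteratedFDeriv_const_smul_apply' hdiff.contDiffAt,
    iteratedFDeriv_comp_const_smul _ (contDiff_regKernel b (N := i)), norm_smul, norm_smul,
    Complex.norm_real, Real.norm_of_nonneg (by positivity), norm_pow,
    Real.norm_of_nonneg (by positivity)]
  gcongr
  exact mul_le_of_le_one_left (norm_nonneg _)
    (pow_le_one₀ (by positivity) (inv_le_one_of_one_le₀ hr))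

theorem rpow_neg_le_mul_rpow_neg {s t A : ℝ} (hb : 0 ≤ b) (hs : 0 < s) (hA : 0 ≤ A) (ht : 0 < t)
    (hst : t ≤ A * s) : s ^ (-b) ≤ A ^ b * t ^ (-b) := by
  rw [Real.rpow_neg hs.le, Real.rpow_neg ht.le, ← div_eq_mul_inv,
    le_div_iff₀ (Real.rpow_pos_of_pos ht _), inv_mul_le_iff₀ (Real.rpow_pos_of_pos hs _),
    ← Real.mul_rpow hs.le hA, mul_comm s]
  exact Real.rpow_le_rpow ht.le hst hb

theorem contDiff_smul_regKernel_sub (b : ℝ) (w : ℂ) (y : E) {N : ℕ∞} :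
    ContDiff ℝ N fun x => w • regKernel b (x - y) :=
  ((contDiff_regKernel b).comp (contDiff_id.sub contDiff_const)).const_smul w

theorem iteratedFDeriv_smul_regKernel_sub (b : ℝ) (i : ℕ) (w : ℂ) (x y : E) :
    iteratedFDeriv ℝ i (fun x => w • regKernel b (x - y)) x
      = w • iteratedFDeriv ℝ i (regKernel b) (x - y) := by
  have hdiff : ContDiff ℝ i fun x : E => regKernel b (x - y) :=
    (contDiff_regKernel b (N := i)).comp (contDiff_id.sub contDiff_const)
  rw [iteratedFDeriv_const_smul_apply' hdiff.contDiffAt, iteratedFDeriv_comp_sub]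

variable [FiniteDimensional ℝ E]

theorem exists_norm_iteratedFDeriv_regKernel_le (hb : 0 ≤ b) (M : ℕ) :
    ∃ C : ℝ, 0 ≤ C ∧ ∀ i ≤ M, ∀ z : E,
      ‖iteratedFDeriv ℝ i (regKernel b) z‖ ≤ C * (1 + ‖z‖) ^ (-b) := by
  obtain ⟨C, hC₀, hC⟩ := exists_ckNormLE_of_isCompact (isCompact_closedBall (0 : E) 2)
    (contDiff_regKernel b (N := M))
  refine ⟨C * 3 ^ b, by positivity, fun i hi z => ?_⟩
  have hz₁ : 0 < 1 + ‖z‖ := by positivity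
  rw [mul_assoc]
  rcases le_or_gt ‖z‖ 2 with hz | hz
  · have := rpow_neg_le_mul_rpow_neg hb one_pos zero_le_three hz₁ (by linarith)
    rw [Real.one_rpow] at this
    exact (hC i hi z (by simpa using hz)).trans (le_mul_of_one_le_right hC₀ this)
  · have hr : 0 < ‖z‖ / 2 := by linarith
    have hmem : (‖z‖ / 2)⁻¹ • z ∈ closedBall (0 : E) 2 := by
      rw [mem_closedBall_zero_iff, norm_smul, Real.norm_of_nonneg (by positivity),
        inv_mul_le_iff₀ hr]
      linarith
    calc ‖iteratedFDeriv ℝ i (regKernel b) z‖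
        ≤ (‖z‖ / 2) ^ (-b) * ‖iteratedFDeriv ℝ i (regKernel b) ((‖z‖ / 2)⁻¹ • z)‖ :=
          norm_iteratedFDeriv_regKernel_le_rpow_mul (by linarith) (by linarith) i
      _ ≤ (3 ^ b * (1 + ‖z‖) ^ (-b)) * C := by
          gcongr
          · exact rpow_neg_le_mul_rpow_neg hb hr zero_le_three hz₁ (by linarith)
          · exact hC i hi _ hmem
      _ = _ := mul_comm _ _

theorem exists_norm_iteratedFDeriv_regKernel_sub_le (hb : 0 ≤ b) (M : ℕ) {R : ℝ} (hR : 0 ≤ R) :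
    ∃ C : ℝ, 0 ≤ C ∧ ∀ i ≤ M, ∀ x ∈ closedBall (0 : E) R, ∀ y,
      ‖iteratedFDeriv ℝ i (regKernel b) (x - y)‖ ≤ C * (1 + ‖y‖) ^ (-b) := by
  obtain ⟨C, hC₀, hC⟩ := exists_norm_iteratedFDeriv_regKernel_le (E := E) hb M
  refine ⟨C * (1 + R) ^ b, by positivity, fun i hi x hx y => ?_⟩
  have hxR : ‖x‖ ≤ R := by simpa using hx
  have hy : ‖y‖ ≤ ‖x‖ + ‖x - y‖ := by simpa using norm_sub_le x (x - y)
  rw [mul_assoc]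
  refine (hC i hi _).trans (mul_le_mul_of_nonneg_left
    (rpow_neg_le_mul_rpow_neg hb (by positivity) (by positivity) (by positivity) ?_) hC₀)
  nlinarith [norm_nonneg (x - y)]

variable [MeasurableSpace E] [BorelSpace E]

/-- The potential `V ∗ ‖·‖ ^ (-b)` of a density `V`, with the singularity of the kernel smoothed
out. At points at distance at least `1` from the support of `V` it is the Riesz potential. -/
noncomputable def potential (b : ℝ) (V : E → ℂ) (x : E) : ℂ := ∫ y, V y • regKernel b (x - y)

theorem potential_const_mul (b : ℝ) (w : ℂ) (V : E → ℂ) (x : E) :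
    potential b (fun y => w * V y) x = w * potential b V x := by
  simp_rw [potential, smul_eq_mul, mul_assoc, integral_const_mul]

section BoundedDensity

variable (hb : Module.finrank ℝ E < b) (hV : Continuous V) (hc : ∀ y, ‖V y‖ ≤ c)
include hb hV hc

theorem integrable_smul_iteratedFDeriv_regKernel_sub (i : ℕ) (x : E) :
    Integrable fun y => V y • iteratedFDeriv ℝ i (regKernel b) (x - y) := by
  obtain ⟨C, -, hC⟩ := exists_norm_iteratedFDeriv_regKernel_sub_le (E := E)
    ((Nat.cast_nonneg _).trans hb.le) i (norm_nonneg x)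
  have hkernel : Integrable fun y => iteratedFDeriv ℝ i (regKernel b) (x - y) :=
    ((integrable_one_add_norm hb).const_mul C).mono'
      ((continuous_iteratedFDeriv_regKernel b i).comp (by fun_prop)).aestronglyMeasurable
      (.of_forall fun y => hC i le_rfl x (by simp) y)
  exact hkernel.bdd_smul c hV.aestronglyMeasurable (.of_forall hc)

theorem integrable_smul_regKernel_sub (x : E) : Integrable fun y => V y • regKernel b (x - y) := by
  refine (integrable_smul_iteratedFDeriv_regKernel_sub hb hV hc 0 x).mono
    (hV.smul ((contDiff_regKernel b (N := 0)).continuous.comp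
      (by fun_prop))).aestronglyMeasurable (.of_forall fun y => ?_)
  rw [norm_smul, norm_smul, norm_iteratedFDeriv_zero]

theorem hasFTaylorSeriesUpTo_potential :
    HasFTaylorSeriesUpTo ∞ (potential b V)
      (fun x i => ∫ y, V y • iteratedFDeriv ℝ i (regKernel b) (x - y)) := by
  have hc₀ : 0 ≤ c := (norm_nonneg _).trans (hc 0)
  simp_rw [← iteratedFDeriv_smul_regKernel_sub]
  refine hasFTaylorSeriesUpTo_integral (fun y => contDiff_smul_regKernel_sub b (V y) y)
    (fun i _ x => ?_) fun i _ x₀ => ?_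
  · simp_rw [iteratedFDeriv_smul_regKernel_sub]
    exact (integrable_smul_iteratedFDeriv_regKernel_sub hb hV hc i x).aestronglyMeasurable
  · obtain ⟨C, hC₀, hC⟩ := exists_norm_iteratedFDeriv_regKernel_sub_le (E := E)
      ((Nat.cast_nonneg _).trans hb.le) i (add_nonneg (norm_nonneg x₀) zero_le_one)
    refine ⟨fun y => c * (C * (1 + ‖y‖) ^ (-b)),
      ((integrable_one_add_norm hb).const_mul _).const_mul _, fun y x hx => ?_⟩
    have hx' : x ∈ closedBall (0 : E) (‖x₀‖ + 1) := by
      have := norm_le_norm_add_norm_sub' x x₀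
      have := mem_ball_iff_norm.1 hx
      rw [mem_closedBall_zero_iff]
      linarith
    rw [iteratedFDeriv_smul_regKernel_sub, norm_smul]
    exact mul_le_mul (hc y) (hC i le_rfl x hx' y) (norm_nonneg _) hc₀

theorem contDiff_potential {N : ℕ∞} : ContDiff ℝ N (potential b V) :=
  (hasFTaylorSeriesUpTo_potential hb hV hc).contDiff.of_le (by exact_mod_cast le_top)

theorem iteratedFDeriv_potential (i : ℕ) (x : E) :
    iteratedFDeriv ℝ i (potential b V) x = ∫ y, V y • iteratedFDeriv ℝ i (regKernel b) (x - y) :=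
  ((hasFTaylorSeriesUpTo_potential hb hV hc).eq_iteratedFDeriv (by exact_mod_cast le_top) x).symm

variable {c' : ℝ} (hW : Continuous W) (hc' : ∀ y, ‖W y‖ ≤ c')
include hW hc'

theorem potential_add (x : E) :
    potential b (fun y => V y + W y) x = potential b V x + potential b W x := by
  simp_rw [potential, add_smul]
  exact integral_add (integrable_smul_regKernel_sub hb hV hc x)
    (integrable_smul_regKernel_sub hb hW hc' x)

theorem potential_sub (x : E) :
    potential b (fun y => V y - W y) x = potential b V x - potential b W x := by
  simp_rw [potential, sub_smul]
  exact integral_sub (integrable_smul_regKernel_sub hb hV hc x)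
    (integrable_smul_regKernel_sub hb hW hc' x)

end BoundedDensity

end RegKernel

section FarPotentialBounds

theorem tendsto_setIntegral_le_norm {E G : Type*} [NormedAddCommGroup E] [MeasurableSpace E]
    [OpensMeasurableSpace E] [NormedAddCommGroup G] [NormedSpace ℝ G] {μ : Measure E} {f : E → G}
    (hf : Integrable f μ) :
    Tendsto (fun R : ℝ => ∫ y in {y | R ≤ ‖y‖}, f y ∂μ) atTop (𝓝 0) := by
  have hempty : ⋂ R : ℝ, {y : E | R ≤ ‖y‖} = ∅ :=
    eq_empty_of_forall_notMem fun y hy => by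
      have := mem_iInter.1 hy (‖y‖ + 1)
      simp only [mem_ofPred_eq] at this
      linarith
  have hlim := tendsto_setIntegral_of_antitone (s := fun R : ℝ => {y : E | R ≤ ‖y‖})
    measurableSet_le_norm (fun R R' hR y hy => hR.trans hy) ⟨0, hf.integrableOn⟩
  rwa [hempty, setIntegral_empty] at hlim

variable {E : Type*} [NormedAddCommGroup E] [InnerProductSpace ℝ E] [FiniteDimensional ℝ E]
  [MeasurableSpace E] [BorelSpace E]

theorem exists_forall_ckNormLE_potential {b : ℝ} (hb : Module.finrank ℝ E < b) (M : ℕ) {δ : ℝ}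
    (hδ : 0 < δ) :
    ∃ R₀ : ℝ, ∀ R ≥ R₀, ∀ (V : E → ℂ) (c : ℝ), Continuous V → (∀ y, ‖V y‖ ≤ c) →
      (∀ y ∈ ball (0 : E) R, V y = 0) → CkNormLE M (closedBall 0 2) (potential b V) (δ * c) := by
  obtain ⟨C, hC₀, hC⟩ := exists_norm_iteratedFDeriv_regKernel_sub_le (E := E)
    ((Nat.cast_nonneg _).trans hb.le) M zero_le_two
  have hdecay := (integrable_one_add_norm (E := E) (μ := volume) hb).const_mul C
  obtain ⟨R₀, hR₀⟩ :=
    eventually_atTop.1 ((tendsto_setIntegral_le_norm hdecay).eventually_lt_const hδ)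
  refine ⟨R₀, fun R hR V c hV hc hV₀ i hi x hx => ?_⟩
  have hc₀ : 0 ≤ c := (norm_nonneg _).trans (hc 0)
  rw [iteratedFDeriv_potential hb hV hc,
    ← setIntegral_eq_integral_of_forall_compl_eq_zero (s := {y : E | R ≤ ‖y‖}) fun y hy => by
      rw [hV₀ y (by simpa using hy), zero_smul]]
  calc _ ≤ ∫ y in {y : E | R ≤ ‖y‖}, c * (C * (1 + ‖y‖) ^ (-b)) :=
        norm_integral_le_of_norm_le (hdecay.const_mul c).integrableOn (.of_forall fun y => by
          rw [norm_smul]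
          exact mul_le_mul (hc y) (hC i hi x hx y) (norm_nonneg _) hc₀)
    _ ≤ c * δ := by
        rw [integral_const_mul]
        exact mul_le_mul_of_nonneg_left (hR₀ R hR).le hc₀
    _ = δ * c := mul_comm _ _

theorem hasPVFracLap_of_eq_zero_ball {a : ℝ} {V : E → ℂ} (hV : ∀ y ∈ ball (0 : E) 4, V y = 0)
    {x : E} (hx : x ∈ ball (0 : E) 1) : HasPVFracLap a V x (-potential a V x) := by
  have hx₁ : ‖x‖ < 1 := by simpa using hx
  refine tendsto_const_nhds.congr' ?_
  filter_upwards [Ioo_mem_nhdsGT (zero_lt_one' ℝ)] with ρ hρ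
  rw [← integral_indicator (measurableSet_le_norm ρ), potential, ← integral_neg,
    ← integral_add_left_eq_self (fun y => -(V y • regKernel a (x - y))) x]
  congr 1
  ext y
  rw [hV x (by rw [mem_ball_zero_iff]; linarith)]
  by_cases hxy : x + y ∈ ball (0 : E) 4
  · simp [indicator, hV _ hxy]
  · have hy : 1 ≤ ‖y‖ := by
      have : 4 ≤ ‖x + y‖ := by simpa using hxy
      linarith [norm_add_le x y]
    rw [indicator_of_mem (show y ∈ {y : E | ρ ≤ ‖y‖} from hρ.2.le.trans hy), sub_add_cancel_left,
      regKernel_neg, regKernel_of_one_le hy, Real.rpow_neg (norm_nonneg y), zero_sub, smul_neg,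
      smul_eq_mul, mul_comm, Complex.real_smul]

end FarPotentialBounds

/-! ### Fourier transforms of test functions -/

section FourierDecay

variable {E : Type*} [NormedAddCommGroup E] [InnerProductSpace ℝ E] [FiniteDimensional ℝ E]
  [MeasurableSpace E] [BorelSpace E] {g : E → ℂ}

theorem continuous_fourier_of_hasCompactSupport (hg : Continuous g) (hc : HasCompactSupport g) :
    Continuous (𝓕 g) :=
  VectorFourier.fourierIntegral_continuous Real.continuous_fourierChar
    (by exact continuous_inner) (hg.integrable_of_hasCompactSupport hc)

theorem integral_norm_iteratedFDeriv_le {N p : ℕ} {r δ : ℝ} (hsupp : tsupport g ⊆ closedBall 0 r)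
    (hδ : CkNormLE N univ g δ) (hp : p ≤ N) :
    ∫ x, ‖iteratedFDeriv ℝ p g x‖ ≤ volume.real (closedBall (0 : E) r) * δ := by
  have hzero : ∀ x ∉ closedBall (0 : E) r, ‖iteratedFDeriv ℝ p g x‖ = 0 := fun x hx =>
    norm_eq_zero.2 (Function.notMem_support.1 fun h =>
      hx (hsupp (support_iteratedFDeriv_subset p h)))
  rw [← setIntegral_eq_integral_of_forall_compl_eq_zero hzero, mul_comm]
  refine (Real.le_norm_self _).trans (norm_setIntegral_le_of_norm_le_const
    measure_closedBall_lt_top fun x _ => ?_)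
  rw [norm_norm]
  exact hδ p hp x (mem_univ x)

theorem norm_pow_mul_norm_fourier_le {N : ℕ} {r δ : ℝ} (hg : ContDiff ℝ N g)
    (hsupp : tsupport g ⊆ closedBall 0 r) (hδ : CkNormLE N univ g δ) (k : E) :
    ‖k‖ ^ N * ‖𝓕 g k‖ ≤ 2 ^ N * ((N + 1) * (volume.real (closedBall (0 : E) r) * δ)) := by
  have hc : HasCompactSupport g :=
    (isCompact_closedBall (0 : E) r).of_isClosed_subset (isClosed_tsupport g) hsupp
  have hint : ∀ m n : ℕ, (m : ℕ∞) ≤ 0 → (n : ℕ∞) ≤ N →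
      Integrable (fun x => ‖x‖ ^ m * ‖iteratedFDeriv ℝ n g x‖) := fun m n _ hn => by
    have hcont : Continuous (iteratedFDeriv ℝ n g) :=
      hg.continuous_iteratedFDeriv (by exact_mod_cast hn)
    exact Continuous.integrable_of_hasCompactSupport (by fun_prop)
      (hc.iteratedFDeriv n).norm.mul_left
  have hfourier := Real.pow_mul_norm_iteratedFDeriv_fourier_le (K := 0) (N := N) (k := 0) (n := N)
    (by exact_mod_cast hg) hint (by simp) le_rfl k
  rw [norm_iteratedFDeriv_zero] at hfourier
  simp only [pow_zero, one_mul, CharP.cast_eq_zero, mul_zero, zero_add, Finset.sum_product,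
    Finset.range_one, Finset.sum_singleton] at hfourier
  refine hfourier.trans ?_
  gcongr
  calc ∑ p ∈ Finset.range (N + 1), ∫ x, ‖iteratedFDeriv ℝ p g x‖
      ≤ ∑ _p ∈ Finset.range (N + 1), volume.real (closedBall (0 : E) r) * δ :=
        Finset.sum_le_sum fun p hp =>
          integral_norm_iteratedFDeriv_le hsupp hδ (Finset.mem_range_succ_iff.1 hp)
    _ = (N + 1) * (volume.real (closedBall (0 : E) r) * δ) := by simp

theorem exists_one_add_norm_pow_mul_norm_fourier_le (r : ℝ) (N : ℕ) :
    ∃ C : ℝ, 0 ≤ C ∧ ∀ (g : E → ℂ) (δ : ℝ), ContDiff ℝ N g → tsupport g ⊆ closedBall 0 r →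
      CkNormLE N univ g δ → ∀ k, (1 + ‖k‖) ^ N * ‖𝓕 g k‖ ≤ C * δ := by
  set v : ℝ := volume.real (closedBall (0 : E) r)
  refine ⟨2 ^ (N - 1) * (v + 2 ^ N * ((N + 1) * v)), by positivity,
    fun g δ hg hsupp hδ k => ?_⟩
  have hlow : ‖𝓕 g k‖ ≤ v * δ := by
    have hg₀ : ContDiff ℝ (0 : ℕ) g := hg.of_le (by exact_mod_cast N.zero_le)
    have hδ₀ : CkNormLE 0 univ g δ := fun i hi => hδ i (hi.trans N.zero_le)
    simpa using norm_pow_mul_norm_fourier_le hg₀ hsupp hδ₀ k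
  calc (1 + ‖k‖) ^ N * ‖𝓕 g k‖ ≤ (2 ^ (N - 1) * (1 ^ N + ‖k‖ ^ N)) * ‖𝓕 g k‖ := by
        gcongr
        exact add_pow_le zero_le_one (norm_nonneg k) N
    _ = 2 ^ (N - 1) * (‖𝓕 g k‖ + ‖k‖ ^ N * ‖𝓕 g k‖) := by ring
    _ ≤ 2 ^ (N - 1) * (v * δ + 2 ^ N * ((N + 1) * (v * δ))) := by
        have hhigh := norm_pow_mul_norm_fourier_le hg hsupp hδ k
        gcongr
    _ = 2 ^ (N - 1) * (v + 2 ^ N * ((N + 1) * v)) * δ := by ring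

theorem exists_integral_norm_pow_mul_norm_fourier_le (r : ℝ) (i : ℕ) :
    ∃ (C : ℝ) (N : ℕ), 0 ≤ C ∧ ∀ (g : E → ℂ) (δ : ℝ), ContDiff ℝ N g →
      tsupport g ⊆ closedBall 0 r → CkNormLE N univ g δ →
      Integrable (fun k => ‖k‖ ^ i * ‖𝓕 g k‖) ∧ ∫ k, ‖k‖ ^ i * ‖𝓕 g k‖ ≤ C * δ := by
  set d := Module.finrank ℝ E
  obtain ⟨C, hC₀, hC⟩ := exists_one_add_norm_pow_mul_norm_fourier_le (E := E) r (d + 1 + i)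
  have hweight : Integrable fun k : E => (1 + ‖k‖) ^ (-((d : ℝ) + 1)) :=
    integrable_one_add_norm (lt_add_one _)
  refine ⟨C * ∫ k : E, (1 + ‖k‖) ^ (-((d : ℝ) + 1)), d + 1 + i,
    mul_nonneg hC₀ (integral_nonneg fun k => by positivity), fun g δ hg hsupp hδ => ?_⟩
  have hc : HasCompactSupport g :=
    (isCompact_closedBall (0 : E) r).of_isClosed_subset (isClosed_tsupport g) hsupp
  have hbound : ∀ k : E, ‖k‖ ^ i * ‖𝓕 g k‖ ≤ C * δ * (1 + ‖k‖) ^ (-((d : ℝ) + 1)) := fun k => by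
    have hpow : (1 + ‖k‖) ^ (-((d : ℝ) + 1)) = ((1 + ‖k‖) ^ (d + 1))⁻¹ := by
      rw [Real.rpow_neg (by positivity), ← Nat.cast_succ, Real.rpow_natCast]
    rw [hpow, ← div_eq_mul_inv, le_div_iff₀ (by positivity)]
    calc ‖k‖ ^ i * ‖𝓕 g k‖ * (1 + ‖k‖) ^ (d + 1)
        ≤ (1 + ‖k‖) ^ i * ‖𝓕 g k‖ * (1 + ‖k‖) ^ (d + 1) := by gcongr; linarith
      _ = (1 + ‖k‖) ^ (d + 1 + i) * ‖𝓕 g k‖ := by rw [pow_add (1 + ‖k‖) (d + 1) i]; ring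
      _ ≤ C * δ := hC g δ hg hsupp hδ k
  have hcont := continuous_fourier_of_hasCompactSupport hg.continuous hc
  have hint : Integrable (fun k => ‖k‖ ^ i * ‖𝓕 g k‖) := by
    refine (hweight.const_mul (C * δ)).mono' (by fun_prop) (.of_forall fun k => ?_)
    rw [Real.norm_of_nonneg (by positivity)]
    exact hbound k
  refine ⟨hint, ?_⟩
  calc _ ≤ ∫ k, C * δ * (1 + ‖k‖) ^ (-((d : ℝ) + 1)) :=
        integral_mono hint (hweight.const_mul _) hbound
    _ = _ := by rw [integral_const_mul]; ring

variable (hg : ContDiff ℝ ∞ g) (hc : HasCompactSupport g)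
include hg hc

theorem integrable_norm_pow_mul_norm_fourier (i : ℕ) :
    Integrable (fun k => ‖k‖ ^ i * ‖𝓕 g k‖) := by
  obtain ⟨r, hr⟩ := hc.isBounded.subset_closedBall (0 : E)
  obtain ⟨C, N, -, h⟩ := exists_integral_norm_pow_mul_norm_fourier_le (E := E) r i
  have hgN : ContDiff ℝ N g := hg.of_le (by exact_mod_cast le_top)
  obtain ⟨B, -, hB⟩ := exists_ckNormLE_univ_of_hasCompactSupport hgN hc
  exact (h g B hgN hr hB).1

theorem integrable_fourier : Integrable (𝓕 g) :=
  (integrable_norm_iff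
    (continuous_fourier_of_hasCompactSupport hg.continuous hc).aestronglyMeasurable).1
    (by simpa using integrable_norm_pow_mul_norm_fourier hg hc 0)

theorem integral_fourier_mul_planeWave (x : E) : ∫ k, 𝓕 g k * planeWave k x = g x := by
  rw [← (hg.continuous.integrable_of_hasCompactSupport hc).fourierInv_fourier_eq
    (integrable_fourier hg hc) hg.continuous.continuousAt, Real.fourierInv_eq']
  refine integral_congr_ae (.of_forall fun k => ?_)
  simp only [planeWave, smul_eq_mul, mul_comm]

end FourierDecay

/-! ### The resolvent -/

section Resolvent

variable {E : Type*} [NormedAddCommGroup E] [InnerProductSpace ℝ E] [FiniteDimensional ℝ E]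
  [MeasurableSpace E] [BorelSpace E]

/-- The Fourier coefficients of `(L + iτ)⁻¹ g`, where `L` is the principal value operator with
kernel `‖y‖ ^ (-a)`. -/
noncomputable def pvResolventCoeff (a τ : ℝ) (g : E → ℂ) (k : E) : ℂ :=
  𝓕 g k / (symbol a k + τ * Complex.I)

/-- The function `(L + iτ)⁻¹ g`, where `L` is the principal value operator with kernel
`‖y‖ ^ (-a)`. -/
noncomputable def pvResolvent (a τ : ℝ) (g : E → ℂ) (x : E) : ℂ :=
  ∫ k, pvResolventCoeff a τ g k * planeWave k x

theorem abs_le_norm_symbol_add (a τ : ℝ) (k : E) : |τ| ≤ ‖(symbol a k + τ * Complex.I : ℂ)‖ := by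
  simpa using Complex.abs_im_le_norm (symbol a k + τ * Complex.I)

variable {a τ : ℝ} (hτ : τ ≠ 0) {g h : E → ℂ}

include hτ in
theorem symbol_add_ne_zero (k : E) : (symbol a k + τ * Complex.I : ℂ) ≠ 0 :=
  norm_pos_iff.1 ((abs_pos.2 hτ).trans_le (abs_le_norm_symbol_add a τ k))

include hτ in
theorem norm_pvResolventCoeff_le (k : E) : ‖pvResolventCoeff a τ g k‖ ≤ |τ|⁻¹ * ‖𝓕 g k‖ := by
  rw [pvResolventCoeff, norm_div, div_eq_inv_mul]
  have := abs_pos.2 hτ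
  gcongr
  exact abs_le_norm_symbol_add a τ k

theorem aestronglyMeasurable_pvResolventCoeff (hg : Continuous g) (hc : HasCompactSupport g) :
    AEStronglyMeasurable (pvResolventCoeff a τ g) :=
  ((continuous_fourier_of_hasCompactSupport hg hc).measurable.div
    ((Complex.measurable_ofReal.comp
      (stronglyMeasurable_integral_symbolDensity volume).measurable).add_const _)
    ).aestronglyMeasurable

variable (hg : ContDiff ℝ ∞ g) (hc : HasCompactSupport g) (hh : ContDiff ℝ ∞ h)
  (hhc : HasCompactSupport h)

section TestFunction
include hτ hg hc

theorem integrable_norm_pow_mul_norm_pvResolventCoeff (i : ℕ) :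
    Integrable fun k => ‖k‖ ^ i * ‖pvResolventCoeff a τ g k‖ := by
  refine ((integrable_norm_pow_mul_norm_fourier hg hc i).const_mul |τ|⁻¹).mono'
    ((by fun_prop : Continuous fun k : E => ‖k‖ ^ i).aestronglyMeasurable.mul
      (aestronglyMeasurable_pvResolventCoeff hg.continuous hc).norm) (.of_forall fun k => ?_)
  rw [Real.norm_of_nonneg (by positivity), mul_left_comm]
  gcongr
  exact norm_pvResolventCoeff_le hτ k

theorem integrable_pvResolventCoeff : Integrable (pvResolventCoeff a τ g) :=
  (integrable_norm_iff (aestronglyMeasurable_pvResolventCoeff hg.continuous hc)).1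
    (by simpa using integrable_norm_pow_mul_norm_pvResolventCoeff (a := a) hτ hg hc 0)

theorem contDiff_pvResolvent : ContDiff ℝ ∞ (pvResolvent a τ g) :=
  contDiff_integral_planeWave (aestronglyMeasurable_pvResolventCoeff hg.continuous hc)
    (integrable_norm_pow_mul_norm_pvResolventCoeff hτ hg hc)

theorem hasPVFracLap_pvResolvent [Nontrivial E]
    (ha : a ∈ Ioo (Module.finrank ℝ E : ℝ) (Module.finrank ℝ E + 2)) (x : E) :
    HasPVFracLap a (pvResolvent a τ g) x (g x - τ * Complex.I * pvResolvent a τ g x) := by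
  suffices hL : g x - τ * Complex.I * pvResolvent a τ g x =
      ∫ k, symbol a k * pvResolventCoeff a τ g k * planeWave k x by
    rw [hL]
    exact hasPVFracLap_integral_planeWave ha (integrable_pvResolventCoeff hτ hg hc)
      (integrable_norm_pow_mul_norm_pvResolventCoeff hτ hg hc 2) x
  rw [← integral_fourier_mul_planeWave hg hc x, pvResolvent, ← integral_const_mul, ← integral_sub
    (integrable_mul_planeWave (integrable_fourier hg hc) x)
    ((integrable_mul_planeWave (integrable_pvResolventCoeff hτ hg hc) x).const_mul _)]
  refine integral_congr_ae (.of_forall fun k => ?_)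
  have := symbol_add_ne_zero (a := a) hτ k
  simp only [pvResolventCoeff]
  field_simp
  ring

include hh hhc

theorem pvResolvent_sub (x : E) :
    pvResolvent a τ (fun y => g y - h y) x = pvResolvent a τ g x - pvResolvent a τ h x := by
  rw [pvResolvent, pvResolvent, pvResolvent,
    ← integral_sub (integrable_mul_planeWave (integrable_pvResolventCoeff hτ hg hc) x)
      (integrable_mul_planeWave (integrable_pvResolventCoeff hτ hh hhc) x)]
  refine integral_congr_ae (.of_forall fun k => ?_)
  have hfourier : 𝓕 (fun y => g y - h y) k = 𝓕 g k - 𝓕 h k := by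
    rw [Real.fourier_eq, Real.fourier_eq, Real.fourier_eq, ← integral_sub]
    · simp only [smul_sub]
    · exact (Real.fourierIntegral_convergent_iff k).2
        (hg.continuous.integrable_of_hasCompactSupport hc)
    · exact (Real.fourierIntegral_convergent_iff k).2
        (hh.continuous.integrable_of_hasCompactSupport hhc)
  simp only [pvResolventCoeff, hfourier]
  ring

end TestFunction

include hτ in
theorem exists_norm_iteratedFDeriv_pvResolvent_le (a r : ℝ) (i : ℕ) :
    ∃ (C : ℝ) (M : ℕ), 0 ≤ C ∧ ∀ (g : E → ℂ) (δ : ℝ), ContDiff ℝ ∞ g →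
      tsupport g ⊆ closedBall 0 r → CkNormLE M univ g δ →
      ∀ x, ‖iteratedFDeriv ℝ i (pvResolvent a τ g) x‖ ≤ C * δ := by
  obtain ⟨C, M, hC₀, hC⟩ := exists_integral_norm_pow_mul_norm_fourier_le (E := E) r i
  refine ⟨(2 * Real.pi) ^ i * (|τ|⁻¹ * C), M, by positivity, fun g δ hg hsupp hδ x => ?_⟩
  have hc : HasCompactSupport g :=
    (isCompact_closedBall (0 : E) r).of_isClosed_subset (isClosed_tsupport g) hsupp
  obtain ⟨hint, hle⟩ := hC g δ (hg.of_le (by exact_mod_cast le_top)) hsupp hδ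
  have hcoeff : ∫ k : E, ‖k‖ ^ i * ‖pvResolventCoeff a τ g k‖ ≤ |τ|⁻¹ * (C * δ) := by
    calc ∫ k : E, ‖k‖ ^ i * ‖pvResolventCoeff a τ g k‖
        ≤ ∫ k : E, |τ|⁻¹ * (‖k‖ ^ i * ‖𝓕 g k‖) := by
          refine integral_mono (integrable_norm_pow_mul_norm_pvResolventCoeff hτ hg hc i)
            (hint.const_mul _) fun k => ?_
          simp only [mul_left_comm |τ|⁻¹]
          gcongr
          exact norm_pvResolventCoeff_le hτ k
      _ ≤ |τ|⁻¹ * (C * δ) := by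
          rw [integral_const_mul]
          gcongr
  calc _ ≤ (2 * Real.pi) ^ i * ∫ k, ‖k‖ ^ i * ‖pvResolventCoeff a τ g k‖ :=
        norm_iteratedFDeriv_integral_planeWave_le
          (aestronglyMeasurable_pvResolventCoeff hg.continuous hc)
          (integrable_norm_pow_mul_norm_pvResolventCoeff hτ hg hc) i x
    _ ≤ (2 * Real.pi) ^ i * (|τ|⁻¹ * (C * δ)) := by gcongr
    _ = _ := by ring

include hτ in
theorem exists_ckNormLE_pvResolvent (a r : ℝ) (K : ℕ) :
    ∃ (C : ℝ) (M : ℕ), 0 ≤ C ∧ ∀ (g : E → ℂ) (δ : ℝ), ContDiff ℝ ∞ g →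
      tsupport g ⊆ closedBall 0 r → CkNormLE M univ g δ →
      CkNormLE K univ (pvResolvent a τ g) (C * δ) := by
  choose C M hC₀ hC using exists_norm_iteratedFDeriv_pvResolvent_le (E := E) hτ a r
  refine ⟨∑ i ∈ Finset.range (K + 1), C i, ∑ i ∈ Finset.range (K + 1), M i,
    Finset.sum_nonneg fun i _ => hC₀ i, fun g δ hg hsupp hδ i hi x _ => ?_⟩
  have hδ₀ : 0 ≤ δ := (norm_nonneg _).trans (hδ 0 (Nat.zero_le _) 0 (mem_univ 0))
  have hiK : i ∈ Finset.range (K + 1) := Finset.mem_range_succ_iff.2 hi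
  have hCi : C i ≤ ∑ i ∈ Finset.range (K + 1), C i :=
    Finset.single_le_sum (fun j _ => hC₀ j) hiK
  have hMi : M i ≤ ∑ i ∈ Finset.range (K + 1), M i :=
    Finset.single_le_sum (fun j _ => (M j).zero_le) hiK
  calc ‖iteratedFDeriv ℝ i (pvResolvent a τ g) x‖ ≤ C i * δ :=
        hC i g δ hg hsupp (fun j hj => hδ j (hj.trans hMi)) x
    _ ≤ (∑ i ∈ Finset.range (K + 1), C i) * δ := by gcongr

end Resolvent

/-! ### Potentials of densities far from the origin -/

section Laplacian

open InnerProductSpace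
open scoped Laplacian

variable {E : Type*} [NormedAddCommGroup E] [InnerProductSpace ℝ E] {f g : E → ℂ}

theorem contDiff_fderiv_apply (hg : ContDiff ℝ ∞ g) (v : E) :
    ContDiff ℝ ∞ fun y => fderiv ℝ g y v :=
  (hg.fderiv_right (m := ∞) (by simp)).clm_apply contDiff_const

variable [FiniteDimensional ℝ E]

theorem laplacian_eq_sum_fderiv_fderiv (hg : ContDiff ℝ ∞ g) :
    Δ g = fun y => ∑ j, fderiv ℝ (fun y => fderiv ℝ g y (stdOrthonormalBasis ℝ E j)) y
      (stdOrthonormalBasis ℝ E j) := by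
  have hdiff : Differentiable ℝ (fderiv ℝ g) :=
    (hg.fderiv_right (m := ∞) (by simp)).differentiable (by simp)
  rw [laplacian_eq_iteratedFDeriv_stdOrthonormalBasis]
  ext y
  refine Finset.sum_congr rfl fun j _ => ?_
  simp [iteratedFDeriv_two_apply, fderiv_clm_apply (hdiff y)]

theorem contDiff_laplacian (hg : ContDiff ℝ ∞ g) : ContDiff ℝ ∞ (Δ g) := by
  rw [laplacian_eq_sum_fderiv_fderiv hg]
  exact ContDiff.sum fun _ _ => contDiff_fderiv_apply (contDiff_fderiv_apply hg _) _

theorem tsupport_laplacian_subset (g : E → ℂ) : tsupport (Δ g) ⊆ tsupport g := by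
  refine closure_minimal (fun y hy => ?_) (isClosed_tsupport g)
  rw [laplacian_eq_iteratedFDeriv_stdOrthonormalBasis] at hy
  obtain ⟨j, -, hj⟩ := Finset.exists_ne_zero_of_sum_ne_zero hy
  by_contra hyg
  rw [Function.notMem_support.1 fun h => hyg (support_iteratedFDeriv_subset 2 h)] at hj
  exact hj rfl

variable [MeasurableSpace E] [BorelSpace E]

theorem integral_fderiv_mul_eq_neg (hf : ContDiff ℝ ∞ f) (hfc : HasCompactSupport f)
    (hg : ContDiff ℝ ∞ g) (v : E) :
    ∫ y, fderiv ℝ f y v * g y = -∫ y, f y * fderiv ℝ g y v := by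
  rw [integral_mul_fderiv_eq_neg_fderiv_mul_of_integrable, neg_neg]
  · exact ((contDiff_fderiv_apply hf v).continuous.mul
      hg.continuous).integrable_of_hasCompactSupport (hfc.fderiv_apply ℝ v).mul_right
  · exact (hf.continuous.mul
      (contDiff_fderiv_apply hg v).continuous).integrable_of_hasCompactSupport hfc.mul_right
  · exact (hf.continuous.mul hg.continuous).integrable_of_hasCompactSupport hfc.mul_right
  · exact fun x _ => (hf.differentiable (by simp)).differentiableAt
  · exact fun x _ => (hg.differentiable (by simp)).differentiableAt

theorem integral_laplacian_mul (hf : ContDiff ℝ ∞ f) (hfc : HasCompactSupport f)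
    (hg : ContDiff ℝ ∞ g) : ∫ y, Δ f y * g y = ∫ y, f y * Δ g y := by
  have hfc' (v : E) : HasCompactSupport fun y => fderiv ℝ f y v := hfc.fderiv_apply ℝ v
  simp_rw [laplacian_eq_sum_fderiv_fderiv hf, laplacian_eq_sum_fderiv_fderiv hg, Finset.sum_mul,
    Finset.mul_sum]
  rw [integral_finsetSum, integral_finsetSum]
  · refine Finset.sum_congr rfl fun j _ => ?_
    rw [integral_fderiv_mul_eq_neg (contDiff_fderiv_apply hf _) (hfc' _) hg,
      integral_fderiv_mul_eq_neg hf hfc (contDiff_fderiv_apply hg _), neg_neg]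
  · exact fun j _ => (hf.continuous.mul (contDiff_fderiv_apply (contDiff_fderiv_apply hg
      _) _).continuous).integrable_of_hasCompactSupport hfc.mul_right
  · exact fun j _ => ((contDiff_fderiv_apply (contDiff_fderiv_apply hf _) _).continuous.mul
      hg.continuous).integrable_of_hasCompactSupport ((hfc' _).fderiv_apply ℝ _).mul_right

end Laplacian

section FarPotentials

open InnerProductSpace
open scoped Laplacian

variable {E : Type*} [NormedAddCommGroup E] {b : ℝ} {x y : E}

theorem regKernel_mul_regKernel (b c : ℝ) (z : E) :
    regKernel b z * regKernel c z = regKernel (b + c) z := by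
  rw [regKernel, regKernel, regKernel, ← Complex.ofReal_mul, ← Real.rpow_add (regId_pos _)]
  congr 2
  ring

theorem regKernel_pow (b : ℝ) (z : E) (N : ℕ) : regKernel b z ^ N = regKernel (N * b) z := by
  induction N with
  | zero => simp [regKernel]
  | succ N ih =>
    rw [pow_succ, ih, regKernel_mul_regKernel]
    congr 1
    push_cast
    ring

theorem eventually_one_lt_norm_sub (h : 1 < ‖x - y‖) : ∀ᶠ y' in 𝓝 y, 1 < ‖x - y'‖ :=
  (by fun_prop : Continuous fun y' => ‖x - y'‖).continuousAt.eventually (lt_mem_nhds h)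

variable [InnerProductSpace ℝ E]

theorem hasFDerivAt_regKernel_sub (b : ℝ) (h : 1 < ‖x - y‖) :
    HasFDerivAt (fun y => regKernel b (x - y))
      ((b * regKernel (b + 2) (x - y)) • (Complex.ofRealCLM.comp (innerSL ℝ (x - y)))) y := by
  have hsq : HasFDerivAt (fun y => ‖x - y‖ ^ 2) (-(2 • innerSL ℝ (x - y))) y := by
    refine ((hasFDerivAt_const x y).sub (hasFDerivAt_id y)).norm_sq.congr_fderiv ?_
    ext v
    simp
    ring
  have hpow : HasFDerivAt (fun y => (((‖x - y‖ ^ 2) ^ (-b / 2) : ℝ) : ℂ))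
      ((b * regKernel (b + 2) (x - y)) • (Complex.ofRealCLM.comp (innerSL ℝ (x - y)))) y := by
    refine (Complex.ofRealCLM.hasFDerivAt.comp y (hsq.rpow_const (p := -b / 2)
      (Or.inl (by positivity)))).congr_fderiv ?_
    ext v
    rw [regKernel, regId_of_one_le (by nlinarith),
      show -(b + 2) / 2 = -b / 2 - 1 by ring]
    simp
    ring
  refine hpow.congr_of_eventuallyEq ?_
  filter_upwards [eventually_one_lt_norm_sub h] with y' hy'
  rw [regKernel, regId_of_one_le (by nlinarith)]

theorem fderiv_fderiv_regKernel_sub (b : ℝ) (h : 1 < ‖x - y‖) (v : E) :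
    fderiv ℝ (fun y => fderiv ℝ (fun y => regKernel b (x - y)) y v) y v =
      b * (b + 2) * (inner ℝ (x - y) v : ℝ) ^ 2 * regKernel (b + 4) (x - y)
        - b * ‖v‖ ^ 2 * regKernel (b + 2) (x - y) := by
  have hfderiv : (fun y => fderiv ℝ (fun y => regKernel b (x - y)) y v) =ᶠ[𝓝 y]
      fun y => b * (regKernel (b + 2) (x - y) * (inner ℝ (x - y) v : ℝ)) := by
    filter_upwards [eventually_one_lt_norm_sub h] with y' hy'
    rw [(hasFDerivAt_regKernel_sub b hy').fderiv]
    simp [mul_assoc, inner_sub_left]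
  have hinner : HasFDerivAt (fun y => ((inner ℝ (x - y) v : ℝ) : ℂ))
      (-(Complex.ofRealCLM.comp (innerSL ℝ v))) y := by
    simp_rw [real_inner_comm v]
    refine (Complex.ofRealCLM.hasFDerivAt.comp y ((innerSL ℝ v).hasFDerivAt.comp y
      ((hasFDerivAt_const x y).sub (hasFDerivAt_id y)))).congr_fderiv ?_
    ext w
    simp
  have hprod := ((hasFDerivAt_regKernel_sub (b + 2) h).mul hinner).const_mul (b : ℂ)
  rw [hfderiv.fderiv_eq]
  refine (congrArg (fun L => L v) hprod.fderiv).trans ?_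
  rw [show b + 2 + 2 = b + 4 by ring]
  simp [inner_sub_left]
  ring

variable [FiniteDimensional ℝ E]

theorem laplacian_regKernel_sub (b : ℝ) (h : 1 < ‖x - y‖) :
    Δ (fun y => regKernel b (x - y)) y =
      (b * (b + 2 - Module.finrank ℝ E) : ℝ) * regKernel (b + 2) (x - y) := by
  have hsq : ∑ j, ((inner ℝ (x - y) (stdOrthonormalBasis ℝ E j) : ℝ) : ℂ) ^ 2
      = ((‖x - y‖ ^ 2 : ℝ) : ℂ) := by
    rw [← (stdOrthonormalBasis ℝ E).sum_sq_inner_left (x - y)]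
    push_cast
    rfl
  have hlower : ((‖x - y‖ ^ 2 : ℝ) : ℂ) * regKernel (b + 4) (x - y) =
      regKernel (b + 2) (x - y) := by
    have hone : ‖x - y‖ ^ 2 * ‖x - y‖ ^ (-2 : ℝ) = 1 := by
      rw [← Real.rpow_natCast, ← Real.rpow_add (by linarith)]
      norm_num
    rw [show b + 4 = 2 + (b + 2) by ring, ← regKernel_mul_regKernel, ← mul_assoc,
      regKernel_of_one_le h.le (b := 2), ← Complex.ofReal_mul, hone, Complex.ofReal_one, one_mul]
  rw [laplacian_eq_sum_fderiv_fderiv (g := fun y => regKernel b (x - y))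
    ((contDiff_regKernel b).comp (contDiff_const.sub contDiff_id))]
  simp_rw [fderiv_fderiv_regKernel_sub b h]
  rw [Finset.sum_sub_distrib, ← Finset.sum_mul, ← Finset.mul_sum, hsq, mul_assoc, hlower]
  simp
  ring

variable [MeasurableSpace E] [BorelSpace E] {V : E → ℂ}

theorem potential_laplacian (hV : ContDiff ℝ ∞ V) (hc : HasCompactSupport V)
    (hfar : tsupport V ⊆ (closedBall 0 4)ᶜ) (hx : x ∈ ball (0 : E) 3) :
    potential b (Δ V) x =
      (b * (b + 2 - Module.finrank ℝ E) : ℝ) * potential (b + 2) V x := by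
  rw [potential, potential, ← integral_const_mul]
  simp_rw [smul_eq_mul]
  rw [integral_laplacian_mul (g := fun y => regKernel b (x - y)) hV hc
    ((contDiff_regKernel b).comp (contDiff_const.sub contDiff_id))]
  congr 1
  ext y
  by_cases hy : y ∈ tsupport V
  · have hy4 : 4 < ‖y‖ := by simpa using hfar hy
    have hx3 : ‖x‖ < 3 := by simpa using hx
    have hxy : 1 < ‖x - y‖ := by linarith [norm_sub_norm_le y x, norm_sub_rev x y]
    rw [laplacian_regKernel_sub b hxy]
    ring
  · rw [image_eq_zero_of_notMem_tsupport hy]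
    ring

theorem exists_potential_eq_potential_add (hb : Module.finrank ℝ E < b) (N : ℕ)
    (hV : ContDiff ℝ ∞ V) (hc : HasCompactSupport V) (hfar : tsupport V ⊆ (closedBall 0 4)ᶜ) :
    ∃ W : E → ℂ, ContDiff ℝ ∞ W ∧ HasCompactSupport W ∧ tsupport W ⊆ (closedBall 0 4)ᶜ ∧
      ∀ x ∈ ball (0 : E) 3, potential b W x = potential (b + 2 * N) V x := by
  induction N generalizing V with
  | zero => exact ⟨V, hV, hc, hfar, fun x _ => by simp⟩
  | succ N ih =>
    set d := b + 2 * N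
    set z : ℂ := ((d * (d + 2 - Module.finrank ℝ E) : ℝ) : ℂ) with hz
    have hz₀ : z ≠ 0 := by
      have hn : (0 : ℝ) ≤ Module.finrank ℝ E := Nat.cast_nonneg _
      have hN : (0 : ℝ) ≤ 2 * N := by positivity
      rw [hz, Complex.ofReal_ne_zero]
      exact mul_ne_zero (by linarith) (by linarith)
    have hsub : tsupport (fun y => z⁻¹ * Δ V y) ⊆ tsupport V :=
      tsupport_mul_subset_right.trans (tsupport_laplacian_subset V)
    obtain ⟨W, hW, hWc, hWfar, hWpot⟩ := ih (V := fun y => z⁻¹ * Δ V y)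
      (contDiff_const.mul (contDiff_laplacian hV))
      (hc.of_isClosed_subset (isClosed_tsupport _) hsub) (hsub.trans hfar)
    refine ⟨W, hW, hWc, hWfar, fun x hx => ?_⟩
    rw [hWpot x hx, potential_const_mul, potential_laplacian hV hc hfar hx, ← mul_assoc,
      inv_mul_cancel₀ hz₀, one_mul]
    congr 1
    push_cast
    ring

end FarPotentials

/-! ### Approximation of plane waves by potentials of far densities -/

section FarDensity

variable {E : Type*} [NormedAddCommGroup E]

/-- A continuous compactly supported density vanishing on the closed ball of radius `4`; its
potential is an exterior contribution to the fractional Laplacian on `ball 0 1`. -/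
structure IsFarDensity (V : E → ℂ) : Prop where
  continuous : Continuous V
  hasCompactSupport : HasCompactSupport V
  eq_zero : ∀ y ∈ closedBall 0 4, V y = 0

namespace IsFarDensity

variable {V W : E → ℂ}

theorem const_mul (hV : IsFarDensity V) (z : ℂ) : IsFarDensity fun y => z * V y :=
  ⟨continuous_const.mul hV.continuous, hV.hasCompactSupport.mul_left,
    fun y hy => by rw [hV.eq_zero y hy, mul_zero]⟩

theorem add (hV : IsFarDensity V) (hW : IsFarDensity W) : IsFarDensity fun y => V y + W y :=
  ⟨hV.continuous.add hW.continuous, hV.hasCompactSupport.add hW.hasCompactSupport,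
    fun y hy => by rw [hV.eq_zero y hy, hW.eq_zero y hy, add_zero]⟩

end IsFarDensity

end FarDensity

section RescaledKernel

variable {E : Type*} [NormedAddCommGroup E] [InnerProductSpace ℝ E] {a σ : ℝ} {e x : E} {ε : ℝ}

/-- `ε ^ 2 * ‖x - ε⁻¹ • e‖ ^ 2` for a unit vector `e`, written as a function of `(ε, x)` which is
smooth at `ε = 0`. -/
noncomputable def rescaledNormSq (e : E) (p : ℝ × E) : ℝ :=
  1 - 2 * p.1 * inner ℝ p.2 e + p.1 ^ 2 * ‖p.2‖ ^ 2

/-- A multiple of `‖x - ε⁻¹ • e‖ ^ (-a) * exp (i σ ε⁻³ ‖x - ε⁻¹ • e‖⁻²)`, normalised to be a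
function of `(ε, x)` which is smooth at `ε = 0`, where it is the plane wave `exp (2 i σ ⟪x, e⟫)`. -/
noncomputable def rescaledKernel (a σ : ℝ) (e : E) (p : ℝ × E) : ℂ :=
  ((rescaledNormSq e p ^ (-a / 2) : ℝ) : ℂ) * Complex.exp
    ((σ * ((2 * inner ℝ p.2 e - p.1 * ‖p.2‖ ^ 2) / rescaledNormSq e p) : ℝ) * Complex.I)

theorem rescaledNormSq_eq (hε : ε ≠ 0) (he : ‖e‖ = 1) (x : E) :
    rescaledNormSq e (ε, x) = ε ^ 2 * ‖x - ε⁻¹ • e‖ ^ 2 := by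
  rw [rescaledNormSq, norm_sub_sq_real, inner_smul_right, norm_smul, he, mul_one, norm_inv,
    Real.norm_eq_abs, inv_pow, sq_abs]
  field_simp
  ring

theorem rescaledKernel_zero (a σ : ℝ) (e x : E) :
    rescaledKernel a σ e (0, x) = Complex.exp ((σ * (2 * inner ℝ x e) : ℝ) * Complex.I) := by
  simp [rescaledKernel, rescaledNormSq]

theorem contDiffAt_rescaledKernel (a σ : ℝ) (e x : E) {M : ℕ} :
    ContDiffAt ℝ M (rescaledKernel a σ e) (0, x) := by
  have hinner : ContDiff ℝ M fun p : ℝ × E => inner ℝ p.2 e := contDiff_snd.inner ℝ contDiff_const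
  have hsq : ContDiff ℝ M fun p : ℝ × E => ‖p.2‖ ^ 2 := contDiff_snd.norm_sq ℝ
  have hnum : ContDiff ℝ M fun p : ℝ × E => 2 * inner ℝ p.2 e - p.1 * ‖p.2‖ ^ 2 :=
    (contDiff_const.mul hinner).sub (contDiff_fst.mul hsq)
  have hden : ContDiffAt ℝ M (rescaledNormSq e) (0, x) :=
    ((contDiff_const.sub ((contDiff_const.mul contDiff_fst).mul hinner)).add
      ((contDiff_fst.pow 2).mul hsq)).contDiffAt
  have hden₀ : rescaledNormSq e (0, x) ≠ 0 := by simp [rescaledNormSq]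
  refine (Complex.ofRealCLM.contDiff.contDiffAt.comp _ (hden.rpow_const_of_ne hden₀)).mul
    (ContDiffAt.cexp (ContDiffAt.mul ?_ contDiffAt_const))
  exact Complex.ofRealCLM.contDiff.contDiffAt.comp _
    (contDiffAt_const.mul (hnum.contDiffAt.div hden hden₀))

theorem rescaledKernel_eq_regKernel_mul_exp (hε : 0 < ε) (he : ‖e‖ = 1)
    (hx : 1 ≤ ‖x - ε⁻¹ • e‖) :
    rescaledKernel a σ e (ε, x) =
      ((ε ^ 2) ^ (-a / 2) : ℝ) * Complex.exp (-((σ / ε : ℝ) * Complex.I)) *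
        (regKernel a (x - ε⁻¹ • e) *
          Complex.exp ((σ / ε ^ 3 : ℝ) * Complex.I * regKernel 2 (x - ε⁻¹ • e))) := by
  have hD := rescaledNormSq_eq hε.ne' he x
  have hpos : 0 < ‖x - ε⁻¹ • e‖ := one_pos.trans_le hx
  have hD₀ : rescaledNormSq e (ε, x) ≠ 0 := by rw [hD]; positivity
  have hpow : ((rescaledNormSq e (ε, x) ^ (-a / 2) : ℝ) : ℂ) =
      ((ε ^ 2) ^ (-a / 2) : ℝ) * regKernel a (x - ε⁻¹ • e) := by
    rw [hD, Real.mul_rpow (by positivity) (by positivity), regKernel,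
      regId_of_one_le (by nlinarith), Complex.ofReal_mul]
  have hkernel : regKernel 2 (x - ε⁻¹ • e) = ((ε ^ 2 / rescaledNormSq e (ε, x) : ℝ) : ℂ) := by
    rw [regKernel_of_one_le hx, hD, Real.rpow_neg (norm_nonneg _)]
    congr 1
    norm_cast
    field_simp
  have hphase : σ * ((2 * inner ℝ x e - ε * ‖x‖ ^ 2) / rescaledNormSq e (ε, x)) =
      -(σ / ε) + σ / ε ^ 3 * (ε ^ 2 / rescaledNormSq e (ε, x)) := by
    have hnum : 2 * inner ℝ x e - ε * ‖x‖ ^ 2 = (1 - rescaledNormSq e (ε, x)) / ε := by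
      rw [rescaledNormSq]
      field_simp
      ring
    rw [hnum]
    field_simp
    ring
  rw [rescaledKernel, hpow, hphase, hkernel, mul_mul_mul_comm, ← Complex.exp_add]
  congr 2
  push_cast
  ring

end RescaledKernel

section FarApproximation

variable {E : Type*} [NormedAddCommGroup E] [InnerProductSpace ℝ E] {a b : ℝ} {y : E}

theorem contDiff_regKernel_sub (b : ℝ) (y : E) {N : ℕ∞} :
    ContDiff ℝ N fun x => regKernel b (x - y) :=
  (contDiff_regKernel b).comp (contDiff_id.sub contDiff_const)

variable [FiniteDimensional ℝ E]

theorem exists_ckNormLE_regKernel (E : Type*) [NormedAddCommGroup E] [InnerProductSpace ℝ E]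
    [FiniteDimensional ℝ E] (hb : 0 ≤ b) (M : ℕ) :
    ∃ C : ℝ, 0 ≤ C ∧ CkNormLE M univ (regKernel b : E → ℂ) C := by
  obtain ⟨C, hC₀, hC⟩ := exists_norm_iteratedFDeriv_regKernel_le (E := E) hb M
  refine ⟨C, hC₀, fun i hi z _ => (hC i hi z).trans (mul_le_of_le_one_right hC₀ ?_)⟩
  exact Real.rpow_le_one_of_one_le_of_nonpos (by linarith [norm_nonneg z]) (by linarith)

variable [MeasurableSpace E] [BorelSpace E]

theorem ckNormLE_regKernel_sub_potential_normed (hb : Module.finrank ℝ E < b) {M : ℕ} {C : ℝ}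
    (hC₀ : 0 ≤ C) (hC : CkNormLE (M + 1) univ (regKernel b : E → ℂ) C) (φ : ContDiffBump y) :
    CkNormLE M univ
      (fun x => regKernel b (x - y) - potential b (fun z => (φ.normed volume z : ℂ)) x)
      (C * φ.rOut) := fun i hi x _ => by
  set ψ : E → ℂ := fun z => (φ.normed volume z : ℂ) with hψ
  have hψc : Continuous ψ := Complex.continuous_ofReal.comp φ.continuous_normed
  have hψcs : HasCompactSupport ψ := φ.hasCompactSupport_normed.comp_left Complex.ofReal_zero
  have hψ_one : ∫ z, ψ z = 1 := by simp [hψ, integral_complex_ofReal, φ.integral_normed]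
  obtain ⟨c, hc⟩ := hψcs.exists_bound_of_continuous hψc
  have hmean : iteratedFDeriv ℝ i (regKernel b) (x - y) =
      ∫ z, ψ z • iteratedFDeriv ℝ i (regKernel b) (x - y) := by
    rw [integral_smul_const, hψ_one, one_smul]
  rw [fun_iteratedFDeriv_sub_apply (contDiff_regKernel_sub b y (N := i)).contDiffAt
    (contDiff_potential hb hψc hc).contDiffAt, iteratedFDeriv_comp_sub,
    iteratedFDeriv_potential hb hψc hc, hmean,
    ← integral_sub ((hψc.integrable_of_hasCompactSupport hψcs).smul_const _)
      (integrable_smul_iteratedFDeriv_regKernel_sub hb hψc hc i x)]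
  calc _ ≤ ∫ z, φ.normed volume z * (C * φ.rOut) := by
        refine norm_integral_le_of_norm_le (φ.integrable_normed.mul_const _)
          (Eventually.of_forall fun z => ?_)
        rw [← smul_sub, norm_smul, Complex.norm_real, Real.norm_of_nonneg (φ.nonneg_normed z)]
        by_cases hz : z ∈ tsupport (φ.normed volume)
        · have hzy : ‖z - y‖ ≤ φ.rOut := by
            simpa [φ.tsupport_normed_eq, dist_eq_norm] using hz
          refine mul_le_mul_of_nonneg_left ?_ (φ.nonneg_normed z)
          refine (hC.norm_iteratedFDeriv_sub_le (contDiff_regKernel b (N := M + 1)) hi _ _).trans ?_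
          rw [sub_sub_sub_cancel_left]
          exact mul_le_mul_of_nonneg_left hzy hC₀
        · simp [image_eq_zero_of_notMem_tsupport hz]
    _ = C * φ.rOut := by rw [integral_mul_const, φ.integral_normed, one_mul]

theorem exists_ckNormLE_regKernel_sub_potential (hb : Module.finrank ℝ E < b) (M : ℕ)
    (hy : 6 ≤ ‖y‖) {δ : ℝ} (hδ : 0 < δ) :
    ∃ V : E → ℂ, ContDiff ℝ ∞ V ∧ HasCompactSupport V ∧ tsupport V ⊆ (closedBall 0 4)ᶜ ∧
      CkNormLE M univ (fun x => regKernel b (x - y) - potential b V x) δ := by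
  obtain ⟨C, hC₀, hC⟩ :=
    exists_ckNormLE_regKernel E (b := b) ((Nat.cast_nonneg _).trans hb.le) (M + 1)
  have hr : 0 < min 1 (δ / (C + 1)) := lt_min one_pos (by positivity)
  let φ : ContDiffBump y := ⟨_, _, half_pos hr, half_lt_self hr⟩
  have hsupp : tsupport (fun z => (φ.normed volume z : ℂ)) ⊆ closedBall y φ.rOut := by
    rw [← φ.tsupport_normed_eq (μ := volume)]
    exact closure_mono fun z => by simp
  refine ⟨_, Complex.ofRealCLM.contDiff.comp φ.contDiff_normed,
    φ.hasCompactSupport_normed.comp_left Complex.ofReal_zero, fun z hz => ?_,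
    (ckNormLE_regKernel_sub_potential_normed hb hC₀ hC φ).mono subset_rfl ?_⟩
  · have hzy : ‖z - y‖ ≤ φ.rOut := by simpa [dist_eq_norm] using hsupp hz
    have hr₁ : φ.rOut ≤ 1 := min_le_left _ _
    simp only [mem_compl_iff, mem_closedBall, dist_zero_right, not_le]
    linarith [norm_sub_norm_le y z, norm_sub_rev y z]
  · calc C * φ.rOut ≤ (C + 1) * (δ / (C + 1)) :=
          mul_le_mul (by linarith) (min_le_right _ _) hr.le (by linarith)
      _ = δ := by field_simp

namespace IsFarDensity

variable {V : E → ℂ}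

theorem contDiff_potential (hV : IsFarDensity V) (hb : Module.finrank ℝ E < b) {N : ℕ} :
    ContDiff ℝ N (potential b V) := by
  obtain ⟨c, hc⟩ := hV.hasCompactSupport.exists_bound_of_continuous hV.continuous
  exact _root_.contDiff_potential hb hV.continuous hc

end IsFarDensity

/-- `FarApprox a M h`: on the closed ball of radius `2`, `h` is a limit in `C^M` of potentials of
far densities. -/
def FarApprox (a : ℝ) (M : ℕ) (h : E → ℂ) : Prop :=
  (∀ x ∈ closedBall 0 2, ContDiffAt ℝ M h x) ∧
    ∀ δ > 0, ∃ V, IsFarDensity V ∧ CkNormLE M (closedBall 0 2) (fun x => h x - potential a V x) δ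

namespace FarApprox

variable {M : ℕ} {h h' : E → ℂ}

theorem of_approx (ha : Module.finrank ℝ E < a) (hh : ∀ x ∈ closedBall 0 2, ContDiffAt ℝ M h x)
    (H : ∀ δ > 0, ∃ h', FarApprox a M h' ∧ CkNormLE M (closedBall 0 2) (fun x => h x - h' x) δ) :
    FarApprox a M h := by
  refine ⟨hh, fun δ hδ => ?_⟩
  obtain ⟨h', ⟨hh', H'⟩, hclose⟩ := H (δ / 2) (half_pos hδ)
  obtain ⟨V, hV, hVclose⟩ := H' (δ / 2) (half_pos hδ)
  refine ⟨V, hV, ?_⟩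
  simpa only [add_halves] using
    hclose.sub_triangle hVclose hh hh' fun x _ => (hV.contDiff_potential ha).contDiffAt

theorem congr (H : FarApprox a M h) (heq : ∀ x ∈ ball 0 3, h x = h' x) : FarApprox a M h' := by
  have hev : ∀ x ∈ closedBall 0 2, h =ᶠ[𝓝 x] h' := fun x hx => by
    filter_upwards [isOpen_ball.mem_nhds (closedBall_subset_ball (by norm_num : (2 : ℝ) < 3) hx)]
      using heq
  refine ⟨fun x hx => (H.1 x hx).congr_of_eventuallyEq (hev x hx).symm, fun δ hδ => ?_⟩
  obtain ⟨V, hV, hclose⟩ := H.2 δ hδ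
  exact ⟨V, hV, hclose.congr fun x hx => (hev x hx).sub (EventuallyEq.refl _ _)⟩

theorem const_mul (ha : Module.finrank ℝ E < a) (H : FarApprox a M h) (z : ℂ) :
    FarApprox a M fun x => z * h x := by
  refine ⟨fun x hx => contDiffAt_const.mul (H.1 x hx), fun δ hδ => ?_⟩
  obtain ⟨V, hV, hclose⟩ := H.2 (δ / (‖z‖ + 1)) (by positivity)
  refine ⟨_, hV.const_mul z, ?_⟩
  simp_rw [potential_const_mul, ← mul_sub, ← smul_eq_mul]
  refine (hclose.const_smul z fun x hx => (H.1 x hx).sub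
    (hV.contDiff_potential ha).contDiffAt).mono subset_rfl ?_
  calc ‖z‖ * (δ / (‖z‖ + 1)) ≤ (‖z‖ + 1) * (δ / (‖z‖ + 1)) := by gcongr; linarith
    _ = δ := by field_simp

theorem add (ha : Module.finrank ℝ E < a) (H : FarApprox a M h) (H' : FarApprox a M h') :
    FarApprox a M fun x => h x + h' x := by
  refine ⟨fun x hx => (H.1 x hx).add (H'.1 x hx), fun δ hδ => ?_⟩
  obtain ⟨V, hV, hclose⟩ := H.2 (δ / 2) (half_pos hδ)
  obtain ⟨V', hV', hclose'⟩ := H'.2 (δ / 2) (half_pos hδ)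
  obtain ⟨c, hc⟩ := hV.hasCompactSupport.exists_bound_of_continuous hV.continuous
  obtain ⟨c', hc'⟩ := hV'.hasCompactSupport.exists_bound_of_continuous hV'.continuous
  refine ⟨_, hV.add hV', ?_⟩
  simp_rw [potential_add ha hV.continuous hc hV'.continuous hc', add_sub_add_comm]
  simpa only [add_halves] using hclose.add hclose'
    (fun x hx => (H.1 x hx).sub (hV.contDiff_potential ha).contDiffAt)
    fun x hx => (H'.1 x hx).sub (hV'.contDiff_potential ha).contDiffAt

theorem zero (a : ℝ) (M : ℕ) : FarApprox a M fun _ : E => (0 : ℂ) := by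
  refine ⟨fun x _ => contDiffAt_const, fun δ hδ => ⟨fun _ => 0,
    ⟨continuous_const, HasCompactSupport.zero, fun _ _ => rfl⟩, ?_⟩⟩
  have hzero : (fun x : E => 0 - potential a (fun _ : E => (0 : ℂ)) x) = fun _ => 0 := by
    ext x
    simp [potential]
  rw [hzero]
  exact (ckNormLE_const 0).mono subset_rfl (norm_zero.trans_le hδ.le)

theorem sum (ha : Module.finrank ℝ E < a) {h : ℕ → E → ℂ} (H : ∀ N, FarApprox a M (h N)) (m : ℕ) :
    FarApprox a M fun x => ∑ N ∈ Finset.range m, h N x := by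
  induction m with
  | zero => simpa using zero a M
  | succ m ih =>
    simp_rw [Finset.sum_range_succ]
    exact ih.add ha (H m)

theorem tsum (ha : Module.finrank ℝ E < a) {h : ℕ → E → ℂ} {u : ℕ → ℝ}
    (H : ∀ N, FarApprox a M (h N)) (hh : ∀ N, ContDiff ℝ M (h N)) (hu : Summable u)
    (hhu : ∀ N, CkNormLE M univ (h N) (u N)) : FarApprox a M fun x => ∑' N, h N x := by
  have hsmooth : ContDiff ℝ M fun x => ∑' N, h N x :=
    contDiff_tsum (v := fun _ => u) hh (fun _ _ => hu)
      fun i N x hi => hhu N i (by exact_mod_cast hi) x (mem_univ x)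
  refine of_approx ha (fun x _ => hsmooth.contDiffAt) fun δ hδ => ?_
  obtain ⟨m, hm⟩ := ((tendsto_sum_nat_add u).eventually (ge_mem_nhds hδ)).exists
  exact ⟨_, sum ha H m, (CkNormLE.tsum_sub_sum_range hh hu hhu m).mono (subset_univ _) hm⟩

end FarApprox

theorem farApprox_regKernel (ha : Module.finrank ℝ E < a) (M N : ℕ) (hy : 6 ≤ ‖y‖) :
    FarApprox a M fun x => regKernel (a + 2 * N) (x - y) := by
  refine ⟨fun x _ => (contDiff_regKernel_sub _ y).contDiffAt, fun δ hδ => ?_⟩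
  have haN : Module.finrank ℝ E < a + 2 * N := ha.trans_le (by linarith [N.cast_nonneg (α := ℝ)])
  obtain ⟨V, hV, hVc, hVfar, hclose⟩ := exists_ckNormLE_regKernel_sub_potential haN M hy hδ
  obtain ⟨W, hW, hWc, hWfar, hWV⟩ := exists_potential_eq_potential_add ha N hV hVc hVfar
  refine ⟨W, ⟨hW.continuous, hWc, fun z hz => image_eq_zero_of_notMem_tsupport
    fun hzW => hWfar hzW hz⟩, (hclose.mono (subset_univ _) le_rfl).congr fun x hx => ?_⟩
  filter_upwards [isOpen_ball.mem_nhds (closedBall_subset_ball (by norm_num : (2 : ℝ) < 3) hx)]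
    with z hz
  rw [hWV z hz]

theorem farApprox_regKernel_mul_exp (ha : Module.finrank ℝ E < a) (M : ℕ) (hy : 6 ≤ ‖y‖) (z : ℂ) :
    FarApprox a M fun x => regKernel a (x - y) * Complex.exp (z * regKernel 2 (x - y)) := by
  obtain ⟨B, hB₀, hB⟩ := exists_ckNormLE_regKernel E (b := a) ((Nat.cast_nonneg _).trans ha.le) M
  obtain ⟨A, hA₀, hA⟩ := exists_ckNormLE_regKernel E (b := 2) zero_le_two M
  set T : ℕ → E → ℂ := fun N x =>
    (z ^ N / N.factorial) • (regKernel a (x - y) * regKernel 2 (x - y) ^ N) with hT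
  have hpowd (N : ℕ) : ContDiff ℝ M fun x => regKernel 2 (x - y) ^ N :=
    (contDiff_regKernel_sub 2 y (N := M)).pow N
  have hmuld (N : ℕ) : ContDiff ℝ M fun x => regKernel a (x - y) * regKernel 2 (x - y) ^ N :=
    (contDiff_regKernel_sub a y).mul (hpowd N)
  have hTd (N : ℕ) : ContDiff ℝ M (T N) := (hmuld N).const_smul _
  have hTu (N : ℕ) :
      CkNormLE M univ (T N) (2 ^ M * B * ((‖z‖ * (2 ^ M * A)) ^ N / N.factorial)) := by
    have hpow := (hA.comp_sub_const y).pow hA₀ (contDiff_regKernel_sub 2 y) N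
    have hmul := (hB.comp_sub_const y).mul hB₀ hpow (contDiff_regKernel_sub a y) (hpowd N)
    refine (hmul.const_smul (z ^ N / N.factorial) fun x _ => (hmuld N).contDiffAt).mono
      subset_rfl (le_of_eq ?_)
    simp only [norm_div, norm_pow, Complex.norm_natCast, mul_pow]
    ring
  have hTfar (N : ℕ) : FarApprox a M (T N) := by
    simp only [hT, regKernel_pow, regKernel_mul_regKernel, smul_eq_mul, mul_comm (N : ℝ) 2]
    exact (farApprox_regKernel ha M N hy).const_mul ha _
  have hseries : (fun x => regKernel a (x - y) * Complex.exp (z * regKernel 2 (x - y))) =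
      fun x => ∑' N, T N x := by
    ext x
    rw [Complex.exp_eq_exp_ℂ, NormedSpace.exp_eq_tsum_div, ← tsum_mul_left]
    refine tsum_congr fun N => ?_
    simp only [hT, mul_pow, smul_eq_mul]
    ring
  rw [hseries]
  exact .tsum ha hTfar hTd ((Real.summable_pow_div_factorial _).mul_left _) hTu

theorem farApprox_rescaledKernel (ha : Module.finrank ℝ E < a) (M : ℕ) (σ : ℝ) {e : E}
    (he : ‖e‖ = 1) {ε : ℝ} (hε : ε ∈ Ioo 0 (1 / 6)) :
    FarApprox a M fun x => rescaledKernel a σ e (ε, x) := by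
  have hy : 6 ≤ ‖ε⁻¹ • e‖ := by
    rw [norm_smul, he, mul_one, norm_inv, Real.norm_of_nonneg hε.1.le,
      le_inv_comm₀ (by norm_num) hε.1]
    linarith [hε.2]
  refine ((farApprox_regKernel_mul_exp ha M hy ((σ / ε ^ 3 : ℝ) * Complex.I)).const_mul ha
    (((ε ^ 2) ^ (-a / 2) : ℝ) * Complex.exp (-((σ / ε : ℝ) * Complex.I)))).congr fun x hx => ?_
  have hx₃ : ‖x‖ < 3 := by simpa using hx
  refine (rescaledKernel_eq_regKernel_mul_exp hε.1 he ?_).symm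
  linarith [norm_sub_norm_le (ε⁻¹ • e) x, norm_sub_rev (ε⁻¹ • e) x]

theorem farApprox_exp_inner (ha : Module.finrank ℝ E < a) (M : ℕ) (σ : ℝ) {e : E} (he : ‖e‖ = 1) :
    FarApprox a M fun x : E => Complex.exp ((σ * (2 * inner ℝ x e) : ℝ) * Complex.I) := by
  simp_rw [← rescaledKernel_zero a σ e]
  refine .of_approx ha
    (fun x _ => contDiffAt_partial_right (contDiffAt_rescaledKernel a σ e x)) fun δ hδ => ?_
  have hclose := eventually_ckNormLE_partial_sub (isCompact_closedBall (0 : E) 2)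
    (fun x _ => contDiffAt_rescaledKernel a σ e x (M := M)) hδ
  obtain ⟨ε, hε, hε'⟩ := ((hclose.filter_mono (nhdsWithin_le_nhds (s := Ioi 0))).and
    (Ioo_mem_nhdsGT (by norm_num : (0 : ℝ) < 1 / 6))).exists
  exact ⟨_, farApprox_rescaledKernel ha M σ he hε', hε.sub_comm⟩

theorem farApprox_planeWave [Nontrivial E] (ha : Module.finrank ℝ E < a) (M : ℕ) (k : E) :
    FarApprox a M (planeWave k) := by
  by_cases hk : k = 0
  · obtain ⟨e, he⟩ := exists_norm_eq E zero_le_one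
    convert farApprox_exp_inner ha M 0 he using 1
    ext x
    simp [planeWave, hk]
  · have hk₀ : ‖k‖ ≠ 0 := norm_ne_zero_iff.2 hk
    convert farApprox_exp_inner ha M (Real.pi * ‖k‖) (norm_smul_inv_norm (𝕜 := ℝ) hk) using 1
    ext x
    rw [planeWave, inner_smul_right, real_inner_comm]
    congr 3
    simp only [Real.ringHom_apply]
    field_simp

end FarApproximation

/-! ### Eigenfunctions near plane waves -/

section PVAddition

variable {E : Type*} [NormedAddCommGroup E] [InnerProductSpace ℝ E] [FiniteDimensional ℝ E]
  [MeasurableSpace E] [BorelSpace E] {a c d : ℝ} {u v : E → ℂ}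

theorem integrableOn_norm_rpow_inv_smul_sub (ha : Module.finrank ℝ E < a) (hu : Continuous u)
    (hc : ∀ y, ‖u y‖ ≤ c) (x : E) {ρ : ℝ} (hρ : 0 < ρ) :
    IntegrableOn (fun y => (‖y‖ ^ a)⁻¹ • (u x - u (x + y))) {y | ρ ≤ ‖y‖} :=
  (integrableOn_norm_rpow_inv ha hρ).smul_bdd (c + c)
    (by fun_prop : Continuous fun y => u x - u (x + y)).aestronglyMeasurable
    (Eventually.of_forall fun _ => norm_sub_le_of_le (hc _) (hc _))

theorem HasPVFracLap.add (ha : Module.finrank ℝ E < a) (hu : Continuous u) (hc : ∀ y, ‖u y‖ ≤ c)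
    (hv : Continuous v) (hd : ∀ y, ‖v y‖ ≤ d) {x : E} {L L' : ℂ} (h : HasPVFracLap a u x L)
    (h' : HasPVFracLap a v x L') : HasPVFracLap a (fun y => u y + v y) x (L + L') := by
  refine (Tendsto.add h h').congr' ?_
  filter_upwards [self_mem_nhdsWithin] with ρ hρ
  rw [← integral_add (integrableOn_norm_rpow_inv_smul_sub ha hu hc x hρ)
    (integrableOn_norm_rpow_inv_smul_sub ha hv hd x hρ)]
  congr 1 with y
  rw [← smul_add, add_sub_add_comm]

end PVAddition

section LocalResolvent

variable {E : Type*} [NormedAddCommGroup E] [InnerProductSpace ℝ E] [FiniteDimensional ℝ E]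

/-- A smooth bump function equal to `1` on `closedBall 0 1` and supported in `closedBall 0 2`. -/
def unitBump (E : Type*) [NormedAddCommGroup E] : ContDiffBump (0 : E) :=
  ⟨1, 2, one_pos, one_lt_two⟩

theorem contDiff_unitBump {N : ℕ∞} : ContDiff ℝ N fun x : E => (unitBump E x : ℂ) :=
  Complex.ofRealCLM.contDiff.comp (unitBump E).contDiff

theorem tsupport_unitBump_mul_subset (g : E → ℂ) :
    tsupport (fun x => (unitBump E x : ℂ) * g x) ⊆ closedBall 0 2 := by
  refine closure_minimal (fun x hx => ?_) isClosed_closedBall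
  refine ball_subset_closedBall ((unitBump E).support_eq ▸ ?_)
  exact Complex.ofReal_ne_zero.1 (left_ne_zero_of_mul hx)

theorem hasCompactSupport_unitBump_mul (g : E → ℂ) :
    HasCompactSupport fun x => (unitBump E x : ℂ) * g x :=
  (isCompact_closedBall 0 2).of_isClosed_subset (isClosed_tsupport _)
    (tsupport_unitBump_mul_subset g)

variable [MeasurableSpace E] [BorelSpace E] {a τ δ : ℝ} {g h : E → ℂ}

/-- The resolvent of the principal value operator applied to `g` cut off outside `closedBall 0 1`:
a right inverse of the operator plus `τ * I` on the unit ball. -/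
noncomputable def localResolvent (a τ : ℝ) (g : E → ℂ) : E → ℂ :=
  pvResolvent a τ fun x => unitBump E x * g x

theorem contDiff_localResolvent (hτ : τ ≠ 0) (hg : ContDiff ℝ ∞ g) :
    ContDiff ℝ ∞ (localResolvent a τ g) :=
  contDiff_pvResolvent hτ (contDiff_unitBump.mul hg) (hasCompactSupport_unitBump_mul g)

theorem localResolvent_sub (hτ : τ ≠ 0) (hg : ContDiff ℝ ∞ g) (hh : ContDiff ℝ ∞ h) (x : E) :
    localResolvent a τ (fun y => g y - h y) x
      = localResolvent a τ g x - localResolvent a τ h x := by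
  simp only [localResolvent, mul_sub]
  exact pvResolvent_sub hτ (contDiff_unitBump.mul hg) (hasCompactSupport_unitBump_mul g)
    (contDiff_unitBump.mul hh) (hasCompactSupport_unitBump_mul h) x

theorem hasPVFracLap_localResolvent [Nontrivial E]
    (ha : a ∈ Ioo (Module.finrank ℝ E : ℝ) (Module.finrank ℝ E + 2)) (hτ : τ ≠ 0)
    (hg : ContDiff ℝ ∞ g) {x : E} (hx : x ∈ closedBall (0 : E) 1) :
    HasPVFracLap a (localResolvent a τ g) x (g x - τ * Complex.I * localResolvent a τ g x) := by
  have hPV := hasPVFracLap_pvResolvent hτ (contDiff_unitBump.mul hg)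
    (hasCompactSupport_unitBump_mul g) ha x
  rwa [(unitBump E).one_of_mem_closedBall hx, Complex.ofReal_one, one_mul] at hPV

theorem exists_ckNormLE_localResolvent (a : ℝ) (hτ : τ ≠ 0) (k : ℕ) :
    ∃ (C : ℝ) (M : ℕ), 0 ≤ C ∧ ∀ (g : E → ℂ) (δ : ℝ), 0 ≤ δ → ContDiff ℝ ∞ g →
      CkNormLE M (closedBall 0 2) g δ → CkNormLE k univ (localResolvent a τ g) (C * δ) := by
  obtain ⟨C, M, hC, hres⟩ := exists_ckNormLE_pvResolvent (E := E) hτ a 2 k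
  obtain ⟨B, hB, hbump⟩ := exists_ckNormLE_of_isCompact (k := M) (isCompact_closedBall (0 : E) 2)
    (contDiff_unitBump (N := M))
  refine ⟨C * (2 ^ M * B), M, by positivity, fun g δ hδ hg hgδ => ?_⟩
  have hmul : CkNormLE M (closedBall 0 2) (fun x => (unitBump E x : ℂ) * g x) (2 ^ M * B * δ) :=
    hbump.mul hB hgδ contDiff_unitBump (hg.of_le (mod_cast le_top))
  rw [mul_assoc]
  exact hres _ _ (contDiff_unitBump.mul hg) (tsupport_unitBump_mul_subset g)
    (hmul.univ_of_tsupport_subset (tsupport_unitBump_mul_subset g) (by positivity))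

theorem exists_localResolvent_small (a : ℝ) (hτ : τ ≠ 0) (k : ℕ) (hδ : 0 < δ) :
    ∃ δ₁ > 0, ∃ M : ℕ, ∀ (g : E → ℂ) (c : ℝ), 0 ≤ c → ContDiff ℝ ∞ g →
      CkNormLE M (closedBall 0 2) g (δ₁ * c) → CkNormLE k univ (localResolvent a τ g) (δ * c) := by
  obtain ⟨C, M, hC, hres⟩ := exists_ckNormLE_localResolvent (E := E) a hτ k
  refine ⟨δ / (C + 1), by positivity, M, fun g c hc hg hgc => ?_⟩
  refine (hres g _ (by positivity) hg hgc).mono subset_rfl ?_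
  have : C * (δ / (C + 1)) ≤ δ := by
    rw [mul_div_assoc', div_le_iff₀ (by positivity)]; nlinarith
  nlinarith

theorem exists_localResolvent_potential_small (ha : Module.finrank ℝ E < a) (hτ : τ ≠ 0) (k : ℕ)
    (hδ : 0 < δ) :
    ∃ R₀ : ℝ, ∀ R ≥ R₀, ∀ (V : E → ℂ) (c : ℝ), Continuous V → (∀ y, ‖V y‖ ≤ c) →
      (∀ y ∈ ball (0 : E) R, V y = 0) →
      CkNormLE k univ (localResolvent a τ (potential a V)) (δ * c) := by
  obtain ⟨δ₁, hδ₁, M, hres⟩ := exists_localResolvent_small (E := E) a hτ k hδ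
  obtain ⟨R₀, hR₀⟩ := exists_forall_ckNormLE_potential (E := E) ha M hδ₁
  exact ⟨R₀, fun R hR V c hV hc hV0 => hres _ c ((norm_nonneg _).trans (hc 0))
    (contDiff_potential ha hV hc) (hR₀ R hR V c hV hc hV0)⟩

end LocalResolvent

section FixedPoint

open scoped BoundedContinuousFunction

theorem exists_boundedContinuousFunction_eq {X F : Type*} [TopologicalSpace X]
    [NormedAddCommGroup F] [CompleteSpace F] {T : (X → F) → X → F} {r : ℝ} (hr₀ : 0 ≤ r)
    (hr₁ : r < 1) (hTc : ∀ f : X →ᵇ F, Continuous (T f))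
    (hTb : ∀ f : X →ᵇ F, ∃ c, ∀ x, ‖T f x‖ ≤ c)
    (hT : ∀ (f g : X →ᵇ F) x, ‖T f x - T g x‖ ≤ r * dist f g) : ∃ f : X →ᵇ F, T f = f := by
  choose c hc using hTb
  let S (f : X →ᵇ F) : X →ᵇ F := .ofNormedAddCommGroup (T f) (hTc f) (c f) (hc f)
  have hS : ContractingWith ⟨r, hr₀⟩ S := ⟨hr₁, .of_dist_le_mul fun f g =>
    (BoundedContinuousFunction.dist_le (by positivity)).2 fun x => by
      rw [dist_eq_norm]; exact hT f g x⟩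
  exact ⟨hS.fixedPoint, congrArg DFunLike.coe hS.fixedPoint_isFixedPt⟩

variable {X F : Type*} [NormedAddCommGroup X] [NormedSpace ℝ X] [NormedAddCommGroup F]
  [NormedSpace ℝ F] {k : ℕ} {δ : ℝ} {S : (X → F) → X → F} {w G : X → F}

/-- `S` maps bounded continuous functions additively to smooth functions, with norm at most `δ`
from the sup norm to the `C^k` norm. -/
structure IsSmoothingOperator (k : ℕ) (S : (X → F) → X → F) (δ : ℝ) : Prop where
  contDiff {f : X → F} {c : ℝ} (hf : Continuous f) (hc : ∀ y, ‖f y‖ ≤ c) : ContDiff ℝ ∞ (S f)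
  ckNormLE {f : X → F} {c : ℝ} (hf : Continuous f) (hc : ∀ y, ‖f y‖ ≤ c) :
    CkNormLE k univ (S f) (δ * c)
  map_sub {f g : X → F} {c d : ℝ} (hf : Continuous f) (hc : ∀ y, ‖f y‖ ≤ c) (hg : Continuous g)
    (hd : ∀ y, ‖g y‖ ≤ d) (x : X) : S (fun y => f y - g y) x = S f x - S g x

theorem IsSmoothingOperator.exists_eq_sub [CompleteSpace F] (hS : IsSmoothingOperator k S δ)
    (hδ₀ : 0 ≤ δ) (hδ₁ : δ ≤ 1 / 4) (hw : Continuous w) (hw₁ : ∀ y, ‖w y‖ ≤ 1)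
    (hG : ContDiff ℝ ∞ G) (hGδ : CkNormLE k univ G δ) :
    ∃ W : X → F, ContDiff ℝ ∞ W ∧ CkNormLE k univ W (3 * δ) ∧
      W = fun x => G x - S (fun y => w y + W y) x := by
  have hwb (f : X →ᵇ F) y : ‖w y + f y‖ ≤ 1 + ‖f‖ :=
    norm_add_le_of_le (hw₁ y) (f.norm_coe_le_norm y)
  have hwc (f : X →ᵇ F) : Continuous fun y => w y + f y := hw.add f.continuous
  have hTd (f : X →ᵇ F) : ContDiff ℝ ∞ fun x => G x - S (fun y => w y + f y) x :=
    hG.sub (hS.contDiff (hwc f) (hwb f))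
  have hTb (f : X →ᵇ F) :
      CkNormLE k univ (fun x => G x - S (fun y => w y + f y) x) (δ + δ * (1 + ‖f‖)) :=
    hGδ.sub (hS.ckNormLE (hwc f) (hwb f)) (fun _ _ => (hG.of_le (mod_cast le_top)).contDiffAt)
      fun _ _ => ((hS.contDiff (hwc f) (hwb f)).of_le (mod_cast le_top)).contDiffAt
  have hTl (f g : X →ᵇ F) x : ‖G x - S (fun y => w y + f y) x - (G x - S (fun y => w y + g y) x)‖
      ≤ δ * dist f g := by
    have hgf y : ‖(g - f) y‖ ≤ dist f g :=
      ((g - f).norm_coe_le_norm y).trans_eq (by rw [dist_comm, dist_eq_norm])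
    rw [sub_sub_sub_cancel_left, ← hS.map_sub (hwc g) (hwb g) (hwc f) (hwb f)]
    simp only [add_sub_add_left_eq_sub]
    exact (hS.ckNormLE (g - f).continuous hgf).norm_le (mem_univ x)
  obtain ⟨W, hW⟩ := exists_boundedContinuousFunction_eq
    (T := fun f x => G x - S (fun y => w y + f y) x) hδ₀ (by linarith)
    (fun f => (hTd f).continuous) (fun f => ⟨_, fun x => (hTb f).norm_le (mem_univ x)⟩) hTl
  have hW₁ : ‖W‖ ≤ 1 := by
    have hle : ‖W‖ ≤ δ + δ * (1 + ‖W‖) := (BoundedContinuousFunction.norm_le (by positivity)).2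
      fun x => congrFun hW x ▸ (hTb W).norm_le (mem_univ x)
    nlinarith [norm_nonneg W]
  refine ⟨W, hW ▸ hTd W, hW ▸ (hTb W).mono subset_rfl ?_, hW.symm⟩
  nlinarith

end FixedPoint

section NearPlaneWave

variable {E : Type*} [NormedAddCommGroup E] [InnerProductSpace ℝ E] [FiniteDimensional ℝ E]

theorem exists_cutoff_eq_one_on_ball {R : ℝ} (hR : 0 < R) :
    ∃ χ : E → ℂ, Continuous χ ∧ HasCompactSupport χ ∧ (∀ y, ‖1 - χ y‖ ≤ 1) ∧
      ∀ y ∈ ball (0 : E) R, χ y = 1 := by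
  let χ : ContDiffBump (0 : E) := ⟨R, R + 1, hR, lt_add_one R⟩
  refine ⟨fun y => χ y, Complex.continuous_ofReal.comp χ.continuous,
    χ.hasCompactSupport.comp_left Complex.ofReal_zero, fun y => ?_, fun y hy => ?_⟩
  · rw [← Complex.ofReal_one, ← Complex.ofReal_sub,
      Complex.norm_of_nonneg (sub_nonneg.2 χ.le_one)]
    exact sub_le_self 1 χ.nonneg
  · simp only [χ.one_of_mem_closedBall (ball_subset_closedBall hy), Complex.ofReal_one]

variable [MeasurableSpace E] [BorelSpace E] {a τ δ : ℝ}

theorem exists_isSmoothingOperator_localResolvent_potential (ha : Module.finrank ℝ E < a)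
    (hτ : τ ≠ 0) (k : ℕ) (hδ : 0 < δ) :
    ∃ R₀ : ℝ, ∀ R ≥ R₀, ∀ η : E → ℂ, Continuous η → (∀ y, ‖η y‖ ≤ 1) →
      (∀ y ∈ ball (0 : E) R, η y = 0) →
      IsSmoothingOperator k (fun f => localResolvent a τ (potential a fun y => η y * f y)) δ := by
  obtain ⟨R₀, hR₀⟩ := exists_localResolvent_potential_small (E := E) ha hτ k hδ
  refine ⟨R₀, fun R hR η hη hη₁ hη₀ => ?_⟩
  have hηf {f : E → ℂ} {c : ℝ} (hc : ∀ y, ‖f y‖ ≤ c) y : ‖η y * f y‖ ≤ c :=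
    (norm_mul_le_of_le (hη₁ y) (hc y)).trans_eq (one_mul c)
  have hpot {f : E → ℂ} {c : ℝ} (hf : Continuous f) (hc : ∀ y, ‖f y‖ ≤ c) :
      ContDiff ℝ ∞ (potential a fun y => η y * f y) :=
    contDiff_potential ha (hη.mul hf) (hηf hc)
  refine ⟨fun hf hc => contDiff_localResolvent hτ (hpot hf hc),
    fun hf hc => hR₀ R hR _ _ (hη.mul hf) (hηf hc) fun y hy => by rw [hη₀ y hy, zero_mul],
    fun hf hc hg hd x => ?_⟩
  rw [← localResolvent_sub hτ (hpot hf hc) (hpot hg hd)]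
  congr 1 with y
  simp only [mul_sub]
  exact potential_sub ha (hη.mul hf) (hηf hc) (hη.mul hg) (hηf hd) y

theorem localResolvent_potential_sub_sub (ha : Module.finrank ℝ E < a) (hτ : τ ≠ 0)
    {V Q h : E → ℂ} {c d : ℝ} (hV : Continuous V) (hc : ∀ y, ‖V y‖ ≤ c) (hQ : Continuous Q)
    (hd : ∀ y, ‖Q y‖ ≤ d) (hh : ContDiff ℝ ∞ h) (x : E) :
    localResolvent a τ (fun y => potential a V y - h y) x - localResolvent a τ (potential a Q) x
      = localResolvent a τ (fun y => potential a (fun t => V t - Q t) y - h y) x := by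
  rw [← localResolvent_sub hτ ((contDiff_potential ha hV hc).sub hh) (contDiff_potential ha hQ hd)]
  congr 1 with y
  rw [potential_sub ha hV hc hQ hd, sub_right_comm]

variable [Nontrivial E] (ha : a ∈ Ioo (Module.finrank ℝ E : ℝ) (Module.finrank ℝ E + 2))
  (hτ : τ ≠ 0) (κ : E)

include ha hτ in
theorem hasPVFracLap_planeWave_add_localResolvent {W Θ : E → ℂ} {c d : ℝ} (hW : Continuous W)
    (hc : ∀ y, ‖W y‖ ≤ c) (hΘ : Continuous Θ) (hd : ∀ y, ‖Θ y‖ ≤ d)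
    (hΘ₀ : ∀ y ∈ ball (0 : E) 4, Θ y = 0)
    (hWΘ : W = localResolvent a τ fun x =>
      potential a Θ x - (symbol a κ + τ * Complex.I) * planeWave κ x)
    {x : E} (hx : x ∈ ball (0 : E) 1) :
    HasPVFracLap a (fun y => planeWave κ y + W y + Θ y) x
      (-(τ * Complex.I * (planeWave κ x + W x))) := by
  have hw := contDiff_planeWave (E := E) (N := ∞) κ
  have hw₁ y : ‖planeWave κ y‖ ≤ 1 := (norm_planeWave κ y).le
  have hPVW := hasPVFracLap_localResolvent ha hτ ((contDiff_potential ha.1 hΘ hd).sub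
    (contDiff_const (c := (symbol a κ + τ * Complex.I : ℂ)).mul hw)) (ball_subset_closedBall hx)
  rw [← hWΘ] at hPVW
  have hPV := ((hasPVFracLap_planeWave ha κ x).add ha.1 hw.continuous hw₁ hW hc hPVW).add ha.1
    (hw.continuous.fun_add hW) (fun y => norm_add_le_of_le (hw₁ y) (hc y)) hΘ hd
    (hasPVFracLap_of_eq_zero_ball hΘ₀ hx)
  convert hPV using 1
  ring

include ha hτ in
theorem hasPVFracLap_cutoff_mul_planeWave_add {V W χ : E → ℂ} {c : ℝ} (hV : IsFarDensity V)
    (hW : Continuous W) (hc : ∀ y, ‖W y‖ ≤ c) (hχ : Continuous χ) (hχ₁ : ∀ y, ‖1 - χ y‖ ≤ 1)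
    (hχ₄ : ∀ y ∈ ball (0 : E) 4, χ y = 1)
    (hWχ : W = fun x => localResolvent a τ
        (fun y => potential a V y - (symbol a κ + τ * Complex.I) * planeWave κ y) x
      - localResolvent a τ (potential a fun y => (1 - χ y) * (planeWave κ y + W y)) x)
    {x : E} (hx : x ∈ ball (0 : E) 1) :
    HasPVFracLap a (fun y => χ y * (planeWave κ y + W y) + V y) x
      (-(τ * Complex.I * (planeWave κ x + W x))) := by
  set Q : E → ℂ := fun y => (1 - χ y) * (planeWave κ y + W y) with hQ_def
  have hw := contDiff_planeWave (E := E) (N := ∞) κ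
  have hQ : Continuous Q := (continuous_const.sub hχ).mul (hw.continuous.add hW)
  have hQ₁ y : ‖Q y‖ ≤ 1 * (1 + c) :=
    norm_mul_le_of_le (hχ₁ y) (norm_add_le_of_le (norm_planeWave κ y).le (hc y))
  obtain ⟨d, hd⟩ := hV.hasCompactSupport.exists_bound_of_continuous hV.continuous
  have hΘ₀ : ∀ y ∈ ball (0 : E) 4, V y - Q y = 0 := fun y hy => by
    simp only [hV.eq_zero y (ball_subset_closedBall hy), hQ_def, hχ₄ y hy, sub_self, zero_mul]
  have hφ : (fun y => χ y * (planeWave κ y + W y) + V y)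
      = fun y => planeWave κ y + W y + (V y - Q y) := by
    ext y; simp only [hQ_def]; ring
  rw [hφ]
  refine hasPVFracLap_planeWave_add_localResolvent ha hτ κ hW hc (hV.continuous.sub hQ)
    (fun y => norm_sub_le_of_le (hd y) (hQ₁ y)) hΘ₀ (hWχ.trans (funext fun x => ?_)) hx
  exact localResolvent_potential_sub_sub ha.1 hτ hV.continuous hd hQ hQ₁ (contDiff_const.mul hw) x

include ha hτ in
theorem exists_isFarDensity_ckNormLE_localResolvent (k : ℕ) (hδ : 0 < δ) :
    ∃ V : E → ℂ, IsFarDensity V ∧ CkNormLE k univ (localResolvent a τ fun x =>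
      potential a V x - (symbol a κ + τ * Complex.I) * planeWave κ x) δ := by
  obtain ⟨δ₁, hδ₁, M, hres⟩ := exists_localResolvent_small (E := E) a hτ k hδ
  have hfar := (farApprox_planeWave ha.1 M κ).const_mul ha.1 (symbol a κ + τ * Complex.I)
  obtain ⟨V, hV, hVδ⟩ := hfar.2 δ₁ hδ₁
  obtain ⟨c, hc⟩ := hV.hasCompactSupport.exists_bound_of_continuous hV.continuous
  refine ⟨V, hV, mul_one δ ▸ hres _ 1 zero_le_one ((contDiff_potential ha.1 hV.continuous hc).sub
    (contDiff_const.mul (contDiff_planeWave κ))) ?_⟩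
  rw [mul_one]
  exact hVδ.sub_comm

include ha hτ in
theorem exists_hasPVFracLap_near_planeWave (k : ℕ) (hδ : 0 < δ) :
    ∃ φ W : E → ℂ, Continuous φ ∧ HasCompactSupport φ ∧ ContDiff ℝ ∞ W ∧
      (∀ x ∈ ball (0 : E) 1, φ x = planeWave κ x + W x) ∧
      (∀ x ∈ ball (0 : E) 1, HasPVFracLap a φ x (-(τ * Complex.I * φ x))) ∧
      CkNormLE k univ W δ := by
  obtain ⟨δ', hδ', hδ'₁, hδ'₂⟩ : ∃ δ' > 0, δ' ≤ 1 / 4 ∧ 3 * δ' ≤ δ :=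
    ⟨min (1 / 4) (δ / 3), by positivity, min_le_left _ _,
      by linarith [min_le_right (1 / 4) (δ / 3)]⟩
  obtain ⟨V, hV, hVδ⟩ := exists_isFarDensity_ckNormLE_localResolvent ha hτ κ k hδ'
  obtain ⟨c, hc⟩ := hV.hasCompactSupport.exists_bound_of_continuous hV.continuous
  obtain ⟨R₀, hR₀⟩ :=
    exists_isSmoothingOperator_localResolvent_potential (E := E) ha.1 hτ k hδ'
  obtain ⟨χ, hχ, hχc, hχ₁, hχR⟩ :=
    exists_cutoff_eq_one_on_ball (E := E) (R := max R₀ 4) (lt_max_of_lt_right four_pos)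
  have hχ₄ : ∀ y ∈ ball (0 : E) 4, χ y = 1 := fun y hy =>
    hχR y (ball_subset_ball (le_max_right R₀ 4) hy)
  have hw := contDiff_planeWave (E := E) (N := ∞) κ
  have hS := hR₀ _ (le_max_left R₀ 4) (fun y => 1 - χ y) (continuous_const.sub hχ) hχ₁
    fun y hy => by rw [hχR y hy, sub_self]
  obtain ⟨W, hW, hWδ, hWχ⟩ := hS.exists_eq_sub hδ'.le hδ'₁ hw.continuous
    (fun y => (norm_planeWave κ y).le) (contDiff_localResolvent hτ
    ((contDiff_potential ha.1 hV.continuous hc).sub (contDiff_const.mul hw))) hVδ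
  have hφ₁ : ∀ y ∈ ball (0 : E) 1, χ y * (planeWave κ y + W y) + V y = planeWave κ y + W y :=
    fun y hy => by
      have hy₄ : y ∈ ball (0 : E) 4 := ball_subset_ball (by norm_num) hy
      rw [hχ₄ y hy₄, hV.eq_zero y (ball_subset_closedBall hy₄), one_mul, add_zero]
  refine ⟨fun y => χ y * (planeWave κ y + W y) + V y, W,
    (hχ.mul (hw.continuous.add hW.continuous)).add hV.continuous,
    hχc.mul_right.add hV.hasCompactSupport, hW, hφ₁, fun x hx => ?_, hWδ.mono subset_rfl hδ'₂⟩
  simp only [hφ₁ x hx]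
  exact hasPVFracLap_cutoff_mul_planeWave_add ha hτ κ hV hW.continuous
    (fun y => hWδ.norm_le (mem_univ y)) hχ hχ₁ hχ₄ hWχ hx

end NearPlaneWave

/-! ### Solutions near space-time plane waves -/

section Caloric

variable {E : Type*} [NormedAddCommGroup E] [InnerProductSpace ℝ E] [FiniteDimensional ℝ E]
  [MeasurableSpace E] [BorelSpace E]

theorem HasPVFracLap.const_mul {a : ℝ} {u : E → ℂ} {x : E} {L : ℂ} (h : HasPVFracLap a u x L)
    (z : ℂ) : HasPVFracLap a (fun y => z * u y) x (z * L) := by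
  refine (Tendsto.const_mul z h).congr fun ρ => ?_
  rw [← integral_const_mul]
  simp only [← mul_sub, mul_smul_comm]

/-- Compactly supported continuous functions on space-time which, in the unit cylinder, are smooth
and solve `∂ₜ U + c L U = 0`, where `L` is the principal value operator of `HasPVFracLap a`. -/
structure IsCaloric (a c : ℝ) (U : E × ℝ → ℂ) : Prop where
  continuous : Continuous U
  hasCompactSupport : HasCompactSupport U
  contDiffOn : ContDiffOn ℝ ∞ U (ball 0 1 ×ˢ Ioo (-1 : ℝ) 1)
  hasPVFracLap {x : E} (hx : x ∈ ball (0 : E) 1) {t : ℝ} (ht : t ∈ Ioo (-1 : ℝ) 1) :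
    HasPVFracLap a (fun y => U (y, t)) x (-((c⁻¹ : ℝ) * deriv (fun r => U (x, r)) t))

namespace IsCaloric

variable {a c : ℝ} {U U' : E × ℝ → ℂ}

theorem contDiffAt (h : IsCaloric a c U) {p : E × ℝ} (hp : p ∈ ball (0 : E) 1 ×ˢ Ioo (-1 : ℝ) 1) :
    ContDiffAt ℝ ∞ U p :=
  h.contDiffOn.contDiffAt ((isOpen_ball.prod isOpen_Ioo).mem_nhds hp)

theorem differentiableAt (h : IsCaloric a c U) {x : E} (hx : x ∈ ball (0 : E) 1) {t : ℝ}
    (ht : t ∈ Ioo (-1 : ℝ) 1) : DifferentiableAt ℝ (fun r => U (x, r)) t :=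
  ((h.contDiffAt (p := (x, t)) ⟨hx, ht⟩).differentiableAt (by decide)).comp t
    ((differentiableAt_const x).prodMk differentiableAt_id)

theorem const_mul (h : IsCaloric a c U) (z : ℂ) : IsCaloric a c fun p => z * U p where
  continuous := continuous_const.mul h.continuous
  hasCompactSupport := h.hasCompactSupport.mul_left
  contDiffOn := contDiffOn_const.mul h.contDiffOn
  hasPVFracLap hx _ ht := by
    rw [deriv_const_mul _ (h.differentiableAt hx ht)]
    convert (h.hasPVFracLap hx ht).const_mul z using 1
    ring

theorem add (ha : Module.finrank ℝ E < a)
    (h : IsCaloric a c U) (h' : IsCaloric a c U') : IsCaloric a c fun p => U p + U' p where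
  continuous := h.continuous.add h'.continuous
  hasCompactSupport := h.hasCompactSupport.add h'.hasCompactSupport
  contDiffOn := h.contDiffOn.add h'.contDiffOn
  hasPVFracLap hx t ht := by
    obtain ⟨b, hb⟩ := h.hasCompactSupport.exists_bound_of_continuous h.continuous
    obtain ⟨b', hb'⟩ := h'.hasCompactSupport.exists_bound_of_continuous h'.continuous
    have hslice : Continuous fun y : E => (y, t) := .prodMk_left t
    rw [deriv_fun_add (h.differentiableAt hx ht) (h'.differentiableAt hx ht), mul_add, neg_add]
    exact (h.hasPVFracLap hx ht).add ha (h.continuous.comp hslice) (fun y => hb (y, t))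
      (h'.continuous.comp hslice) (fun y => hb' (y, t)) (h'.hasPVFracLap hx ht)

theorem zero : IsCaloric a c fun _ : E × ℝ => 0 where
  continuous := continuous_const
  hasCompactSupport := HasCompactSupport.zero
  contDiffOn := contDiffOn_const
  hasPVFracLap _ _ _ := by simp [HasPVFracLap]

theorem mul_of_eigenfunction (hc : c ≠ 0) {φ : E → ℂ} {ψ : ℝ → ℂ} {μ : ℂ} (hφ : Continuous φ)
    (hφc : HasCompactSupport φ) (hφd : ContDiffOn ℝ ∞ φ (ball 0 1)) (hψ : ContDiff ℝ ∞ ψ)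
    (hψc : HasCompactSupport ψ)
    (hφμ : ∀ x ∈ ball (0 : E) 1, HasPVFracLap a φ x (-(μ * φ x)))
    (hψμ : ∀ t ∈ Ioo (-1 : ℝ) 1, HasDerivAt ψ (c * μ * ψ t) t) :
    IsCaloric a c fun p => ψ p.2 * φ p.1 where
  continuous := (hψ.continuous.comp continuous_snd).mul (hφ.comp continuous_fst)
  hasCompactSupport := by
    refine HasCompactSupport.intro (hφc.isCompact.prod hψc.isCompact) fun p hp => ?_
    rcases not_and_or.1 hp with hp | hp
    · rw [image_eq_zero_of_notMem_tsupport hp, mul_zero]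
    · rw [image_eq_zero_of_notMem_tsupport hp, zero_mul]
  contDiffOn := (hψ.comp contDiff_snd).contDiffOn.mul (hφd.comp contDiffOn_fst fun _ hp => hp.1)
  hasPVFracLap hx t ht := by
    rw [((hψμ t ht).mul_const (φ _)).deriv]
    convert (hφμ _ hx).const_mul (ψ t) using 1
    have hc' : (c : ℂ) ≠ 0 := mod_cast hc
    push_cast
    field_simp

end IsCaloric

end Caloric

section NearSpaceTimePlaneWave

theorem hasDerivAt_planeWave (θ t : ℝ) :
    HasDerivAt (planeWave θ) (2 * Real.pi * θ * Complex.I * planeWave θ t) t := by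
  have hphase : HasDerivAt (fun t : ℝ => ((2 * Real.pi * inner ℝ θ t : ℝ) : ℂ) * Complex.I)
      ((2 * Real.pi * θ : ℝ) * Complex.I) t := by
    have hinner : HasDerivAt (fun t : ℝ => 2 * Real.pi * inner ℝ θ t) (2 * Real.pi * θ) t := by
      simpa using ((hasDerivAt_id t).mul_const θ).const_mul (2 * Real.pi)
    exact hinner.ofReal_comp.mul_const Complex.I
  refine hphase.cexp.congr_deriv ?_
  rw [planeWave]
  push_cast
  ring

section SpaceTime

variable {E : Type*} [NormedAddCommGroup E] [InnerProductSpace ℝ E]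

theorem planeWave_prod (ξ v : WithLp 2 (E × ℝ)) :
    planeWave ξ v = planeWave ξ.fst v.fst * planeWave ξ.snd v.snd := by
  simp only [planeWave, WithLp.prod_inner_apply, ← Complex.exp_add, mul_add, Complex.ofReal_add,
    add_mul]
  rfl

theorem ckNormLE_planeWave (k : ℕ) (ξ : E) :
    CkNormLE k univ (planeWave ξ) ((1 + 2 * Real.pi * ‖ξ‖) ^ k) := fun i hi v _ => by
  refine (norm_iteratedFDeriv_planeWave_le i ξ v).trans ?_
  calc (2 * Real.pi * ‖ξ‖) ^ i ≤ (1 + 2 * Real.pi * ‖ξ‖) ^ i := by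
        gcongr
        exact le_add_of_nonneg_left zero_le_one
    _ ≤ (1 + 2 * Real.pi * ‖ξ‖) ^ k :=
        pow_le_pow_right₀ (le_add_of_nonneg_right (by positivity)) hi

/-- The unit cylinder, in the Euclidean product of space and time. -/
def unitCylinder (E : Type*) [NormedAddCommGroup E] : Set (WithLp 2 (E × ℝ)) :=
  {v | v.fst ∈ ball 0 1 ∧ v.snd ∈ Ioo (-1 : ℝ) 1}

theorem isOpen_unitCylinder : IsOpen (unitCylinder E) :=
  (isOpen_ball.preimage (WithLp.fstL 2 ℝ E ℝ).continuous).inter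
    (isOpen_Ioo.preimage (WithLp.sndL 2 ℝ E ℝ).continuous)

theorem isBounded_unitCylinder : Bornology.IsBounded (unitCylinder E) :=
  (WithLp.prodContinuousLinearEquiv 2 ℝ E ℝ).antilipschitz.isBounded_preimage
    ((isBounded_ball (x := 0) (r := 1)).prod (isBounded_Ioo (-1 : ℝ) 1))

theorem exists_contDiff_eq_planeWave (θ : ℝ) :
    ∃ ψ : ℝ → ℂ, ContDiff ℝ ∞ ψ ∧ HasCompactSupport ψ ∧
      ∀ t ∈ Ioo (-1 : ℝ) 1, ψ t = planeWave θ t := by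
  refine ⟨fun t => unitBump ℝ t * planeWave θ t, contDiff_unitBump.mul (contDiff_planeWave θ),
    hasCompactSupport_unitBump_mul _, fun t ht => ?_⟩
  have ht₁ : t ∈ closedBall (0 : ℝ) 1 := by simpa using (abs_lt.2 ht).le
  simp only [(unitBump ℝ).one_of_mem_closedBall ht₁, Complex.ofReal_one, one_mul]

theorem exists_pos_ckNormLE_planeWave_mul_comp_fst (k : ℕ) (ξ : WithLp 2 (E × ℝ)) {δ : ℝ}
    (hδ : 0 < δ) :
    ∃ δ' > 0, ∀ W : E → ℂ, ContDiff ℝ ∞ W → CkNormLE k univ W δ' →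
      CkNormLE k univ (fun v : WithLp 2 (E × ℝ) => planeWave ξ v * W v.fst) δ := by
  set A : ℝ := (1 + 2 * Real.pi * ‖ξ‖) ^ k
  set B : ℝ := (1 + ‖WithLp.fstL 2 ℝ E ℝ‖) ^ k
  have hA₀ : A ≠ 0 := by positivity
  have hB₀ : B ≠ 0 := by positivity
  refine ⟨δ / (2 ^ k * A * B), by positivity, fun W hW hWδ => ?_⟩
  have hWk : ContDiff ℝ k W := hW.of_le (mod_cast le_top)
  have hWfst := (hWδ.mono (subset_univ _) le_rfl).comp_continuousLinearMap (Ω := univ)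
    (WithLp.fstL 2 ℝ E ℝ) fun _ _ => hWk.contDiffAt
  refine ((ckNormLE_planeWave k ξ).mul (by positivity) hWfst (contDiff_planeWave ξ)
    (hWk.comp (WithLp.fstL 2 ℝ E ℝ).contDiff)).mono subset_rfl (le_of_eq ?_)
  change 2 ^ k * A * (δ / (2 ^ k * A * B) * B) = δ
  field_simp

end SpaceTime

theorem exists_isCaloric_near_planeWave {E : Type*} [NormedAddCommGroup E]
    [InnerProductSpace ℝ E] [FiniteDimensional ℝ E] [MeasurableSpace E] [BorelSpace E]
    [Nontrivial E] {a c δ : ℝ} (ha : a ∈ Ioo (Module.finrank ℝ E : ℝ) (Module.finrank ℝ E + 2))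
    (hc : c ≠ 0) (ξ : WithLp 2 (E × ℝ)) (hξ : ξ.snd ≠ 0) (k : ℕ) (hδ : 0 < δ) :
    ∃ U : E × ℝ → ℂ, IsCaloric a c U ∧ CkNormLE k (unitCylinder E)
      (fun v => U (v.fst, v.snd) - planeWave ξ v) δ := by
  set θ := ξ.snd with hθ
  obtain ⟨δ', hδ', hmul⟩ := exists_pos_ckNormLE_planeWave_mul_comp_fst (E := E) k
    (WithLp.toLp 2 (0, θ)) hδ
  have hτ : 2 * Real.pi * θ / c ≠ 0 := by positivity
  obtain ⟨φ, W, hφ, hφc, hW, hφW, hφL, hWδ⟩ :=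
    exists_hasPVFracLap_near_planeWave (E := E) ha hτ ξ.fst k hδ'
  obtain ⟨ψ, hψ, hψc, hψθ⟩ := exists_contDiff_eq_planeWave θ
  have hφd : ContDiffOn ℝ ∞ φ (ball 0 1) :=
    ((contDiff_planeWave ξ.fst).add hW).contDiffOn.congr hφW
  have hψd : ∀ t ∈ Ioo (-1 : ℝ) 1,
      HasDerivAt ψ (c * ((2 * Real.pi * θ / c : ℝ) * Complex.I) * ψ t) t := fun t ht => by
    have heq : ψ =ᶠ[𝓝 t] planeWave θ := eventually_of_mem (isOpen_Ioo.mem_nhds ht) hψθ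
    refine ((hasDerivAt_planeWave θ t).congr_of_eventuallyEq heq).congr_deriv ?_
    have hc' : (c : ℂ) ≠ 0 := mod_cast hc
    rw [hψθ t ht]
    push_cast
    field_simp
  refine ⟨_, .mul_of_eigenfunction hc hφ hφc hφd hψ hψc hφL hψd, ?_⟩
  refine ((hmul W hW hWδ).mono (subset_univ _) le_rfl).congr fun v hv => ?_
  filter_upwards [isOpen_unitCylinder.mem_nhds hv] with v hv
  simp only [hφW _ hv.1, hψθ _ hv.2, planeWave_prod _ v]
  have hone : planeWave (0 : E) v.fst = 1 := by simp [planeWave]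
  simp only [WithLp.toLp_fst, hone, WithLp.toLp_snd, one_mul, ← hθ]
  ring

end NearSpaceTimePlaneWave

/-! ### Superposition of plane waves -/

section UniformLimits

theorem integral_mem_submodule_of_isClosed {𝕜 α X : Type*} [RCLike 𝕜] [MeasurableSpace α]
    {μ : Measure α} [NormedAddCommGroup X] [NormedSpace ℝ X] [NormedSpace 𝕜 X] [CompleteSpace X]
    (S : Submodule 𝕜 X) (hS : IsClosed (S : Set X)) {f : α → X} (hf : Integrable f μ)
    (h : ∀ᵐ x ∂μ, f x ∈ S) : ∫ x, f x ∂μ ∈ S := by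
  have hquot : S.mkQL (∫ x, f x ∂μ) = 0 := by
    rw [← ContinuousLinearMap.integral_comp_comm (𝕜 := 𝕜) S.mkQL hf]
    exact integral_eq_zero_of_ae (h.mono fun x hx => (Submodule.Quotient.mk_eq_zero S).2 hx)
  exact (Submodule.Quotient.mk_eq_zero S).1 hquot

variable {ι V T Y : Type*} [NormedAddCommGroup Y] [NormedSpace ℂ Y] [TopologicalSpace T]

/-- The continuous functions on `T` whose pullback along `φ` is a uniform limit of functions
in `P`. -/
def uniformLimits (φ : ι → T) (P : Submodule ℂ (ι → Y)) : Submodule ℂ C(T, Y) where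
  carrier := {g | ∀ δ > 0, ∃ p ∈ P, ∀ t, ‖p t - g (φ t)‖ ≤ δ}
  zero_mem' δ hδ := ⟨0, P.zero_mem, fun t => by simp [hδ.le]⟩
  add_mem' {g g'} hg hg' δ hδ := by
    obtain ⟨p, hp, hpg⟩ := hg (δ / 2) (half_pos hδ)
    obtain ⟨p', hp', hpg'⟩ := hg' (δ / 2) (half_pos hδ)
    refine ⟨p + p', P.add_mem hp hp', fun t => ?_⟩
    rw [ContinuousMap.add_apply, Pi.add_apply, add_sub_add_comm]
    exact (norm_add_le_of_le (hpg t) (hpg' t)).trans_eq (add_halves δ)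
  smul_mem' z g hg δ hδ := by
    obtain ⟨p, hp, hpg⟩ := hg (δ / (‖z‖ + 1)) (by positivity)
    refine ⟨z • p, P.smul_mem z hp, fun t => ?_⟩
    rw [ContinuousMap.smul_apply, Pi.smul_apply, ← smul_sub, norm_smul]
    calc ‖z‖ * ‖p t - g (φ t)‖ ≤ (‖z‖ + 1) * (δ / (‖z‖ + 1)) := by
          gcongr
          · linarith
          · exact hpg t
      _ = δ := by field_simp

theorem isClosed_uniformLimits [CompactSpace T] (φ : ι → T) (P : Submodule ℂ (ι → Y)) :
    IsClosed (uniformLimits φ P : Set C(T, Y)) := by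
  refine isClosed_of_closure_subset fun g hg δ hδ => ?_
  obtain ⟨g', hg', hgg'⟩ := Metric.mem_closure_iff.1 hg (δ / 2) (half_pos hδ)
  obtain ⟨p, hp, hpg'⟩ := hg' (δ / 2) (half_pos hδ)
  refine ⟨p, hp, fun t => ?_⟩
  have hdist : ‖g' (φ t) - g (φ t)‖ ≤ δ / 2 := by
    rw [← dist_eq_norm, dist_comm]
    exact (ContinuousMap.dist_apply_le_dist _).trans hgg'.le
  rw [← sub_add_sub_cancel (p t) (g' (φ t)), ← add_halves δ]
  exact norm_add_le_of_le (hpg' t) hdist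

variable [CompactSpace T] [NormedSpace ℝ Y] [CompleteSpace Y] [TopologicalSpace V]
  [SecondCountableTopology V] [MeasurableSpace V] [OpensMeasurableSpace V] {μ : Measure V}

theorem exists_mem_norm_sub_integral_le (φ : ι → T) (P : Submodule ℂ (ι → Y)) {J : V → T → Y}
    (hJ : Continuous fun q : V × T => J q.1 q.2) {b : V → ℂ} (hb : Continuous b) {B : V → ℝ}
    (hB₀ : ∀ ξ, 0 ≤ B ξ) (hB : ∀ ξ t, ‖J ξ t‖ ≤ B ξ) (hbB : Integrable (fun ξ => ‖b ξ‖ * B ξ) μ)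
    (hP : ∀ᵐ ξ ∂μ, ∀ δ > 0, ∃ p ∈ P, ∀ t, ‖p t - J ξ (φ t)‖ ≤ δ) {δ : ℝ} (hδ : 0 < δ) :
    ∃ p ∈ P, ∀ t, ‖p t - ∫ ξ, b ξ • J ξ (φ t) ∂μ‖ ≤ δ := by
  let 𝒥 : C(V, C(T, Y)) := ContinuousMap.curry ⟨fun q : V × T => J q.1 q.2, hJ⟩
  have hint : Integrable (fun ξ => b ξ • 𝒥 ξ) μ := by
    refine hbB.mono' (hb.smul 𝒥.continuous).aestronglyMeasurable (.of_forall fun ξ => ?_)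
    rw [norm_smul]
    exact mul_le_mul_of_nonneg_left ((ContinuousMap.norm_le _ (hB₀ ξ)).2 (hB ξ)) (norm_nonneg _)
  have hmem := integral_mem_submodule_of_isClosed (uniformLimits φ P) (isClosed_uniformLimits φ P)
    hint (hP.mono fun ξ hξ => Submodule.smul_mem _ _ hξ)
  obtain ⟨p, hp, hpδ⟩ := hmem δ hδ
  refine ⟨p, hp, fun t => ?_⟩
  have hpt := hpδ t
  rwa [ContinuousMap.integral_apply hint] at hpt

end UniformLimits

section Jets

variable {V F : Type*} [NormedAddCommGroup V] [NormedSpace ℝ V] [NormedAddCommGroup F]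
  [NormedSpace ℝ F] {Ω : Set V} {k : ℕ} {f g : V → F} {v : V} {δ : ℝ}

/-- The `k`-jet of `g` at `v`: all derivatives of order at most `k`, with the supremum norm. -/
noncomputable def jet (k : ℕ) (g : V → F) (v : V) (i : Fin (k + 1)) : V [×i]→L[ℝ] F :=
  iteratedFDeriv ℝ i g v

theorem ckNormLE_iff_norm_jet_le (hδ : 0 ≤ δ) :
    CkNormLE k Ω g δ ↔ ∀ v ∈ Ω, ‖jet k g v‖ ≤ δ := by
  refine ⟨fun h v hv => (pi_norm_le_iff_of_nonneg hδ).2 fun i => h i (Nat.lt_succ_iff.1 i.2) v hv,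
    fun h i hi v hv => ?_⟩
  exact (pi_norm_le_iff_of_nonneg hδ).1 (h v hv) ⟨i, Nat.lt_succ_iff.2 hi⟩

theorem jet_add (hf : ContDiffAt ℝ k f v) (hg : ContDiffAt ℝ k g v) :
    jet k (f + g) v = jet k f v + jet k g v := funext fun i => by
  have hi : ((i : ℕ) : WithTop ℕ∞) ≤ k := mod_cast Nat.lt_succ_iff.1 i.2
  exact iteratedFDeriv_add_apply (hf.of_le hi) (hg.of_le hi)

theorem jet_sub (hf : ContDiffAt ℝ k f v) (hg : ContDiffAt ℝ k g v) :
    jet k (fun w => f w - g w) v = jet k f v - jet k g v := funext fun i => by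
  have hi : ((i : ℕ) : WithTop ℕ∞) ≤ k := mod_cast Nat.lt_succ_iff.1 i.2
  exact fun_iteratedFDeriv_sub_apply (hf.of_le hi) (hg.of_le hi)

theorem jet_const_smul {𝕜 : Type*} [NormedField 𝕜] [NormedSpace 𝕜 F] [SMulCommClass ℝ 𝕜 F] (z : 𝕜)
    (hg : ContDiffAt ℝ k g v) : jet k (z • g) v = z • jet k g v := funext fun i => by
  have hi : ((i : ℕ) : WithTop ℕ∞) ≤ k := mod_cast Nat.lt_succ_iff.1 i.2
  exact iteratedFDeriv_const_smul_apply (hg.of_le hi)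

/-- Taking `k`-jets on `Ω`, as a linear map on a space of functions which are smooth there. -/
noncomputable def jetMap (S : Submodule ℂ (V → ℂ)) (Ω : Set V) (k : ℕ)
    (hS : ∀ U ∈ S, ∀ v ∈ Ω, ContDiffAt ℝ k U v) :
    S →ₗ[ℂ] Ω → (i : Fin (k + 1)) → V [×i]→L[ℝ] ℂ where
  toFun U v := jet k U v
  map_add' U U' := funext fun v => jet_add (hS U U.2 v v.2) (hS U' U'.2 v v.2)
  map_smul' z U := funext fun v => jet_const_smul z (hS U U.2 v v.2)

end Jets

section PlaneWaveJets

variable {V : Type*} [NormedAddCommGroup V] [InnerProductSpace ℝ V] {Ω : Set V} {k : ℕ}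

theorem continuous_jet_planeWave (k : ℕ) :
    Continuous fun q : V × V => jet k (planeWave q.1) q.2 :=
  continuous_pi fun i => continuous_iteratedFDeriv_planeWave i

theorem norm_jet_planeWave_le (k : ℕ) (ξ v : V) :
    ‖jet k (planeWave ξ) v‖ ≤ (1 + 2 * Real.pi * ‖ξ‖) ^ k :=
  (ckNormLE_iff_norm_jet_le (by positivity)).1 (ckNormLE_planeWave k ξ) v (mem_univ v)

variable [FiniteDimensional ℝ V] [MeasurableSpace V] [BorelSpace V] {F : V → ℂ}
  (hF : ContDiff ℝ ∞ F) (hFc : HasCompactSupport F)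
include hF hFc

theorem integrable_norm_fourier_mul_one_add_norm_pow (k : ℕ) :
    Integrable fun ξ => ‖𝓕 F ξ‖ * (1 + 2 * Real.pi * ‖ξ‖) ^ k := by
  have hdom : Integrable fun ξ =>
      2 ^ (k - 1) * (‖𝓕 F ξ‖ + (2 * Real.pi) ^ k * (‖ξ‖ ^ k * ‖𝓕 F ξ‖)) :=
    ((integrable_fourier hF hFc).norm.add
      ((integrable_norm_pow_mul_norm_fourier hF hFc k).const_mul _)).const_mul _
  have hcont := continuous_fourier_of_hasCompactSupport hF.continuous hFc
  refine hdom.mono' (by fun_prop) (.of_forall fun ξ => ?_)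
  rw [Real.norm_of_nonneg (by positivity)]
  calc ‖𝓕 F ξ‖ * (1 + 2 * Real.pi * ‖ξ‖) ^ k
      ≤ ‖𝓕 F ξ‖ * (2 ^ (k - 1) * (1 ^ k + (2 * Real.pi * ‖ξ‖) ^ k)) := by
        gcongr
        exact add_pow_le zero_le_one (by positivity) k
    _ = _ := by rw [one_pow, mul_pow (2 * Real.pi)]; ring

theorem integral_fourier_smul_jet_planeWave (k : ℕ) (v : V) :
    ∫ ξ, 𝓕 F ξ • jet k (planeWave ξ) v = jet k F v := by
  have hcont := continuous_fourier_of_hasCompactSupport hF.continuous hFc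
  have hint : Integrable fun ξ => 𝓕 F ξ • jet k (planeWave ξ) v := by
    refine (integrable_norm_fourier_mul_one_add_norm_pow hF hFc k).mono' ?_ (.of_forall fun ξ => ?_)
    · have := secondCountableTopologyEither_of_left V ((i : Fin (k + 1)) → V [×i]→L[ℝ] ℂ)
      exact (hcont.smul
        ((continuous_jet_planeWave k).comp (.prodMk_left v))).aestronglyMeasurable
    · rw [norm_smul]
      exact mul_le_mul_of_nonneg_left (norm_jet_planeWave_le k ξ v) (norm_nonneg _)
  have hinv : F = fun x => ∫ ξ, 𝓕 F ξ * planeWave ξ x :=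
    funext fun x => (integral_fourier_mul_planeWave hF hFc x).symm
  funext i
  conv_rhs => rw [jet, hinv, iteratedFDeriv_integral_planeWave hcont.aestronglyMeasurable
    (integrable_norm_pow_mul_norm_fourier hF hFc)]
  exact eval_integral hint.eval i

theorem exists_mem_near_of_planeWave (hΩ : Bornology.IsBounded Ω) (S : Submodule ℂ (V → ℂ))
    (hS : ∀ U ∈ S, ∀ v ∈ Ω, ContDiffAt ℝ k U v)
    (hw : ∀ᵐ ξ : V, ∀ δ > 0, ∃ U ∈ S, CkNormLE k Ω (fun v => U v - planeWave ξ v) δ)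
    {δ : ℝ} (hδ : 0 < δ) : ∃ U ∈ S, CkNormLE k Ω (fun v => U v - F v) δ := by
  have : CompactSpace (closure Ω) := isCompact_iff_compactSpace.1 hΩ.isCompact_closure
  have hwave : ∀ᵐ ξ : V, ∀ δ > 0, ∃ p ∈ LinearMap.range (jetMap S Ω k hS), ∀ v : Ω,
      ‖p v - jet k (planeWave ξ) (inclusion subset_closure v : closure Ω)‖ ≤ δ := by
    filter_upwards [hw] with ξ hξ δ hδ
    obtain ⟨U, hU, hUδ⟩ := hξ δ hδ
    refine ⟨_, ⟨⟨U, hU⟩, rfl⟩, fun v => ?_⟩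
    have hjet := (ckNormLE_iff_norm_jet_le hδ.le).1 hUδ v v.2
    rwa [jet_sub (hS U hU v v.2) (contDiff_planeWave ξ).contDiffAt] at hjet
  have hJ : Continuous fun q : V × closure Ω => jet k (planeWave q.1) (q.2 : V) :=
    (continuous_jet_planeWave k).comp (continuous_fst.prodMk continuous_snd.subtype_val)
  obtain ⟨_, ⟨⟨U, hU⟩, rfl⟩, hUδ⟩ := exists_mem_norm_sub_integral_le
    (J := fun (ξ : V) (v : closure Ω) => jet k (planeWave ξ) (v : V)) _ _ hJ
    (continuous_fourier_of_hasCompactSupport hF.continuous hFc) (fun _ => by positivity)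
    (fun ξ v => norm_jet_planeWave_le k ξ v)
    (integrable_norm_fourier_mul_one_add_norm_pow hF hFc k) hwave hδ
  refine ⟨U, hU, (ckNormLE_iff_norm_jet_le hδ.le).2 fun v hv => ?_⟩
  rw [jet_sub (hS U hU v hv) (hF.of_le (mod_cast le_top)).contDiffAt,
    ← integral_fourier_smul_jet_planeWave hF hFc]
  exact hUδ ⟨v, hv⟩

end PlaneWaveJets

section CaloricNearTestFunctions

variable {E : Type*} [NormedAddCommGroup E] [InnerProductSpace ℝ E] [FiniteDimensional ℝ E]
  [MeasurableSpace E] [BorelSpace E] {a c : ℝ}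

/-- The space of solutions, as functions on the Euclidean product of space and time. -/
def caloricSubmodule (ha : Module.finrank ℝ E < a) (c : ℝ) :
    Submodule ℂ (WithLp 2 (E × ℝ) → ℂ) where
  carrier := {g | ∃ U : E × ℝ → ℂ, IsCaloric a c U ∧ g = fun v => U (v.fst, v.snd)}
  zero_mem' := ⟨_, .zero, rfl⟩
  add_mem' := by
    rintro _ _ ⟨U, hU, rfl⟩ ⟨U', hU', rfl⟩
    exact ⟨_, hU.add ha hU', rfl⟩
  smul_mem' := by
    rintro z _ ⟨U, hU, rfl⟩
    exact ⟨_, hU.const_mul z, rfl⟩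

theorem ae_snd_ne_zero : ∀ᵐ ξ : WithLp 2 (E × ℝ), ξ.snd ≠ 0 := by
  have hker : LinearMap.ker (WithLp.sndL 2 ℝ E ℝ).toLinearMap ≠ ⊤ := fun htop => by
    have hmem : WithLp.toLp 2 ((0 : E), (1 : ℝ)) ∈
        LinearMap.ker (WithLp.sndL 2 ℝ E ℝ).toLinearMap := htop ▸ Submodule.mem_top
    simp at hmem
  have hnull := Measure.addHaar_submodule (volume : Measure (WithLp 2 (E × ℝ))) _ hker
  exact measure_eq_zero_iff_ae_notMem.1 hnull

theorem exists_isCaloric_near [Nontrivial E]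
    (ha : a ∈ Ioo (Module.finrank ℝ E : ℝ) (Module.finrank ℝ E + 2)) (hc : c ≠ 0) {F : E × ℝ → ℂ}
    (hF : ContDiff ℝ ∞ F) (hFc : HasCompactSupport F) (k : ℕ) {δ : ℝ} (hδ : 0 < δ) :
    ∃ U : E × ℝ → ℂ, IsCaloric a c U ∧
      CkNormLE k (ball (0 : E) 1 ×ˢ Ioo (-1 : ℝ) 1) (fun q => U q - F q) δ := by
  let L := WithLp.prodContinuousLinearEquiv 2 ℝ E ℝ
  have hsmooth : ∀ U ∈ caloricSubmodule ha.1 c, ∀ v ∈ unitCylinder E, ContDiffAt ℝ k U v := by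
    rintro _ ⟨U, hU, rfl⟩ v hv
    exact ((hU.contDiffAt (p := L v) hv).of_le (mod_cast le_top)).comp v L.contDiff.contDiffAt
  have hwave : ∀ᵐ ξ : WithLp 2 (E × ℝ), ∀ δ > 0, ∃ U ∈ caloricSubmodule ha.1 c,
      CkNormLE k (unitCylinder E) (fun v => U v - planeWave ξ v) δ := by
    filter_upwards [ae_snd_ne_zero] with ξ hξ δ hδ
    obtain ⟨U, hU, hUδ⟩ := exists_isCaloric_near_planeWave ha hc ξ hξ k hδ
    exact ⟨_, ⟨U, hU, rfl⟩, hUδ⟩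
  set N := (1 + ‖(L.symm : E × ℝ →L[ℝ] WithLp 2 (E × ℝ))‖) ^ k with hN
  have hN₀ : 0 < N := by positivity
  obtain ⟨_, ⟨U, hU, rfl⟩, hUF⟩ := exists_mem_near_of_planeWave (hF.comp L.contDiff)
    (hFc.comp_homeomorph L.toHomeomorph) isBounded_unitCylinder _ hsmooth hwave (div_pos hδ hN₀)
  have himage : (L.symm : E × ℝ →L[ℝ] _) '' (ball 0 1 ×ˢ Ioo (-1) 1) ⊆ unitCylinder E :=
    image_subset_iff.2 fun p hp => hp
  have hnear := (hUF.mono himage le_rfl).comp_continuousLinearMap (L.symm : E × ℝ →L[ℝ] _)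
    fun p hp => (hsmooth _ ⟨U, hU, rfl⟩ _ hp).sub
      ((hF.comp L.contDiff).of_le (mod_cast le_top)).contDiffAt
  rw [← hN, div_mul_cancel₀ _ hN₀.ne'] at hnear
  exact ⟨U, hU, hnear⟩

end CaloricNearTestFunctions

/-! ### Smooth approximation on the closed unit ball -/

section Mollification

variable {X F : Type*} [NormedAddCommGroup X] [NormedSpace ℝ X] [NormedAddCommGroup F]
  [NormedSpace ℝ F] {G : X → F} {k : ℕ}

theorem uniformContinuous_jet (hG : ContDiff ℝ k G) (hGc : HasCompactSupport G) :
    UniformContinuous (jet k G) :=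
  uniformContinuous_pi.2 fun i =>
    have hcont := hG.continuous_iteratedFDeriv (mod_cast Nat.lt_succ_iff.1 i.2)
    hcont.uniformContinuous_of_tendsto_cocompact (hGc.iteratedFDeriv i).is_zero_at_infty

variable [FiniteDimensional ℝ X] [MeasurableSpace X] [BorelSpace X] [CompleteSpace F]
  {μ : Measure X}

theorem iteratedFDeriv_convolution_lsmul {φ : X → ℝ} (hφ : Continuous φ) (hφi : Integrable φ μ)
    (hG : ContDiff ℝ k G) (hGc : HasCompactSupport G) {i : ℕ} (hi : i ≤ k) (x : X) :
    iteratedFDeriv ℝ i (convolution φ G (ContinuousLinearMap.lsmul ℝ ℝ) μ) x =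
      convolution φ (iteratedFDeriv ℝ i G) (ContinuousLinearMap.lsmul ℝ ℝ) μ x := by
  have hGy : ∀ y, ContDiff ℝ k fun x => G (x - y) := fun y =>
    hG.comp (contDiff_id.sub contDiff_const)
  have hcont : ∀ {i : ℕ}, (i : ℕ∞) ≤ k → Continuous (iteratedFDeriv ℝ i G) := fun hi =>
    hG.continuous_iteratedFDeriv (mod_cast hi)
  have hderiv : ∀ {i : ℕ}, (i : ℕ∞) ≤ k → ∀ y x, iteratedFDeriv ℝ i (fun x => φ y • G (x - y)) x
      = φ y • iteratedFDeriv ℝ i G (x - y) := fun hi y x => by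
    rw [iteratedFDeriv_const_smul_apply' ((hGy y).of_le (mod_cast hi)).contDiffAt,
      iteratedFDeriv_comp_sub]
  have htaylor := hasFTaylorSeriesUpTo_integral (μ := μ) (N := k) (G := fun x y => φ y • G (x - y))
    (fun y => (hGy y).const_smul (φ y))
    (fun i hi x => by
      simp only [hderiv hi]
      exact (hφ.smul ((hcont hi).comp (by fun_prop))).aestronglyMeasurable)
    (fun i hi _ => by
      obtain ⟨B, hB⟩ := (hGc.iteratedFDeriv i).exists_bound_of_continuous (hcont hi)
      refine ⟨fun y => ‖φ y‖ * B, hφi.norm.mul_const B, fun y x _ => ?_⟩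
      rw [hderiv hi, norm_smul]
      exact mul_le_mul_of_nonneg_left (hB _) (norm_nonneg _))
  have hconv := htaylor.eq_iteratedFDeriv (m := i) (mod_cast hi) x
  simp only [hderiv (mod_cast hi : (i : ℕ∞) ≤ k)] at hconv
  exact hconv.symm

theorem exists_contDiff_ckNormLE_sub (hG : ContDiff ℝ k G) (hGc : HasCompactSupport G) {δ : ℝ}
    (hδ : 0 < δ) :
    ∃ g : X → F, ContDiff ℝ ∞ g ∧ HasCompactSupport g ∧
      CkNormLE k univ (fun x => g x - G x) δ := by
  let μ : Measure X := Measure.addHaar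
  obtain ⟨η, hη, hGη⟩ := Metric.uniformContinuous_iff.1 (uniformContinuous_jet hG hGc) δ hδ
  let φ : ContDiffBump (0 : X) := ⟨η / 2, η, by positivity, by linarith⟩
  have hφc : HasCompactSupport (φ.normed μ) := φ.hasCompactSupport_normed
  have hsmooth : ContDiff ℝ ∞
      (convolution (φ.normed μ) G (ContinuousLinearMap.lsmul ℝ ℝ) μ) :=
    hφc.contDiff_convolution_left _ φ.contDiff_normed hG.continuous.locallyIntegrable
  refine ⟨_, hsmooth, hφc.convolution _ hGc, fun i hi x _ => ?_⟩
  rw [fun_iteratedFDeriv_sub_apply (hsmooth.of_le (mod_cast le_top)).contDiffAt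
    (hG.of_le (mod_cast hi)).contDiffAt, iteratedFDeriv_convolution_lsmul φ.continuous_normed
    φ.integrable_normed hG hGc hi, ← dist_eq_norm]
  refine φ.dist_normed_convolution_le
    (hG.continuous_iteratedFDeriv (mod_cast hi)).aestronglyMeasurable fun y hy => ?_
  exact (dist_le_pi_dist (jet k G y) (jet k G x) ⟨i, Nat.lt_succ_iff.2 hi⟩).trans (hGη hy).le

end Mollification

section Dilation

variable {X F : Type*} [NormedAddCommGroup X] [NormedSpace ℝ X] [NormedAddCommGroup F]
  [NormedSpace ℝ F] {f : X → F} {k : ℕ} {r : ℝ}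

theorem smul_mem_ball_zero_one (hr : r ∈ Icc (0 : ℝ) 1) {x : X} (hx : x ∈ ball (0 : X) 1) :
    r • x ∈ ball (0 : X) 1 := by
  rw [mem_ball_zero_iff, norm_smul, Real.norm_of_nonneg hr.1]
  exact (mul_le_of_le_one_left (norm_nonneg _) hr.2).trans_lt (mem_ball_zero_iff.1 hx)

theorem iteratedFDeriv_comp_const_smul_of_contDiffAt {i : ℕ} {x : X}
    (hf : ContDiffAt ℝ i f (r • x)) :
    iteratedFDeriv ℝ i (fun y => f (r • y)) x = r ^ i • iteratedFDeriv ℝ i f (r • x) := by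
  have hcomp := iteratedFDeriv_comp_continuousLinearMap (r • ContinuousLinearMap.id ℝ X) hf
  refine hcomp.trans (ContinuousMultilinearMap.ext fun m => ?_)
  exact ((iteratedFDeriv ℝ i f (r • x)).map_smul_univ (fun _ => r) m).trans (by simp)

variable [FiniteDimensional ℝ X] (hf : ContDiffOn ℝ k f (closedBall (0 : X) 1))
include hf

theorem eventually_norm_pow_smul_iteratedFDeriv_sub_le {i : ℕ} (hi : i ≤ k) {δ : ℝ} (hδ : 0 < δ) :
    ∀ᶠ r : ℝ in 𝓝[<] 1, ∀ x ∈ ball (0 : X) 1,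
      ‖r ^ i • iteratedFDeriv ℝ i f (r • x) - iteratedFDeriv ℝ i f x‖ ≤ δ := by
  let D := iteratedFDerivWithin ℝ i f (closedBall 0 1)
  have hu : UniqueDiffOn ℝ (closedBall (0 : X) 1) := uniqueDiffOn_convex (convex_closedBall 0 1)
    ⟨0, ball_subset_interior_closedBall (mem_ball_self one_pos)⟩
  have hD : ∀ x ∈ ball (0 : X) 1, iteratedFDeriv ℝ i f x = D x := fun x hx =>
    (iteratedFDerivWithin_eq_iteratedFDeriv hu
      ((hf.contDiffAt (closedBall_mem_nhds_of_mem hx)).of_le (mod_cast hi))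
      (ball_subset_closedBall hx)).symm
  have hmaps : MapsTo (fun q : ℝ × X => q.1 • q.2) (Ioc 0 1 ×ˢ closedBall (0 : X) 1)
      (closedBall (0 : X) 1) := fun ⟨r, x⟩ ⟨hr, hx⟩ => by
    rw [mem_closedBall_zero_iff] at hx ⊢
    rw [norm_smul, Real.norm_of_nonneg hr.1.le]
    exact mul_le_one₀ hr.2 (norm_nonneg _) hx
  have hcont : ContinuousOn (Function.uncurry fun (r : ℝ) (x : X) => r ^ i • D (r • x))
      (Ioc 0 1 ×ˢ closedBall (0 : X) 1) :=
    (continuous_fst.pow i).continuousOn.smul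
      ((hf.continuousOn_iteratedFDerivWithin (mod_cast hi) hu).comp (by fun_prop) hmaps)
  obtain ⟨v, hv, hvδ⟩ := (isCompact_closedBall (0 : X) 1).mem_uniformity_of_prod hcont
    ⟨one_pos, le_rfl⟩ (dist_mem_uniformity hδ)
  have hle : 𝓝[<] (1 : ℝ) ≤ 𝓝[Ioc 0 1] 1 := by
    rw [← nhdsWithin_Ioo_eq_nhdsLT zero_lt_one]
    exact nhdsWithin_mono _ Ioo_subset_Ioc_self
  filter_upwards [hle hv, Ioo_mem_nhdsLT zero_lt_one] with r hrv hr x hx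
  rw [hD _ (smul_mem_ball_zero_one (Ioo_subset_Icc_self hr) hx), hD x hx, ← dist_eq_norm]
  have hdist : dist (r ^ i • D (r • x)) ((1 : ℝ) ^ i • D ((1 : ℝ) • x)) < δ :=
    hvδ r hrv x (ball_subset_closedBall hx)
  rw [one_pow, one_smul, one_smul] at hdist
  exact hdist.le

theorem eventually_ckNormLE_comp_smul_sub {δ : ℝ} (hδ : 0 < δ) :
    ∀ᶠ r : ℝ in 𝓝[<] 1, CkNormLE k (ball (0 : X) 1) (fun x => f (r • x) - f x) δ := by
  have hderiv := (finite_Iic k).eventually_all.2 fun i (hi : i ≤ k) =>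
    eventually_norm_pow_smul_iteratedFDeriv_sub_le hf hi hδ
  filter_upwards [hderiv, Ioo_mem_nhdsLT zero_lt_one] with r hr hr₁ i hi x hx
  have hfx : ∀ y ∈ ball (0 : X) 1, ContDiffAt ℝ i f y := fun y hy =>
    (hf.contDiffAt (closedBall_mem_nhds_of_mem hy)).of_le (mod_cast hi)
  have hfrx := hfx _ (smul_mem_ball_zero_one (Ioo_subset_Icc_self hr₁) hx)
  have hcomp : ContDiffAt ℝ i (fun x => f (r • x)) x := hfrx.comp x (by fun_prop)
  rw [fun_iteratedFDeriv_sub_apply hcomp (hfx x hx),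
    iteratedFDeriv_comp_const_smul_of_contDiffAt hfrx]
  exact hr i hi x hx

theorem exists_contDiff_eqOn_comp_smul (hr : r ∈ Ioo (0 : ℝ) 1) :
    ∃ G : X → F, ContDiff ℝ k G ∧ HasCompactSupport G ∧
      EqOn G (fun x => f (r • x)) (ball (0 : X) 1) := by
  obtain ⟨R, hR, hRr⟩ := exists_between ((one_lt_inv₀ hr.1).2 hr.2)
  let χ : ContDiffBump (0 : X) := ⟨1, R, one_pos, hR⟩
  refine ⟨fun x => χ x • f (r • x), contDiff_iff_contDiffAt.2 fun x => ?_,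
    χ.hasCompactSupport.smul_right, fun x hx => ?_⟩
  · by_cases hx : x ∈ tsupport χ
    · have hrx : r • x ∈ ball (0 : X) 1 := by
        rw [χ.tsupport_eq, mem_closedBall_zero_iff] at hx
        rw [mem_ball_zero_iff, norm_smul, Real.norm_of_nonneg hr.1.le,
          ← lt_inv_mul_iff₀ hr.1, mul_one]
        exact hx.trans_lt hRr
      exact χ.contDiff.contDiffAt.smul ((hf.contDiffAt (closedBall_mem_nhds_of_mem hrx)).comp x
        (contDiff_const_smul r).contDiffAt)
    · refine (contDiffAt_const (c := 0)).congr_of_eventuallyEq ?_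
      filter_upwards [(isClosed_tsupport χ).isOpen_compl.mem_nhds hx] with y hy
      rw [image_eq_zero_of_notMem_tsupport hy, zero_smul]
  · simp only [χ.one_of_mem_closedBall (ball_subset_closedBall hx), one_smul]

theorem exists_contDiff_ckNormLE_ball_sub [MeasurableSpace X] [BorelSpace X] [CompleteSpace F]
    {δ : ℝ} (hδ : 0 < δ) :
    ∃ g : X → F, ContDiff ℝ ∞ g ∧ HasCompactSupport g ∧
      CkNormLE k (ball (0 : X) 1) (fun x => g x - f x) δ := by
  obtain ⟨r, hrδ, hr⟩ := ((eventually_ckNormLE_comp_smul_sub hf (half_pos hδ)).and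
    (Ioo_mem_nhdsLT zero_lt_one)).exists
  obtain ⟨G, hG, hGc, hGr⟩ := exists_contDiff_eqOn_comp_smul hf hr
  obtain ⟨g, hg, hgc, hgG⟩ := exists_contDiff_ckNormLE_sub hG hGc (half_pos hδ)
  have hGf : CkNormLE k (ball (0 : X) 1) (fun x => G x - f x) (δ / 2) := hrδ.congr fun x hx => by
    filter_upwards [isOpen_ball.mem_nhds hx] with y hy
    rw [hGr hy]
  refine ⟨g, hg, hgc, ?_⟩
  rw [← add_halves δ]
  exact (hgG.mono (subset_univ _) le_rfl).sub_triangle hGf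
    (fun x _ => (hg.of_le (mod_cast le_top)).contDiffAt) (fun x _ => hG.contDiffAt)
    fun x hx => hf.contDiffAt (closedBall_mem_nhds_of_mem hx)

end Dilation

/-! ### The fractional Laplacian -/

section FractionalLaplacian

variable {n : ℕ} {s : ℝ} (hs : s ∈ Ioo (0 : ℝ) 1)
include hs

theorem fracC_pos (n : ℕ) : 0 < fracC n s := by
  have hs₀ : 0 < s := hs.1
  have hΓ : 0 < Real.Gamma ((n : ℝ) / 2 + s) := Real.Gamma_pos_of_pos (by positivity)
  have hΓ' : 0 < Real.Gamma (1 - s) := Real.Gamma_pos_of_pos (sub_pos.2 hs.2)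
  unfold fracC
  positivity

theorem add_two_mul_mem_Ioo_finrank (n : ℕ) :
    (n + 2 * s : ℝ) ∈ Ioo (Module.finrank ℝ (EuclideanSpace ℝ (Fin n)) : ℝ)
      (Module.finrank ℝ (EuclideanSpace ℝ (Fin n)) + 2) := by
  rw [finrank_euclideanSpace_fin]
  constructor <;> linarith [hs.1, hs.2]

theorem HasPVFracLap.hasFracLap_re {u : EuclideanSpace ℝ (Fin n) → ℂ} (hu : Continuous u)
    (huc : HasCompactSupport u) {x : EuclideanSpace ℝ (Fin n)} {L : ℂ}
    (h : HasPVFracLap (n + 2 * s) u x L) :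
    HasFracLap n s (fun y => (u y).re) x (fracC n s * L.re) := by
  obtain ⟨C, hC⟩ := huc.exists_bound_of_continuous hu
  refine (((Complex.continuous_re.tendsto L).comp h).const_mul (fracC n s)).congr' ?_
  filter_upwards [self_mem_nhdsWithin] with ρ hρ
  have hint := integrableOn_norm_rpow_inv_smul_sub (add_two_mul_mem_Ioo_finrank hs n).1 hu hC x hρ
  have hre := Complex.reCLM.integral_comp_comm hint
  simp only [Complex.reCLM_apply, Complex.smul_re, Complex.sub_re, smul_eq_mul,
    inv_mul_eq_div] at hre
  rw [hre, Function.comp_apply]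

theorem IsCaloric.hasFracLap_re {U : EuclideanSpace ℝ (Fin n) × ℝ → ℂ}
    (hU : IsCaloric (n + 2 * s) (fracC n s) U) {x : EuclideanSpace ℝ (Fin n)}
    (hx : x ∈ ball (0 : EuclideanSpace ℝ (Fin n)) 1) {t : ℝ} (ht : t ∈ Ioo (-1 : ℝ) 1) :
    HasFracLap n s (fun y => (U (y, t)).re) x (-(deriv (fun r => (U (x, r)).re) t)) := by
  have hderiv : HasDerivAt (fun r => (U (x, r)).re) (deriv (fun r => U (x, r)) t).re t :=
    Complex.reCLM.hasFDerivAt.comp_hasDerivAt t (hU.differentiableAt hx ht).hasDerivAt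
  have hslice : HasCompactSupport fun y => U (y, t) :=
    HasCompactSupport.intro (hU.hasCompactSupport.isCompact.image continuous_fst) fun y hy =>
      image_eq_zero_of_notMem_tsupport fun h => hy ⟨_, h, rfl⟩
  have hlap := (hU.hasPVFracLap hx ht).hasFracLap_re hs
    (hU.continuous.comp (.prodMk_left t)) hslice
  rwa [Complex.neg_re, Complex.re_ofReal_mul, mul_neg, mul_inv_cancel_left₀ (fracC_pos hs n).ne',
    ← hderiv.deriv] at hlap

end FractionalLaplacian

theorem closedBall_prod_Icc {E : Type*} [SeminormedAddCommGroup E] :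
    closedBall (0 : E) 1 ×ˢ Icc (-1 : ℝ) 1 = closedBall 0 1 := by
  rw [← Prod.mk_zero_zero, ← closedBall_prod_same, Real.closedBall_eq_Icc, zero_sub, zero_add]

theorem ball_prod_Ioo {E : Type*} [SeminormedAddCommGroup E] :
    ball (0 : E) 1 ×ˢ Ioo (-1 : ℝ) 1 = ball 0 1 := by
  rw [← Prod.mk_zero_zero, ← ball_prod_same, Real.ball_eq_Ioo, zero_sub, zero_add]

theorem CkNormLE.re_sub_of_ofReal {X : Type*} [NormedAddCommGroup X] [NormedSpace ℝ X] {k : ℕ}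
    {Ω : Set X} {δ : ℝ} {U : X → ℂ} {F : X → ℝ} (h : CkNormLE k Ω (fun x => U x - F x) δ)
    (hU : ∀ x ∈ Ω, ContDiffAt ℝ k U x) (hF : ∀ x ∈ Ω, ContDiffAt ℝ k F x) :
    CkNormLE k Ω (fun x => (U x).re - F x) δ := by
  simpa using h.continuousLinearMap_comp Complex.reCLM fun x hx =>
    (hU x hx).sub (Complex.ofRealCLM.contDiff.contDiffAt.comp x (hF x hx))

/-- All functions are locally `s`-caloric up to a small error: any `C^k` function `f` on
`closure (B₁) × [-1,1] ⊆ ℝⁿ × ℝ` can be approximated in `C^k(B₁ × (-1,1))` by a compactly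
supported continuous function `u`, smooth in `B₁ × (-1,1)`, with `∂ₜ u + (-Δ)ˢ u = 0` there. -/
theorem all_functions_locally_s_caloric
    (n : ℕ) (hn : 1 ≤ n) (s : ℝ) (hs : s ∈ Set.Ioo (0 : ℝ) 1) (k : ℕ)
    (f : EuclideanSpace ℝ (Fin n) × ℝ → ℝ)
    (hf : ContDiffOn ℝ k f (Metric.closedBall 0 1 ×ˢ Set.Icc (-1 : ℝ) 1))
    (ε : ℝ) (hε : 0 < ε) :
    ∃ u : EuclideanSpace ℝ (Fin n) × ℝ → ℝ,
      Continuous u ∧ HasCompactSupport u ∧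
      ContDiffOn ℝ (⊤ : ℕ∞) u (Metric.ball 0 1 ×ˢ Set.Ioo (-1 : ℝ) 1) ∧
      (∀ x ∈ Metric.ball (0 : EuclideanSpace ℝ (Fin n)) 1, ∀ t ∈ Set.Ioo (-1 : ℝ) 1,
        HasFracLap n s (fun y => u (y, t)) x (-(deriv (fun τ => u (x, τ)) t))) ∧
      (∀ i ≤ k, ∀ p ∈ Metric.ball (0 : EuclideanSpace ℝ (Fin n)) 1 ×ˢ Set.Ioo (-1 : ℝ) 1,
        ‖iteratedFDeriv ℝ i (fun q => u q - f q) p‖ ≤ ε) := by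
  have : NeZero n := ⟨by omega⟩
  rw [closedBall_prod_Icc] at hf
  have hball := ball_prod_Ioo (E := EuclideanSpace ℝ (Fin n))
  obtain ⟨F, hF, hFc, hFf⟩ := exists_contDiff_ckNormLE_ball_sub hf (half_pos hε)
  obtain ⟨U, hU, hUF⟩ := exists_isCaloric_near (add_two_mul_mem_Ioo_finrank hs n)
    (fracC_pos hs n).ne' (Complex.ofRealCLM.contDiff.comp hF)
    (hFc.comp_left Complex.ofReal_zero) k (half_pos hε)
  have hUk : ∀ p ∈ ball 0 1 ×ˢ Ioo (-1) 1, ContDiffAt ℝ k U p := fun p hp =>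
    (hU.contDiffAt hp).of_le (mod_cast le_top)
  have hFk : ContDiff ℝ k F := hF.of_le (mod_cast le_top)
  have hclose : CkNormLE k (ball 0 1 ×ˢ Ioo (-1) 1) (fun p => (U p).re - f p) (ε / 2 + ε / 2) :=
    (hUF.re_sub_of_ofReal hUk fun _ _ => hFk.contDiffAt).sub_triangle (hball ▸ hFf)
      (fun p hp => Complex.reCLM.contDiff.contDiffAt.comp p (hUk p hp))
      (fun _ _ => hFk.contDiffAt)
      fun p hp => hf.contDiffAt (closedBall_mem_nhds_of_mem (hball ▸ hp))
  exact ⟨fun p => (U p).re, Complex.continuous_re.comp hU.continuous,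
    hU.hasCompactSupport.comp_left Complex.zero_re,
    Complex.reCLM.contDiff.comp_contDiffOn hU.contDiffOn,
    fun x hx t ht => hU.hasFracLap_re hs hx ht, add_halves ε ▸ hclose⟩
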